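/- arXiv:1809.04888 — 4 statements merged into one kernel-verified Lean document; each statement's English description precedes it below -/
import Mathlib

section
/- Let A be a subset of the prime numbers whose natural density in the primes exists and equals θ ∈ (0,1]. Then the limit as N → ∞ of the ratio (∑_{n ≥ 1 : every prime factor of n is ≤ N and lies in A} 1/n) / (∑_{squarefree n with 1 ≤ n ≤ N : every prime factor of n lies in A} 1/φ(n)) equals e^{γθ} · Γ(θ+1). -/
open Filter
open scoped Classical

/-- The sum of `1/n` over positive integers `n` all of whose prime factors lie in the
set described by the predicate `P`. -/
noncomputable def harmSum (P : ℕ → Prop) : ℝ :=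
  ∑' n : {n : ℕ // 0 < n ∧ ∀ p : ℕ, p.Prime → p ∣ n → P p}, (1 : ℝ) / ((n : ℕ) : ℝ)

section

open MeasureTheory Topology Set

/-- Weierstrass approximation turns convergence of all moments of discrete measures on `[0, 1]`
into convergence of the integrals of every continuous function. -/
theorem tendsto_tsum_mul_of_tendsto_moments {α ι : Type*} {l : Filter α} {W y : α → ι → ℝ}
    (hW : ∀ᶠ a in l, Summable (W a) ∧ ∀ i, 0 ≤ W a i ∧ y a i ∈ Icc (0 : ℝ) 1)
    {ν : Measure ℝ} [IsFiniteMeasure ν] (hν : ∀ᵐ x ∂ν, x ∈ Icc (0 : ℝ) 1) {C : ℝ}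
    (hm : ∀ k : ℕ, Tendsto (fun a => ∑' i, W a i * y a i ^ k) l (𝓝 (C * ∫ x, x ^ k ∂ν)))
    {f : ℝ → ℝ} (hf : ContinuousOn f (Icc 0 1)) :
    Tendsto (fun a => ∑' i, W a i * f (y a i)) l (𝓝 (C * ∫ x, f x ∂ν)) := by
  have hintg : ∀ g : ℝ → ℝ, ContinuousOn g (Icc 0 1) → Integrable g ν := by
    intro g hg
    have := hg.integrableOn_compact (μ := ν) isCompact_Icc
    rwa [IntegrableOn, Measure.restrict_eq_self_of_ae_mem hν] at this
  have hsum : ∀ a, (Summable (W a) ∧ ∀ i, 0 ≤ W a i ∧ y a i ∈ Icc (0 : ℝ) 1) →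
      ∀ g : ℝ → ℝ, ContinuousOn g (Icc 0 1) → Summable fun i => W a i * g (y a i) := by
    rintro a ⟨h1, h2⟩ g hg
    obtain ⟨B, hB⟩ := isCompact_Icc.exists_bound_of_continuousOn hg
    refine Summable.of_norm_bounded (h1.mul_right B) fun i => ?_
    rw [norm_mul, Real.norm_of_nonneg (h2 i).1]
    exact mul_le_mul_of_nonneg_left (hB _ (h2 i).2) (h2 i).1
  have hpoly : ∀ p : Polynomial ℝ,
      Tendsto (fun a => ∑' i, W a i * p.eval (y a i)) l (𝓝 (C * ∫ x, p.eval x ∂ν)) := by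
    intro p
    induction p using Polynomial.induction_on' with
    | add p q hp hq =>
      have h2 : C * ∫ x, (p + q).eval x ∂ν = C * ∫ x, p.eval x ∂ν + C * ∫ x, q.eval x ∂ν := by
        simp only [Polynomial.eval_add]
        rw [integral_add (hintg _ p.continuous.continuousOn) (hintg _ q.continuous.continuousOn),
          mul_add]
      rw [h2]
      refine (hp.add hq).congr' ?_
      filter_upwards [hW] with a ha
      rw [← (hsum a ha _ p.continuous.continuousOn).tsum_add
        (hsum a ha _ q.continuous.continuousOn)]
      simp [mul_add]
    | monomial n c =>
      have h := (hm n).const_mul c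
      simp only [Polynomial.eval_monomial, integral_const_mul]
      rw [show C * (c * ∫ x, x ^ n ∂ν) = c * (C * ∫ x, x ^ n ∂ν) by ring]
      refine h.congr fun a => ?_
      rw [← tsum_mul_left]
      exact tsum_congr fun i => by ring
  have h0 : Tendsto (fun a => ∑' i, W a i) l (𝓝 (C * ν.real univ)) := by
    simpa using hm 0
  rw [Metric.tendsto_nhds]
  intro ε hε
  set R : ℝ := |C * ν.real univ| + 1 with hR
  have hRpos : 0 < R := by positivity
  obtain ⟨p, hp⟩ := exists_polynomial_near_of_continuousOn 0 1 f hf (ε / (4 * R)) (by positivity)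
  have hδ : 0 < ε / (4 * R) := by positivity
  have hA : |C * ∫ x, f x ∂ν - C * ∫ x, p.eval x ∂ν| ≤ ε / 4 := by
    rw [← mul_sub, ← integral_sub (hintg f hf) (hintg _ p.continuous.continuousOn), abs_mul]
    have : ‖∫ x, (f x - p.eval x) ∂ν‖ ≤ ε / (4 * R) * ν.real univ := by
      refine norm_integral_le_of_norm_le_const ?_
      filter_upwards [hν] with x hx
      rw [Real.norm_eq_abs, abs_sub_comm]
      exact (hp x hx).le
    rw [Real.norm_eq_abs] at this
    calc _ ≤ |C| * (ε / (4 * R) * ν.real univ) := by gcongr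
      _ = ε / (4 * R) * |C * ν.real univ| := by
        rw [abs_mul, abs_of_nonneg (measureReal_nonneg : 0 ≤ ν.real univ)]; ring
      _ ≤ ε / (4 * R) * R := by gcongr; linarith
      _ = ε / 4 := by field_simp
  have h0' : ∀ᶠ a in l, ∑' i, W a i < R :=
    h0.eventually_lt_const ((le_abs_self _).trans_lt (lt_add_one _))
  filter_upwards [hW, h0', (Metric.tendsto_nhds.1 (hpoly p)) (ε / 4) (by positivity)]
    with a ha h1 h2
  have hB : |∑' i, W a i * f (y a i) - ∑' i, W a i * p.eval (y a i)| ≤ ε / 4 := by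
    rw [← (hsum a ha _ hf).tsum_sub (hsum a ha _ p.continuous.continuousOn)]
    have hs := ha.1.mul_right (ε / (4 * R))
    have := tsum_of_norm_bounded (f := fun i => W a i * f (y a i) - W a i * p.eval (y a i))
      hs.hasSum fun i => by
        rw [← mul_sub, norm_mul, Real.norm_of_nonneg (ha.2 i).1, Real.norm_eq_abs, abs_sub_comm]
        exact mul_le_mul_of_nonneg_left (hp _ (ha.2 i).2).le (ha.2 i).1
    rw [tsum_mul_right, Real.norm_eq_abs] at this
    calc _ ≤ _ := this
      _ ≤ R * (ε / (4 * R)) := by gcongr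
      _ = ε / 4 := by field_simp
  rw [Real.dist_eq] at h2 ⊢
  rw [abs_le] at hA hB
  rw [abs_lt] at h2 ⊢
  constructor <;> linarith [h2.1, h2.2, hA.1, hA.2, hB.1, hB.2]

theorem tendsto_tsum_indicator_of_tendsto_moments {α ι : Type*} {l : Filter α} {W y : α → ι → ℝ}
    (hW : ∀ᶠ a in l, Summable (W a) ∧ ∀ i, 0 ≤ W a i ∧ y a i ∈ Icc (0 : ℝ) 1)
    {ν : Measure ℝ} [IsFiniteMeasure ν] (hν : ∀ᵐ x ∂ν, x ∈ Icc (0 : ℝ) 1) {C : ℝ}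
    (hm : ∀ k : ℕ, Tendsto (fun a => ∑' i, W a i * y a i ^ k) l (𝓝 (C * ∫ x, x ^ k ∂ν)))
    {c : ℝ} (hc : 0 < c) (hνc : ∀ᵐ x ∂ν, x ≠ c) :
    Tendsto (fun a => ∑' i, W a i * (Ici c).indicator (fun x => x⁻¹) (y a i)) l
      (𝓝 (C * ∫ x, (Ici c).indicator (fun x => x⁻¹) x ∂ν)) := by
  let ramp : ℝ → ℝ → ℝ := fun n t => max 0 (min 1 (n * t))
  have hramp : ∀ n, Continuous (ramp n) := fun n => by fun_prop
  have ramp_nonneg : ∀ n t, 0 ≤ ramp n t := fun n t => le_max_left _ _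
  have ramp_le : ∀ n t, ramp n t ≤ 1 := fun n t => max_le zero_le_one (min_le_left _ _)
  let g : ℝ → ℝ := fun x => (max x c)⁻¹
  have hgc : Continuous g :=
    (continuous_id.max continuous_const).inv₀ fun x => (hc.trans_le (le_max_right _ _)).ne'
  have hg0 : ∀ x, 0 ≤ g x := fun x => inv_nonneg.2 (hc.le.trans (le_max_right _ _))
  have hgle : ∀ x, g x ≤ c⁻¹ := fun x => inv_anti₀ hc (le_max_right _ _)
  have hgind : ∀ x, (Ici c).indicator (fun x => x⁻¹) x = g x * (Ici c).indicator 1 x := by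
    intro x
    by_cases hx : c ≤ x
    · simp [indicator_of_mem (mem_Ici.2 hx), g, max_eq_left hx]
    · simp [hx]
  let lo : ℕ → ℝ → ℝ := fun n x => g x * ramp n (x - c)
  let up : ℕ → ℝ → ℝ := fun n x => g x * (1 - ramp n (c - x))
  have hlo : ∀ n, Continuous (lo n) := fun n =>
    hgc.mul ((hramp n).comp (continuous_id.sub continuous_const))
  have hup : ∀ n, Continuous (up n) := fun n =>
    hgc.mul (continuous_const.sub ((hramp n).comp (continuous_const.sub continuous_id)))
  have hlo_le : ∀ (n : ℕ) x, lo n x ≤ (Ici c).indicator (fun x => x⁻¹) x := by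
    intro n x
    rw [hgind]
    refine mul_le_mul_of_nonneg_left ?_ (hg0 x)
    by_cases hx : c ≤ x
    · simpa [hx] using ramp_le n _
    · have : (n : ℝ) * (x - c) ≤ 0 :=
        mul_nonpos_of_nonneg_of_nonpos (by positivity) (by linarith)
      simp [hx, ramp, this]
  have hle_up : ∀ (n : ℕ) x, (Ici c).indicator (fun x => x⁻¹) x ≤ up n x := by
    intro n x
    rw [hgind]
    refine mul_le_mul_of_nonneg_left ?_ (hg0 x)
    by_cases hx : c ≤ x
    · have : (n : ℝ) * (c - x) ≤ 0 :=
        mul_nonpos_of_nonneg_of_nonpos (by positivity) (by linarith)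
      simp [hx, ramp, this]
    · simpa [hx] using ramp_le n _
  have ramp_lim : ∀ t : ℝ, 0 < t → Tendsto (fun n : ℕ => ramp n t) atTop (𝓝 1) := by
    intro t ht
    refine tendsto_const_nhds.congr' ?_
    have := (tendsto_natCast_atTop_atTop (R := ℝ)).atTop_mul_const ht
    filter_upwards [this.eventually_ge_atTop 1] with n hn
    simp [ramp, hn]
  have ramp_zero : ∀ (n : ℕ) (t : ℝ), t ≤ 0 → ramp n t = 0 := by
    intro n t ht
    have : (n : ℝ) * t ≤ 0 := mul_nonpos_of_nonneg_of_nonpos (by positivity) ht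
    simp [ramp, this]
  have hlim_lo : Tendsto (fun n => C * ∫ x, lo n x ∂ν) atTop
      (𝓝 (C * ∫ x, (Ici c).indicator (fun x => x⁻¹) x ∂ν)) := by
    refine Tendsto.const_mul _ (tendsto_integral_of_dominated_convergence (fun _ => c⁻¹)
      (fun n => (hlo n).aestronglyMeasurable) (integrable_const _) (fun n => ae_of_all _ ?_) ?_)
    · intro x
      rw [Real.norm_of_nonneg (mul_nonneg (hg0 _) (ramp_nonneg _ _))]
      simpa using mul_le_mul (hgle x) (ramp_le n _) (ramp_nonneg _ _) (inv_nonneg.2 hc.le)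
    · filter_upwards [hνc] with x hx
      rw [hgind]
      refine Tendsto.const_mul _ ?_
      rcases lt_or_gt_of_ne hx with h | h
      · simp [ramp_zero _ (x - c) (by linarith), h]
      · simpa [h.le] using ramp_lim (x - c) (by linarith)
  have hlim_up : Tendsto (fun n => C * ∫ x, up n x ∂ν) atTop
      (𝓝 (C * ∫ x, (Ici c).indicator (fun x => x⁻¹) x ∂ν)) := by
    refine Tendsto.const_mul _ (tendsto_integral_of_dominated_convergence (fun _ => c⁻¹)
      (fun n => (hup n).aestronglyMeasurable) (integrable_const _) (fun n => ae_of_all _ ?_) ?_)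
    · intro x
      have h1 : 0 ≤ 1 - ramp n (c - x) := by linarith [ramp_le n (c - x)]
      rw [Real.norm_of_nonneg (mul_nonneg (hg0 _) h1)]
      simpa using mul_le_mul (hgle x) (by linarith [ramp_nonneg n (c - x)] :
        1 - ramp n (c - x) ≤ 1) h1 (inv_nonneg.2 hc.le)
    · filter_upwards [hνc] with x hx
      rw [hgind]
      refine Tendsto.const_mul _ ?_
      rcases lt_or_gt_of_ne hx with h | h
      · simpa [h] using (ramp_lim (c - x) (by linarith)).const_sub 1
      · simp [ramp_zero _ (c - x) (by linarith), h.le]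
  have hsum : ∀ a, (Summable (W a) ∧ ∀ i, 0 ≤ W a i ∧ y a i ∈ Icc (0 : ℝ) 1) →
      ∀ f : ℝ → ℝ, (∀ x, |f x| ≤ c⁻¹) → Summable fun i => W a i * f (y a i) := by
    rintro a ⟨h1, h2⟩ f hf
    refine Summable.of_norm_bounded (h1.mul_right c⁻¹) fun i => ?_
    rw [norm_mul, Real.norm_of_nonneg (h2 i).1]
    exact mul_le_mul_of_nonneg_left (hf _) (h2 i).1
  have bind : ∀ x, |(Ici c).indicator (fun x => x⁻¹) x| ≤ c⁻¹ := by
    intro x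
    rw [hgind]
    by_cases hx : c ≤ x
    · simpa [hx, abs_of_nonneg (hg0 x)] using hgle x
    · simp [hx, hc.le]
  have blo : ∀ (n : ℕ) x, |lo n x| ≤ c⁻¹ := by
    intro n x
    rw [abs_of_nonneg (mul_nonneg (hg0 _) (ramp_nonneg _ _))]
    exact (hlo_le n x).trans ((le_abs_self _).trans (bind x))
  have bup : ∀ (n : ℕ) x, |up n x| ≤ c⁻¹ := by
    intro n x
    have h1 : 0 ≤ 1 - ramp n (c - x) := by linarith [ramp_le n (c - x)]
    rw [abs_of_nonneg (mul_nonneg (hg0 _) h1)]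
    simpa using mul_le_mul (hgle x) (by linarith [ramp_nonneg n (c - x)] :
        1 - ramp n (c - x) ≤ 1) h1 (inv_nonneg.2 hc.le)
  refine tendsto_order.2 ⟨fun b hb => ?_, fun b hb => ?_⟩
  · obtain ⟨n, hn⟩ := (hlim_lo.eventually_const_lt hb).exists
    filter_upwards [hW, (tendsto_tsum_mul_of_tendsto_moments hW hν hm
      (hlo n).continuousOn).eventually_const_lt hn] with a ha h
    exact h.trans_le ((hsum a ha _ (blo n)).tsum_le_tsum
      (fun i => mul_le_mul_of_nonneg_left (hlo_le n _) (ha.2 i).1) (hsum a ha _ bind))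
  · obtain ⟨n, hn⟩ := (hlim_up.eventually_lt_const hb).exists
    filter_upwards [hW, (tendsto_tsum_mul_of_tendsto_moments hW hν hm
      (hup n).continuousOn).eventually_lt_const hn] with a ha h
    exact ((hsum a ha _ bind).tsum_le_tsum
      (fun i => mul_le_mul_of_nonneg_left (hle_up n _) (ha.2 i).1) (hsum a ha _ (bup n))).trans_lt h

open ProbabilityTheory in
theorem integral_gammaMeasure_one {θ : ℝ} (hθ : 0 < θ) (f : ℝ → ℝ) :
    ∫ u, f u ∂(gammaMeasure θ 1) =
      ∫ u in Ioi 0, (Real.Gamma θ)⁻¹ * (u ^ (θ - 1) * Real.exp (-u) * f u) := by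
  rw [gammaMeasure, integral_withDensity_eq_integral_toReal_smul
    (by unfold gammaPDF; fun_prop) (ae_of_all _ fun x => by simp [gammaPDF]),
    ← integral_Ici_eq_integral_Ioi, ← integral_indicator measurableSet_Ici]
  congr 1
  ext u
  rw [gammaPDF, ENNReal.toReal_ofReal (gammaPDFReal_nonneg hθ one_pos u)]
  simp only [gammaPDFReal, smul_eq_mul, indicator, mem_Ici]
  split_ifs
  · simp only [Real.one_rpow, one_mul]; ring
  · simp

open ProbabilityTheory in
/-- The law of `exp (-u)` for `u` distributed according to the Gamma law of shape `θ`. -/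
noncomputable def expNegGamma (θ : ℝ) : Measure ℝ :=
  (gammaMeasure θ 1).map fun u => Real.exp (-u)

open ProbabilityTheory in
theorem isProbabilityMeasure_expNegGamma {θ : ℝ} (hθ : 0 < θ) :
    IsProbabilityMeasure (expNegGamma θ) := by
  have := isProbabilityMeasure_gammaMeasure hθ one_pos
  exact Measure.isProbabilityMeasure_map (by fun_prop)

open ProbabilityTheory in
theorem ae_expNegGamma_mem_Icc (θ : ℝ) : ∀ᵐ x ∂expNegGamma θ, x ∈ Icc (0 : ℝ) 1 := by
  refine (ae_map_iff (p := (· ∈ Icc (0 : ℝ) 1)) (by fun_prop) measurableSet_Icc).2 ?_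
  rw [gammaMeasure, ae_withDensity_iff (by unfold gammaPDF; fun_prop)]
  refine ae_of_all _ fun u hu => ⟨(Real.exp_pos _).le, ?_⟩
  by_contra h
  exact hu (gammaPDF_of_neg (by simpa using h))

open ProbabilityTheory in
theorem ae_expNegGamma_ne (θ c : ℝ) : ∀ᵐ x ∂expNegGamma θ, x ≠ c := by
  refine (ae_map_iff (p := (· ≠ c)) (by fun_prop) (measurableSet_singleton c).compl).2 ?_
  rw [gammaMeasure]
  refine (withDensity_absolutelyContinuous _ _).ae_le ?_
  filter_upwards [Measure.ae_ne volume (-Real.log c)] with u hu h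
  exact hu (by rw [← h, Real.log_exp, neg_neg])

theorem integral_pow_expNegGamma {θ : ℝ} (hθ : 0 < θ) (k : ℕ) :
    ∫ x, x ^ k ∂expNegGamma θ = ((k : ℝ) + 1) ^ (-θ) := by
  rw [expNegGamma, integral_map (by fun_prop) (by fun_prop), integral_gammaMeasure_one hθ,
    integral_const_mul]
  have h := Real.integral_rpow_mul_exp_neg_mul_Ioi hθ (by positivity : (0 : ℝ) < k + 1)
  have h2 : ∀ u : ℝ, u ^ (θ - 1) * Real.exp (-u) * Real.exp (-u) ^ k =
      u ^ (θ - 1) * Real.exp (-((k + 1) * u)) := by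
    intro u
    rw [← Real.exp_nat_mul, mul_assoc, ← Real.exp_add]
    ring_nf
  simp only [h2]
  rw [h, Real.rpow_neg (by positivity), one_div, Real.inv_rpow (by positivity)]
  have := (Real.Gamma_pos_of_pos hθ).ne'
  field_simp

theorem integral_indicator_inv_expNegGamma {θ : ℝ} (hθ : 0 < θ) :
    ∫ x, (Ici (Real.exp (-1))).indicator (fun x => x⁻¹) x ∂expNegGamma θ =
      (Real.Gamma (θ + 1))⁻¹ := by
  rw [expNegGamma, integral_map (by fun_prop)
    ((measurable_inv.indicator measurableSet_Ici).aestronglyMeasurable),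
    integral_gammaMeasure_one hθ, integral_const_mul]
  have h2 : ∀ u : ℝ, u ^ (θ - 1) * Real.exp (-u) *
      (Ici (Real.exp (-1))).indicator (fun x => x⁻¹) (Real.exp (-u)) =
      (Iic 1).indicator (fun u : ℝ => u ^ (θ - 1)) u := by
    intro u
    by_cases h : u ≤ 1
    · rw [indicator_of_mem (by simpa using h), indicator_of_mem (by simpa using h), mul_assoc,
        mul_inv_cancel₀ (Real.exp_pos _).ne', mul_one]
    · rw [indicator_of_notMem (by simpa using h), indicator_of_notMem (by simpa using h), mul_zero]
  simp only [h2]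
  rw [setIntegral_indicator measurableSet_Iic, Ioi_inter_Iic,
    ← intervalIntegral.integral_of_le zero_le_one, integral_rpow (Or.inl (by linarith)),
    Real.Gamma_add_one hθ.ne']
  rw [sub_add_cancel, Real.one_rpow, Real.zero_rpow hθ.ne']
  field_simp
  simp

/-- Karamata's Tauberian argument: if the exponential moments of nonnegative weights at
nonnegative points behave like `C (k + 1) ^ (-θ)`, then so do all continuous functions of
`exp (-u)`. -/
theorem tendsto_tsum_of_tendsto_exp_moments {α ι : Type*} {l : Filter α} {W u : α → ι → ℝ}
    (hW : ∀ᶠ a in l, Summable (W a) ∧ ∀ i, 0 ≤ W a i ∧ 0 ≤ u a i) {C θ : ℝ} (hθ : 0 < θ)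
    (hm : ∀ k : ℕ, Tendsto (fun a => ∑' i, W a i * Real.exp (-(k * u a i))) l
      (𝓝 (C * ((k : ℝ) + 1) ^ (-θ)))) {f : ℝ → ℝ} (hf : ContinuousOn f (Icc 0 1)) :
    Tendsto (fun a => ∑' i, W a i * f (Real.exp (-u a i))) l
      (𝓝 (C * ∫ x, f x ∂expNegGamma θ)) := by
  have := isProbabilityMeasure_expNegGamma hθ
  refine tendsto_tsum_mul_of_tendsto_moments ?_ (ae_expNegGamma_mem_Icc θ) (fun k => ?_) hf
  · filter_upwards [hW] with a ha
    exact ⟨ha.1, fun i => ⟨(ha.2 i).1, (Real.exp_pos _).le, by simpa using (ha.2 i).2⟩⟩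
  · rw [integral_pow_expNegGamma hθ]
    simpa only [← Real.exp_nat_mul, mul_neg] using hm k

theorem tendsto_tsum_exp_indicator_of_tendsto_exp_moments {α ι : Type*} {l : Filter α}
    {W u : α → ι → ℝ}
    (hW : ∀ᶠ a in l, Summable (W a) ∧ ∀ i, 0 ≤ W a i ∧ 0 ≤ u a i) {C θ : ℝ} (hθ : 0 < θ)
    (hm : ∀ k : ℕ, Tendsto (fun a => ∑' i, W a i * Real.exp (-(k * u a i))) l
      (𝓝 (C * ((k : ℝ) + 1) ^ (-θ)))) :
    Tendsto (fun a => ∑' i, W a i * (if u a i ≤ 1 then Real.exp (u a i) else 0)) l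
      (𝓝 (C / Real.Gamma (θ + 1))) := by
  have := isProbabilityMeasure_expNegGamma hθ
  have key := tendsto_tsum_indicator_of_tendsto_moments (l := l) (W := W)
    (y := fun a i => Real.exp (-u a i)) (C := C) ?_ (ae_expNegGamma_mem_Icc θ) (fun k => ?_)
    (Real.exp_pos (-1)) (ae_expNegGamma_ne θ _)
  · rw [integral_indicator_inv_expNegGamma hθ, ← div_eq_mul_inv] at key
    refine key.congr fun a => tsum_congr fun i => ?_
    by_cases h : u a i ≤ 1
    · rw [if_pos h, indicator_of_mem (by simpa using h), ← Real.exp_neg, neg_neg]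
    · rw [if_neg h, indicator_of_notMem (by simpa using h)]
  · filter_upwards [hW] with a ha
    exact ⟨ha.1, fun i => ⟨(ha.2 i).1, (Real.exp_pos _).le, by simpa using (ha.2 i).2⟩⟩
  · rw [integral_pow_expNegGamma hθ]
    simpa only [← Real.exp_nat_mul, mul_neg] using hm k

theorem exists_continuousOn_exp_sub_ramp (k : ℕ) (hk : 1 ≤ k) :
    ∃ f : ℝ → ℝ, ContinuousOn f (Icc 0 1) ∧ ∀ u : ℝ, 0 < u →
      Real.exp (-u) * f (Real.exp (-u)) = (Real.exp (-(k * u)) - max (1 - u) 0) / u := by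
  refine ⟨fun y => if y = 1 then 1 - (k : ℝ) else
    (max (1 + Real.log y) 0 - y ^ k) / (y * Real.log y), ?_, ?_⟩
  · intro y hy
    rcases eq_or_ne y 0 with rfl | hy0
    · have hc : ContinuousAt (fun y : ℝ => -(y ^ (k - 1) * (Real.log y)⁻¹)) 0 := by
        refine ((continuous_pow _).continuousAt.mul ?_).neg
        rw [continuousAt_iff_punctured_nhds]
        simp only [Real.log_zero, inv_zero]
        exact Real.tendsto_log_nhdsNE_zero.inv_tendsto_atBot
      refine hc.continuousWithinAt.congr_of_eventuallyEq ?_ (by simp)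
      have hlog : ∀ᶠ y : ℝ in 𝓝[≠] 0, Real.log y < -1 :=
        Real.tendsto_log_nhdsNE_zero.eventually_lt_atBot _
      rw [eventually_nhdsWithin_iff] at hlog
      have h1 : ∀ᶠ y : ℝ in 𝓝 0, y < 1 := eventually_lt_nhds one_pos
      filter_upwards [nhdsWithin_le_nhds hlog, nhdsWithin_le_nhds h1] with y h2 h3
      rcases eq_or_ne y 0 with rfl | h
      · simp
      · have h4 := h2 h
        obtain ⟨m, rfl⟩ : ∃ m, k = m + 1 := ⟨k - 1, by omega⟩
        rw [if_neg h3.ne, max_eq_right (by linarith)]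
        have : Real.log y ≠ 0 := by linarith
        rw [Nat.add_sub_cancel]
        field_simp
        ring
    rcases eq_or_ne y 1 with rfl | hy1
    · refine ContinuousAt.continuousWithinAt ?_
      rw [continuousAt_iff_punctured_nhds]
      have h1 := (hasDerivAt_pow k (1 : ℝ)).tendsto_slope
      have h2 := (Real.hasDerivAt_log (one_ne_zero)).tendsto_slope
      have h3 : Tendsto (fun y : ℝ => y) (𝓝[≠] 1) (𝓝 1) := tendsto_nhdsWithin_of_tendsto_nhds tendsto_id
      have h4 := ((h1.div h2 (by norm_num)).const_sub 1).div h3 (by norm_num)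
      simp only [if_true]
      have h5 : ∀ᶠ y : ℝ in 𝓝 1, -1 < Real.log y :=
        (Real.continuousAt_log one_ne_zero).eventually (eventually_gt_nhds (by simp))
      have h6 : ∀ᶠ y : ℝ in 𝓝 1, 0 < y := eventually_gt_nhds one_pos
      convert h4.congr' ?_ using 2
      · simp
      filter_upwards [self_mem_nhdsWithin, nhdsWithin_le_nhds h5, nhdsWithin_le_nhds h6]
        with y hy h7 h8
      have hy : y ≠ 1 := hy
      rw [if_neg hy, max_eq_left (by linarith)]
      have h9 : Real.log y ≠ 0 := Real.log_ne_zero_of_pos_of_ne_one h8 hy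
      have h10 : y - 1 ≠ 0 := sub_ne_zero.2 hy
      simp only [Pi.div_apply, slope_def_field, Real.log_one, sub_zero, one_pow]
      field_simp
      ring
    · refine ContinuousAt.continuousWithinAt ?_
      have hypos : 0 < y := lt_of_le_of_ne hy.1 hy0.symm
      have h9 : Real.log y ≠ 0 := Real.log_ne_zero_of_pos_of_ne_one hypos hy1
      have hc : ContinuousAt
          (fun y : ℝ => (max (1 + Real.log y) 0 - y ^ k) / (y * Real.log y)) y := by
        have := Real.continuousAt_log hy0
        refine ContinuousAt.div ?_ ?_ (mul_ne_zero hy0 h9) <;> fun_prop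
      refine hc.congr ?_
      filter_upwards [eventually_ne_nhds hy1] with z hz
      rw [if_neg hz]
  · intro u hu
    have h1 : Real.exp (-u) ≠ 1 := by simpa using hu.ne'
    have h2 := (Real.exp_pos (-u)).ne'
    simp only [if_neg h1, Real.log_exp]
    rw [← Real.exp_nat_mul, ← sub_eq_add_neg, show (k : ℝ) * -u = -(k * u) by ring]
    field_simp
    ring

/-- For weights `a i` at heights `v i` with Abel means tending to `θ`, the difference between the
smooth and the sharp cutoff of `∑ a i / v i` tends to `θ c`, where `c` is universal. -/
theorem exists_tendsto_tsum_exp_sub_cutoff (k : ℕ) (hk : 1 ≤ k) :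
    ∃ c : ℝ, ∀ (a v : ℕ → ℝ) (θ : ℝ), (∀ i, 0 ≤ a i) → (∀ i, 0 ≤ v i) →
      (∀ i, v i = 0 → a i = 0) →
      (∀ s : ℝ, 0 < s → Summable fun i => a i * Real.exp (-(s * v i))) →
      Tendsto (fun s : ℝ => s * ∑' i, a i * Real.exp (-(s * v i))) (𝓝[>] 0) (𝓝 θ) →
      Tendsto (fun s : ℝ => ∑' i, a i / v i *
        (Real.exp (-(k * (s * v i))) - if s * v i ≤ 1 then 1 else 0)) (𝓝[>] 0) (𝓝 (θ * c)) := by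
  obtain ⟨f, hf, hfe⟩ := exists_continuousOn_exp_sub_ramp k hk
  refine ⟨∫ x, f x ∂expNegGamma 1 - 1, fun a v θ ha hv hva hsum hlim => ?_⟩
  have hW : ∀ᶠ s : ℝ in 𝓝[>] 0, Summable (fun i => s * (a i * Real.exp (-(s * v i)))) ∧
      ∀ i, 0 ≤ s * (a i * Real.exp (-(s * v i))) ∧ 0 ≤ s * v i := by
    filter_upwards [self_mem_nhdsWithin] with s hs
    have hs : 0 < s := hs
    refine ⟨(hsum s hs).mul_left s, fun i => ?_⟩
    have := ha i
    have := hv i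
    constructor <;> positivity
  have hm : ∀ j : ℕ, Tendsto (fun s : ℝ => ∑' i, s * (a i * Real.exp (-(s * v i))) *
      Real.exp (-(j * (s * v i)))) (𝓝[>] 0) (𝓝 (θ * ((j : ℝ) + 1) ^ (-1 : ℝ))) := by
    intro j
    have hj : (0 : ℝ) < j + 1 := by positivity
    have h1 : Tendsto (fun s : ℝ => ((j : ℝ) + 1) * s) (𝓝[>] 0) (𝓝[>] 0) := by
      refine tendsto_nhdsWithin_iff.2 ⟨?_, ?_⟩
      · have : Tendsto (fun s : ℝ => ((j : ℝ) + 1) * s) (𝓝 0) (𝓝 (((j : ℝ) + 1) * 0)) :=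
          (continuous_const.mul continuous_id).tendsto 0
        rw [mul_zero] at this
        exact this.mono_left nhdsWithin_le_nhds
      · filter_upwards [self_mem_nhdsWithin] with s hs
        exact mul_pos hj hs
    have h2 := (hlim.comp h1).mul_const (((j : ℝ) + 1) ^ (-1 : ℝ))
    refine h2.congr fun s => ?_
    simp only [Function.comp]
    rw [Real.rpow_neg_one, ← tsum_mul_left, ← tsum_mul_right]
    refine tsum_congr fun i => ?_
    rw [show -((j + 1) * s * v i) = -(s * v i) + -(j * (s * v i)) by ring, Real.exp_add]
    field_simp
  have h1 := tendsto_tsum_of_tendsto_exp_moments hW one_pos hm hf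
  have h2 := tendsto_tsum_exp_indicator_of_tendsto_exp_moments hW one_pos hm
  have h3 := h1.sub h2
  have hG : Real.Gamma (1 + 1) = 1 := by rw [one_add_one_eq_two, Real.Gamma_two]
  rw [hG, div_one, ← mul_sub_one] at h3
  obtain ⟨B, hB⟩ := isCompact_Icc.exists_bound_of_continuousOn hf
  refine h3.congr' ?_
  filter_upwards [hW, self_mem_nhdsWithin] with s hs hs0
  have hs0 : 0 < s := hs0
  rw [← Summable.tsum_sub]
  · refine tsum_congr fun i => ?_
    rcases (hv i).eq_or_lt with h | h
    · simp [hva i h.symm]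
    · have h4 := hfe (s * v i) (by positivity)
      have h5 : s * (a i * Real.exp (-(s * v i))) * f (Real.exp (-(s * v i))) =
          s * a i * ((Real.exp (-(k * (s * v i))) - max (1 - s * v i) 0) / (s * v i)) := by
        rw [← h4]; ring
      have h6 : Real.exp (-(s * v i)) * Real.exp (s * v i) = 1 := by
        rw [← Real.exp_add]; simp
      rw [h5]
      split_ifs with h7
      · have h8 : s * (a i * Real.exp (-(s * v i))) * Real.exp (s * v i) = s * a i := by
          linear_combination s * a i * h6
        rw [max_eq_left (by linarith), h8]
        field_simp
        ring
      · rw [max_eq_right (by linarith)]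
        field_simp
        ring
  · refine Summable.of_norm_bounded (hs.1.mul_right B) fun i => ?_
    rw [norm_mul, Real.norm_of_nonneg (hs.2 i).1]
    exact mul_le_mul_of_nonneg_left
      (hB _ ⟨(Real.exp_pos _).le, by simpa using (hs.2 i).2⟩) (hs.2 i).1
  · refine Summable.of_norm_bounded (hs.1.mul_right (Real.exp 1)) fun i => ?_
    rw [norm_mul, Real.norm_of_nonneg (hs.2 i).1]
    refine mul_le_mul_of_nonneg_left ?_ (hs.2 i).1
    split_ifs with h
    · rw [Real.norm_of_nonneg (Real.exp_pos _).le]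
      exact Real.exp_le_exp.2 h
    · simpa using (Real.exp_pos 1).le

/-- The universal constant of `exists_tendsto_tsum_exp_sub_cutoff` is `-(γ + log k)`, as one sees
from the weights `1` at the positive integers. -/
theorem tendsto_tsum_exp_sub_cutoff {k : ℕ} (hk : 1 ≤ k) {a v : ℕ → ℝ} {θ : ℝ}
    (ha : ∀ i, 0 ≤ a i) (hv : ∀ i, 0 ≤ v i) (hva : ∀ i, v i = 0 → a i = 0)
    (hsum : ∀ s : ℝ, 0 < s → Summable fun i => a i * Real.exp (-(s * v i)))
    (hlim : Tendsto (fun s : ℝ => s * ∑' i, a i * Real.exp (-(s * v i))) (𝓝[>] 0) (𝓝 θ)) :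
    Tendsto (fun s : ℝ => ∑' i, a i / v i *
      (Real.exp (-(k * (s * v i))) - if s * v i ≤ 1 then 1 else 0)) (𝓝[>] 0)
      (𝓝 (-(θ * (Real.eulerMascheroniConstant + Real.log k)))) := by
  obtain ⟨c, hc⟩ := exists_tendsto_tsum_exp_sub_cutoff k hk
  suffices hcval : c = -(Real.eulerMascheroniConstant + Real.log k) by
    have := hc a v θ ha hv hva hsum hlim
    rwa [hcval, mul_neg] at this
  have hk0 : (0 : ℝ) < k := by exact_mod_cast hk
  have hgeom : ∀ s : ℝ, 0 < s →
      HasSum (fun i : ℕ => (1 : ℝ) * Real.exp (-(s * ((i : ℝ) + 1))))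
        (Real.exp (-s) * (1 - Real.exp (-s))⁻¹) := by
    intro s hs
    have := (hasSum_geometric_of_lt_one (Real.exp_pos (-s)).le (by simpa using hs)).mul_left
      (Real.exp (-s))
    refine this.congr_fun ?_
    intro i
    rw [← Real.exp_nat_mul, ← Real.exp_add, one_mul]
    ring_nf
  have hexp : Tendsto (fun x : ℝ => (1 - Real.exp (-x)) / x) (𝓝[≠] 0) (𝓝 1) := by
    have h1 : HasDerivAt (fun x : ℝ => -Real.exp (-x)) 1 0 := by
      have h0 := ((hasDerivAt_id' (0 : ℝ)).fun_neg.exp).fun_neg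
      rwa [neg_zero, Real.exp_zero, one_mul, neg_neg] at h0
    refine h1.tendsto_slope.congr fun x => ?_
    simp only [slope_def_field, neg_zero, Real.exp_zero, sub_zero]
    ring
  have hlim1 : Tendsto (fun s : ℝ => s * ∑' i : ℕ, (1 : ℝ) * Real.exp (-(s * ((i : ℝ) + 1))))
      (𝓝[>] 0) (𝓝 1) := by
    have h1 : Tendsto (fun s : ℝ => Real.exp (-s) * ((1 - Real.exp (-s)) / s)⁻¹) (𝓝[>] 0)
        (𝓝 (1 * 1⁻¹)) := by
      refine Tendsto.mul ?_ ((hexp.mono_left (nhdsGT_le_nhdsNE 0)).inv₀ one_ne_zero)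
      have : Tendsto (fun s : ℝ => Real.exp (-s)) (𝓝 0) (𝓝 (Real.exp (-0))) :=
        (Real.continuous_exp.comp continuous_neg).tendsto 0
      simp only [neg_zero, Real.exp_zero] at this
      exact this.mono_left nhdsWithin_le_nhds
    rw [inv_one, mul_one] at h1
    refine h1.congr' ?_
    filter_upwards [self_mem_nhdsWithin] with s hs
    rw [(hgeom s hs).tsum_eq, inv_div]
    ring
  have h1 := hc (fun _ => 1) (fun i => (i : ℝ) + 1) 1 (fun _ => zero_le_one)
    (fun i => by positivity) (fun i hi => absurd hi (by positivity))
    (fun s hs => (hgeom s hs).summable) hlim1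
  have hN : Tendsto (fun N : ℕ => ((N : ℝ))⁻¹) atTop (𝓝[>] 0) :=
    tendsto_inv_atTop_nhdsGT_zero.comp tendsto_natCast_atTop_atTop
  have h2 := h1.comp hN
  rw [one_mul] at h2
  refine tendsto_nhds_unique h2 ?_
  have hlog : Tendsto (fun N : ℕ => Real.log ((1 - Real.exp (-(k * (N : ℝ)⁻¹))) /
      (k * (N : ℝ)⁻¹))) atTop (𝓝 0) := by
    have h3 : Tendsto (fun N : ℕ => (k : ℝ) * (N : ℝ)⁻¹) atTop (𝓝[≠] 0) := by
      refine tendsto_nhdsWithin_iff.2 ⟨?_, ?_⟩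
      · simpa using (hN.mono_right nhdsWithin_le_nhds).const_mul (k : ℝ)
      · filter_upwards [eventually_gt_atTop 0] with N hN
        have : (0 : ℝ) < N := by exact_mod_cast hN
        exact (by positivity : (k : ℝ) * (N : ℝ)⁻¹ ≠ 0)
    have := (Real.continuousAt_log one_ne_zero).tendsto.comp (hexp.comp h3)
    simpa [Function.comp_def] using this
  have hγ := Real.tendsto_harmonic_sub_log
  have h4 := ((hγ.add_const (Real.log k)).add hlog).neg
  rw [add_zero] at h4
  refine h4.congr' ?_
  filter_upwards [eventually_gt_atTop 0] with N hN
  have hN0 : (0 : ℝ) < N := by exact_mod_cast hN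
  have hx : 0 < (k : ℝ) * (N : ℝ)⁻¹ := by positivity
  have hlt : Real.exp (-(k * (N : ℝ)⁻¹)) < 1 := by simpa using hx
  have hS1 := Real.hasSum_pow_div_log_of_abs_lt_one (x := Real.exp (-(k * (N : ℝ)⁻¹)))
    (by rwa [abs_of_pos (Real.exp_pos _)])
  have hS2 : HasSum (fun i : ℕ => if i < N then 1 / ((i : ℝ) + 1) else 0) (harmonic N : ℝ) := by
    have := hasSum_sum_of_ne_finset_zero (f := fun i : ℕ => if i < N then 1 / ((i : ℝ) + 1) else 0)
      (s := Finset.range N) (L := .unconditional ℕ) (fun i hi => if_neg (by simpa using hi))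
    convert this using 1
    rw [harmonic]
    push_cast
    refine Finset.sum_congr rfl fun i hi => ?_
    rw [if_pos (by simpa using hi), one_div]
  have hterm : ∀ i : ℕ, 1 / ((i : ℝ) + 1) * (Real.exp (-(k * ((N : ℝ)⁻¹ * ((i : ℝ) + 1)))) -
      if (N : ℝ)⁻¹ * ((i : ℝ) + 1) ≤ 1 then 1 else 0) =
      Real.exp (-(k * (N : ℝ)⁻¹)) ^ (i + 1) / (i + 1) - if i < N then 1 / ((i : ℝ) + 1) else 0 := by
    intro i
    have h5 : (N : ℝ)⁻¹ * ((i : ℝ) + 1) ≤ 1 ↔ i < N := by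
      rw [inv_mul_le_iff₀ hN0, mul_one]
      exact_mod_cast Nat.succ_le_iff
    rw [← Real.exp_nat_mul]
    simp only [h5]
    rw [show -(k * ((N : ℝ)⁻¹ * ((i : ℝ) + 1))) = ((i + 1 : ℕ) : ℝ) * -(k * (N : ℝ)⁻¹) by
      push_cast; ring]
    split_ifs <;> ring
  simp only [Function.comp, hterm]
  rw [(hS1.sub hS2).tsum_eq]
  rw [Real.log_div (by linarith) hx.ne', Real.log_mul hk0.ne' (by positivity), Real.log_inv]
  ring

/-- The Dirichlet-type kernel `log n / n ^ (1 + s)`. -/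
noncomputable def logKernel (s : ℝ) (n : ℕ) : ℝ :=
  Real.log n / n * Real.exp (-(s * Real.log n))

theorem logKernel_nonneg (s : ℝ) (n : ℕ) : 0 ≤ logKernel s n :=
  mul_nonneg (div_nonneg (Real.log_natCast_nonneg n) n.cast_nonneg) (Real.exp_pos _).le

theorem logKernel_le {s : ℝ} (hs : 0 < s) (n : ℕ) : logKernel s n ≤ Real.log n / n := by
  have h := Real.log_natCast_nonneg n
  refine mul_le_of_le_one_right (div_nonneg h n.cast_nonneg) ?_
  rw [Real.exp_le_one_iff]
  have : 0 ≤ s * Real.log n := by positivity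
  linarith

theorem logKernel_succ_le {s : ℝ} (hs : 0 < s) {n : ℕ} (hn : 3 ≤ n) :
    logKernel s (n + 1) ≤ logKernel s n := by
  have h3 : (3 : ℝ) ≤ n := by exact_mod_cast hn
  have he : Real.exp 1 ≤ n := (Real.exp_one_lt_three.le).trans h3
  unfold logKernel
  refine mul_le_mul ?_ ?_ (Real.exp_pos _).le
    (div_nonneg (Real.log_natCast_nonneg n) n.cast_nonneg)
  · refine Real.log_div_self_antitoneOn he ?_ (by simp)
    simpa using he.trans (by linarith : (n : ℝ) ≤ n + 1)
  · have : Real.log n ≤ Real.log (n + 1 : ℕ) := Real.log_le_log (by linarith) (by simp)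
    gcongr

theorem logKernel_eq {s : ℝ} {n : ℕ} (hn : n ≠ 0) :
    logKernel s n = Real.log n / (n : ℝ) ^ (1 + s) := by
  have h : (0 : ℝ) < n := by positivity
  rw [logKernel, Real.rpow_add h, Real.rpow_one, Real.exp_neg, mul_comm s, Real.exp_mul,
    Real.exp_log h]
  field_simp

open ArithmeticFunction ArithmeticFunction.vonMangoldt in
theorem summable_vonMangoldt_div_rpow {x : ℝ} (hx : 1 < x) :
    Summable fun n : ℕ => vonMangoldt n / (n : ℝ) ^ x := by
  have h := (LSeriesSummable_vonMangoldt (s := x) (by simpa using hx)).norm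
  refine h.congr fun n => ?_
  rw [LSeries.norm_term_eq]
  split_ifs with hn
  · simp [hn]
  · simp [abs_of_nonneg vonMangoldt_nonneg]

theorem summable_prime_logKernel {s : ℝ} (hs : 0 < s) :
    Summable fun n : ℕ => if n.Prime then logKernel s n else 0 := by
  refine (summable_vonMangoldt_div_rpow (by linarith : 1 < 1 + s)).of_nonneg_of_le
    (fun n => ?_) (fun n => ?_)
  · split_ifs <;> simp [logKernel_nonneg]
  · split_ifs with h
    · rw [logKernel_eq h.ne_zero, ArithmeticFunction.vonMangoldt_apply_prime h]
    · exact div_nonneg ArithmeticFunction.vonMangoldt_nonneg (Real.rpow_nonneg n.cast_nonneg _)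

open Complex ArithmeticFunction ArithmeticFunction.vonMangoldt in
theorem tendsto_mul_tsum_vonMangoldt :
    Tendsto (fun s : ℝ => s * ∑' n : ℕ, vonMangoldt n / (n : ℝ) ^ (1 + s)) (𝓝[>] 0) (𝓝 1) := by
  have ha : IsUnit (1 : ZMod 1) := isUnit_one
  have hres : ∀ n, residueClass (1 : ZMod 1) n = vonMangoldt n := fun n => by
    simp [residueClass, Subsingleton.elim (n : ZMod 1) 1]
  have H {x : ℝ} (hx : 1 < x) :
      ∑' n : ℕ, vonMangoldt n / (n : ℝ) ^ x =
        (LFunctionResidueClassAux (1 : ZMod 1) x).re + 1 / (x - 1) := by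
    refine ofReal_injective ?_
    simp only [ofReal_tsum, ofReal_div, ofReal_cpow (Nat.cast_nonneg _), ofReal_natCast,
      ofReal_add, ofReal_one, ofReal_sub]
    simp_rw [← LFunctionResidueClassAux_real ha hx,
      eqOn_LFunctionResidueClassAux ha <| Set.mem_ofPred.mpr (ofReal_re x ▸ hx)]
    simp only [Nat.totient_one, Nat.cast_one, inv_one, sub_add_cancel, LSeries, LSeries.term]
    refine tsum_congr fun n ↦ ?_
    split_ifs with hn
    · simp [hn]
    · rw [hres]
  have hcont : ContinuousWithinAt
      (fun s : ℝ => (LFunctionResidueClassAux (1 : ZMod 1) ((1 + s : ℝ) : ℂ)).re) (Ici 0) 0 := by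
    have h1 := continuousOn_LFunctionResidueClassAux (1 : ZMod 1)
    have h2 : ContinuousOn (fun s : ℝ => ((1 + s : ℝ) : ℂ)) (Ici 0) := by fun_prop
    exact (continuous_re.comp_continuousOn (h1.comp h2 fun s hs => by simpa using hs)) 0
      (by simp)
  have h3 := ((hcont.mono Ioi_subset_Ici_self).tendsto.mul
    (tendsto_nhdsWithin_of_tendsto_nhds tendsto_id : Tendsto (fun s : ℝ => s) (𝓝[>] 0) (𝓝 0))).add_const 1
  rw [mul_zero, zero_add] at h3
  refine h3.congr' ?_
  filter_upwards [self_mem_nhdsWithin] with s hs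
  have hs : 0 < s := hs
  rw [H (by linarith), add_sub_cancel_left, mul_add, mul_one_div_cancel hs.ne', mul_comm]

open ArithmeticFunction ArithmeticFunction.vonMangoldt in
theorem tendsto_mul_tsum_prime_logKernel :
    Tendsto (fun s : ℝ => s * ∑' n : ℕ, if n.Prime then logKernel s n else 0)
      (𝓝[>] 0) (𝓝 1) := by
  have hK : Summable fun n : ℕ => (if n.Prime then 0 else vonMangoldt n) / (n : ℝ) := by
    have := summable_residueClass_non_primes_div (1 : ZMod 1)
    refine this.congr fun n => ?_
    simp [residueClass, Subsingleton.elim (n : ZMod 1) 1]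
  set K := ∑' n : ℕ, (if n.Prime then 0 else vonMangoldt n) / (n : ℝ) with hKdef
  have hid : Tendsto (fun s : ℝ => s) (𝓝[>] 0) (𝓝 0) :=
    tendsto_nhdsWithin_of_tendsto_nhds tendsto_id
  have hlow := tendsto_mul_tsum_vonMangoldt.sub (hid.mul_const K)
  rw [zero_mul, sub_zero] at hlow
  refine tendsto_of_tendsto_of_tendsto_of_le_of_le' hlow tendsto_mul_tsum_vonMangoldt ?_ ?_
  · filter_upwards [self_mem_nhdsWithin] with s hs
    have hs : 0 < s := hs
    rw [← mul_sub]
    refine mul_le_mul_of_nonneg_left ?_ hs.le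
    rw [sub_le_iff_le_add, hKdef, ← (summable_prime_logKernel hs).tsum_add hK]
    refine (summable_vonMangoldt_div_rpow (by linarith : 1 < 1 + s)).tsum_le_tsum (fun n => ?_)
      ((summable_prime_logKernel hs).add hK)
    split_ifs with h
    · rw [logKernel_eq h.ne_zero, vonMangoldt_apply_prime h]
      simp
    · rw [zero_add]
      rcases Nat.eq_zero_or_pos n with rfl | hn
      · simp
      · have h1 : (1 : ℝ) ≤ n := by exact_mod_cast hn
        have : (n : ℝ) ≤ (n : ℝ) ^ (1 + s) := Real.self_le_rpow_of_one_le h1 (by linarith)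
        exact div_le_div_of_nonneg_left vonMangoldt_nonneg (by linarith) this
  · filter_upwards [self_mem_nhdsWithin] with s hs
    have hs : 0 < s := hs
    refine mul_le_mul_of_nonneg_left ?_ hs.le
    refine (summable_prime_logKernel hs).tsum_le_tsum (fun n => ?_)
      (summable_vonMangoldt_div_rpow (by linarith : 1 < 1 + s))
    split_ifs with h
    · rw [logKernel_eq h.ne_zero, vonMangoldt_apply_prime h]
    · exact div_nonneg vonMangoldt_nonneg (Real.rpow_nonneg n.cast_nonneg _)

/-- Abel summation against a kernel that is eventually nonnegative and nonincreasing. -/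
theorem sum_range_mul_ge_of_antitone {c k : ℕ → ℝ} {n₀ : ℕ}
    (hS : ∀ m, n₀ ≤ m → 0 ≤ ∑ i ∈ Finset.range m, c i)
    (hk : ∀ m, n₀ ≤ m → 0 ≤ k m ∧ k (m + 1) ≤ k m) {M : ℕ} (hM : n₀ ≤ M) :
    ∑ i ∈ Finset.range n₀, c i * k i - (∑ i ∈ Finset.range n₀, c i) * k n₀ ≤
      ∑ i ∈ Finset.range M, c i * k i := by
  have key : ∀ M, n₀ ≤ M →
      ∑ i ∈ Finset.range n₀, c i * k i - (∑ i ∈ Finset.range n₀, c i) * k n₀ +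
        (∑ i ∈ Finset.range M, c i) * k M ≤ ∑ i ∈ Finset.range M, c i * k i := by
    intro M hM
    induction M, hM using Nat.le_induction with
    | base => linarith
    | succ M hM ih =>
      have h1 := hS (M + 1) (by omega)
      have h2 := mul_le_mul_of_nonneg_left (hk M hM).2 h1
      rw [Finset.sum_range_succ] at h1 h2 ⊢
      rw [Finset.sum_range_succ (fun i => c i * k i)]
      linarith
  have := key M hM
  have := mul_nonneg (hS M hM) (hk M hM).1
  linarith

theorem exists_neg_le_tsum_mul_logKernel {c : ℕ → ℝ}
    (hS : ∀ᶠ m in atTop, 0 ≤ ∑ i ∈ Finset.range m, c i)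
    (hsum : ∀ s : ℝ, 0 < s → Summable fun n => c n * logKernel s n) :
    ∃ K : ℝ, ∀ s : ℝ, 0 < s → -K ≤ ∑' n, c n * logKernel s n := by
  obtain ⟨n₁, hn₁⟩ := eventually_atTop.1 hS
  set n₀ := max n₁ 3
  have hS' : ∀ m, n₀ ≤ m → 0 ≤ ∑ i ∈ Finset.range m, c i :=
    fun m hm => hn₁ m ((le_max_left _ _).trans hm)
  refine ⟨∑ i ∈ Finset.range n₀, |c i| * (Real.log i / i) +
    (∑ i ∈ Finset.range n₀, c i) * (Real.log n₀ / n₀), fun s hs => ?_⟩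
  refine ge_of_tendsto (hsum s hs).hasSum.tendsto_sum_nat ?_
  filter_upwards [eventually_ge_atTop n₀] with M hM
  refine le_trans ?_ (sum_range_mul_ge_of_antitone hS' (fun m hm => ⟨logKernel_nonneg s m,
    logKernel_succ_le hs ((le_max_right _ _).trans hm)⟩) hM)
  have h1 : -∑ i ∈ Finset.range n₀, |c i| * (Real.log i / i) ≤
      ∑ i ∈ Finset.range n₀, c i * logKernel s i := by
    rw [← Finset.sum_neg_distrib]
    refine Finset.sum_le_sum fun i _ => ?_
    have h2 := neg_abs_le (c i)
    calc -(|c i| * (Real.log i / i)) ≤ -(|c i| * logKernel s i) := by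
          have := mul_le_mul_of_nonneg_left (logKernel_le hs i) (abs_nonneg (c i))
          linarith
      _ = -|c i| * logKernel s i := by ring
      _ ≤ _ := mul_le_mul_of_nonneg_right h2 (logKernel_nonneg s i)
  have h3 := mul_le_mul_of_nonneg_left (logKernel_le hs n₀) (hS' n₀ le_rfl)
  linarith

theorem summable_mem_logKernel {A : Set ℕ} (hA : ∀ p ∈ A, Nat.Prime p) {s : ℝ} (hs : 0 < s) :
    Summable fun n : ℕ => if n ∈ A then logKernel s n else 0 := by
  refine (summable_prime_logKernel hs).of_nonneg_of_le (fun n => ?_) (fun n => ?_)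
  · split_ifs <;> simp [logKernel_nonneg]
  · split_ifs with h1 h2 h2
    · rfl
    · exact absurd (hA n h1) h2
    · exact logKernel_nonneg s n
    · rfl

theorem ncard_inter_Icc_eq_sum {A : Set ℕ} (hA : ∀ p ∈ A, Nat.Prime p) (N : ℕ) :
    ((A ∩ Set.Icc 1 N).ncard : ℝ) = ∑ i ∈ Finset.range (N + 1), if i ∈ A then (1 : ℝ) else 0 := by
  rw [Finset.sum_boole]
  congr 1
  rw [← Set.ncard_coe_finset]
  congr 1
  ext i
  simp only [mem_inter_iff, mem_Icc, Finset.coe_filter, Finset.mem_range, mem_ofPred_eq]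
  constructor
  · rintro ⟨h1, h2, h3⟩; exact ⟨by omega, h1⟩
  · rintro ⟨h1, h2⟩; exact ⟨h2, (hA i h2).one_le, by omega⟩

theorem tendsto_mul_tsum_mem_logKernel {A : Set ℕ} (hA : ∀ p ∈ A, Nat.Prime p) {θ : ℝ}
    (hdens : Tendsto (fun N : ℕ => ((A ∩ Set.Icc 1 N).ncard : ℝ) /
      (({p : ℕ | Nat.Prime p} ∩ Set.Icc 1 N).ncard : ℝ)) atTop (𝓝 θ)) :
    Tendsto (fun s : ℝ => s * ∑' n : ℕ, if n ∈ A then logKernel s n else 0)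
      (𝓝[>] 0) (𝓝 θ) := by
  have hP : ∀ N : ℕ, (({p : ℕ | Nat.Prime p} ∩ Set.Icc 1 N).ncard : ℝ) =
      ∑ i ∈ Finset.range (N + 1), if i.Prime then (1 : ℝ) else 0 := fun N => by
    rw [ncard_inter_Icc_eq_sum (A := {p : ℕ | Nat.Prime p}) fun p hp => hp]
    refine Finset.sum_congr rfl fun i _ => ?_
    simp only [mem_ofPred_eq]
    congr
  simp only [ncard_inter_Icc_eq_sum hA, hP] at hdens
  have hPpos : ∀ᶠ N : ℕ in atTop, 0 < ∑ i ∈ Finset.range (N + 1),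
      if i.Prime then (1 : ℝ) else 0 := by
    filter_upwards [eventually_ge_atTop 2] with N hN
    refine Finset.sum_pos' (fun i _ => by split_ifs <;> simp) ⟨2, ?_, ?_⟩
    · simpa using by omega
    · simp [Nat.prime_two]
  have key : ∀ α β : ℝ, (∀ᶠ N : ℕ in atTop, 0 ≤
      α * (∑ i ∈ Finset.range (N + 1), if i.Prime then (1 : ℝ) else 0) +
      β * ∑ i ∈ Finset.range (N + 1), if i ∈ A then (1 : ℝ) else 0) →
      ∃ K : ℝ, ∀ s : ℝ, 0 < s → -K ≤ α * (∑' n : ℕ, if n.Prime then logKernel s n else 0) +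
        β * ∑' n : ℕ, if n ∈ A then logKernel s n else 0 := by
    intro α β h
    have hterm : ∀ (s : ℝ) (n : ℕ), ((α * if n.Prime then 1 else 0) + β * if n ∈ A then 1 else 0) *
        logKernel s n = (α * if n.Prime then logKernel s n else 0) +
          β * if n ∈ A then logKernel s n else 0 := by
      intro s n
      split_ifs <;> ring
    have hs1 := fun (s : ℝ) (hs : 0 < s) => (summable_prime_logKernel hs).mul_left α
    have hs2 := fun (s : ℝ) (hs : 0 < s) => (summable_mem_logKernel hA hs).mul_left β
    obtain ⟨K, hK⟩ := exists_neg_le_tsum_mul_logKernel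
      (c := fun n => (α * if n.Prime then 1 else 0) + β * if n ∈ A then 1 else 0) (by
        rw [← map_add_atTop_eq_nat 1, eventually_map]
        filter_upwards [h] with N hN
        simpa only [Finset.sum_add_distrib, ← Finset.mul_sum] using hN)
      (fun s hs => by
        simp only [hterm]
        exact (hs1 s hs).add (hs2 s hs))
    refine ⟨K, fun s hs => ?_⟩
    have := hK s hs
    simp only [hterm] at this
    rwa [(hs1 s hs).tsum_add (hs2 s hs), tsum_mul_left, tsum_mul_left] at this
  have hid : Tendsto (fun s : ℝ => s) (𝓝[>] 0) (𝓝 0) :=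
    tendsto_nhdsWithin_of_tendsto_nhds tendsto_id
  refine tendsto_order.2 ⟨fun b hb => ?_, fun b hb => ?_⟩
  · obtain ⟨r, hbr, hrθ⟩ := exists_between hb
    obtain ⟨K, hK⟩ := key (-r) 1 (by
      filter_upwards [hPpos, hdens.eventually_const_lt hrθ] with N h1 h2
      rw [lt_div_iff₀ h1] at h2
      linarith)
    have h1 := (tendsto_mul_tsum_prime_logKernel.const_mul r).sub (hid.mul_const K)
    rw [mul_one, zero_mul, sub_zero] at h1
    filter_upwards [h1.eventually_const_lt hbr, self_mem_nhdsWithin] with s h2 hs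
    have := mul_le_mul_of_nonneg_left (hK s hs) (le_of_lt hs)
    linarith
  · obtain ⟨r, hrθ, hbr⟩ := exists_between hb
    obtain ⟨K, hK⟩ := key r (-1) (by
      filter_upwards [hPpos, hdens.eventually_lt_const hrθ] with N h1 h2
      rw [div_lt_iff₀ h1] at h2
      linarith)
    have h1 := (tendsto_mul_tsum_prime_logKernel.const_mul r).add (hid.mul_const K)
    rw [mul_one, zero_mul, add_zero] at h1
    filter_upwards [h1.eventually_lt_const hbr, self_mem_nhdsWithin] with s h2 hs
    have := mul_le_mul_of_nonneg_left (hK s hs) (le_of_lt hs)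
    linarith

theorem summable_exp_neg_mul_log_div {s : ℝ} (hs : 0 < s) :
    Summable fun n : ℕ => Real.exp (-(s * Real.log n)) / n := by
  refine (Real.summable_nat_rpow.2 (by linarith : -(1 + s) < -1)).congr fun n => ?_
  rcases Nat.eq_zero_or_pos n with rfl | hn
  · rw [Nat.cast_zero, Real.zero_rpow (by linarith), div_zero]
  · have h : (0 : ℝ) < n := by positivity
    rw [Real.rpow_neg h.le, Real.rpow_add h, Real.rpow_one, Real.exp_neg, mul_comm s, Real.exp_mul,
      Real.exp_log h]
    field_simp

theorem finite_setOf_mul_log_le {s : ℝ} (hs : 0 < s) :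
    {n : ℕ | s * Real.log n ≤ 1}.Finite := by
  obtain ⟨M, hM⟩ := exists_nat_ge (Real.exp (1 / s))
  refine (Set.finite_le_nat M).subset fun n hn => ?_
  rcases Nat.eq_zero_or_pos n with rfl | hpos
  · exact Nat.zero_le M
  · have h : (0 : ℝ) < n := by positivity
    have h1 : Real.log n ≤ 1 / s := by
      rw [le_div_iff₀ hs, mul_comm]
      exact hn
    have h2 : (n : ℝ) ≤ M := ((Real.log_le_iff_le_exp h).1 h1).trans hM
    exact_mod_cast h2

theorem log_one_add_div_sub_nonneg {x t : ℝ} (hx : 2 ≤ x) (ht : t ∈ Icc (0 : ℝ) 1) :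
    0 ≤ Real.log (1 + t / (x - 1)) - t / x := by
  obtain ⟨h0, h1⟩ := ht
  have hx1 : 0 < x - 1 := by linarith
  have hpos : 0 < 1 + t / (x - 1) := by positivity
  have h2 := Real.one_sub_inv_le_log_of_pos hpos
  have h3 : 1 - (1 + t / (x - 1))⁻¹ = t / (x - 1 + t) := by
    have : x - 1 + t ≠ 0 := by linarith
    field_simp
    ring
  have h4 : t / x ≤ t / (x - 1 + t) :=
    div_le_div_of_nonneg_left h0 (by linarith) (by linarith)
  linarith

theorem log_one_add_div_sub_le {x t : ℝ} (hx : 2 ≤ x) (ht : t ∈ Icc (0 : ℝ) 1) :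
    Real.log (1 + t / (x - 1)) - t / x ≤ 2 / x ^ 2 := by
  obtain ⟨h0, h1⟩ := ht
  have hx1 : 0 < x - 1 := by linarith
  have hpos : 0 < 1 + t / (x - 1) := by positivity
  have h2 := Real.log_le_sub_one_of_pos hpos
  have h3 : t / (x - 1) - t / x = t / (x * (x - 1)) := by
    have : x ≠ 0 := by linarith
    field_simp
    ring
  have h4 : t / (x * (x - 1)) ≤ 2 / x ^ 2 := by
    rw [div_le_div_iff₀ (by positivity) (by positivity)]
    nlinarith [mul_nonneg (by linarith : 0 ≤ x) (by linarith : 0 ≤ x - 2),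
      mul_nonneg (sub_nonneg.2 h1) (sq_nonneg x)]
  linarith

theorem exp_neg_mul_log_mem_Icc {s : ℝ} (hs : 0 ≤ s) (n : ℕ) :
    Real.exp (-(s * Real.log n)) ∈ Icc (0 : ℝ) 1 := by
  refine ⟨(Real.exp_pos _).le, Real.exp_le_one_iff.2 ?_⟩
  have := mul_nonneg hs (Real.log_natCast_nonneg n)
  linarith

/-- The logarithm of the Euler product `∏ (1 + p ^ (-s) / (p - 1))` over `p ∈ A`. -/
noncomputable def logEulerProd (A : Set ℕ) (s : ℝ) : ℝ :=
  ∑' n : ℕ, if n ∈ A then Real.log (1 + Real.exp (-(s * Real.log n)) / (n - 1)) else 0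

/-- The logarithm of the Mertens product `∏ (1 + 1 / (p - 1))` over `p ∈ A` with
`s * log p ≤ 1`. -/
noncomputable def logMertensProd (A : Set ℕ) (s : ℝ) : ℝ :=
  ∑' n : ℕ, if n ∈ A ∧ s * Real.log n ≤ 1 then Real.log (1 + 1 / ((n : ℝ) - 1)) else 0

theorem summable_logEulerProd {A : Set ℕ} (hA : ∀ p ∈ A, Nat.Prime p) {s : ℝ} (hs : 0 < s) :
    Summable fun n : ℕ =>
      if n ∈ A then Real.log (1 + Real.exp (-(s * Real.log n)) / (n - 1)) else 0 := by
  have h2 : Summable fun n : ℕ => 2 / (n : ℝ) ^ 2 :=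
    (Real.summable_nat_pow_inv.2 one_lt_two).mul_left 2 |>.congr fun n => by
      rw [div_eq_mul_inv]
  refine ((summable_exp_neg_mul_log_div hs).add h2).of_nonneg_of_le (fun n => ?_) fun n => ?_
  · split_ifs with h
    · have h2 : (2 : ℝ) ≤ n := by exact_mod_cast (hA n h).two_le
      have ht := exp_neg_mul_log_mem_Icc hs.le n
      have h3 := log_one_add_div_sub_nonneg h2 ht
      have := div_nonneg ht.1 (by linarith : (0 : ℝ) ≤ n)
      linarith
    · rfl
  · split_ifs with h
    · have h2 : (2 : ℝ) ≤ n := by exact_mod_cast (hA n h).two_le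
      have := log_one_add_div_sub_le h2 (exp_neg_mul_log_mem_Icc hs.le n)
      linarith
    · positivity

theorem tendsto_logEulerProd_sub_logMertensProd {A : Set ℕ} (hA : ∀ p ∈ A, Nat.Prime p) {θ : ℝ}
    (hdens : Tendsto (fun N : ℕ => ((A ∩ Set.Icc 1 N).ncard : ℝ) /
      (({p : ℕ | Nat.Prime p} ∩ Set.Icc 1 N).ncard : ℝ)) atTop (𝓝 θ)) {k : ℕ} (hk : 1 ≤ k) :
    Tendsto (fun s : ℝ => logEulerProd A (k * s) - logMertensProd A s) (𝓝[>] 0)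
      (𝓝 (-(θ * (Real.eulerMascheroniConstant + Real.log k)))) := by
  have hk0 : (0 : ℝ) < k := by exact_mod_cast hk
  have hAE : ∀ (s : ℝ) (n : ℕ), (if n ∈ A then Real.log n / n else 0) *
      Real.exp (-(s * Real.log n)) = if n ∈ A then logKernel s n else 0 := fun s n => by
    split_ifs <;> simp [logKernel]
  have h1 := tendsto_tsum_exp_sub_cutoff hk
    (a := fun n : ℕ => if n ∈ A then Real.log n / n else 0) (v := fun n : ℕ => Real.log n) (θ := θ)
    (fun n => by
      split_ifs
      · exact div_nonneg (Real.log_natCast_nonneg n) n.cast_nonneg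
      · rfl)
    (fun n => Real.log_natCast_nonneg n) (fun n hn => by simp [hn])
    (fun s hs => by simpa only [hAE] using summable_mem_logKernel hA hs)
    (by simpa only [hAE] using tendsto_mul_tsum_mem_logKernel hA hdens)
  set D : ℝ → ℕ → ℝ := fun s n => if n ∈ A then
    (Real.log (1 + Real.exp (-(k * s * Real.log n)) / (n - 1)) -
      Real.exp (-(k * s * Real.log n)) / n) -
    (if s * Real.log n ≤ 1 then Real.log (1 + 1 / ((n : ℝ) - 1)) - 1 / n else 0) else 0 with hD
  have hsum2 : Summable fun n : ℕ => 2 / (n : ℝ) ^ 2 :=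
    (Real.summable_nat_pow_inv.2 one_lt_two).mul_left 2 |>.congr fun n => by
      rw [div_eq_mul_inv]
  have hDle : ∀ s : ℝ, 0 < s → ∀ n, ‖D s n‖ ≤ 2 / (n : ℝ) ^ 2 := by
    intro s hs n
    simp only [hD]
    split_ifs with h hc
    · have h2 : (2 : ℝ) ≤ n := by exact_mod_cast (hA n h).two_le
      have ht := exp_neg_mul_log_mem_Icc (by positivity : 0 ≤ k * s) n
      have i1 := log_one_add_div_sub_le h2 ht
      have i2 := log_one_add_div_sub_nonneg h2 ht
      have i3 := log_one_add_div_sub_le h2 (t := 1) (by simp)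
      have i4 := log_one_add_div_sub_nonneg h2 (t := 1) (by simp)
      rw [Real.norm_eq_abs, abs_le]
      constructor <;> linarith
    · have h2 : (2 : ℝ) ≤ n := by exact_mod_cast (hA n h).two_le
      have ht := exp_neg_mul_log_mem_Icc (by positivity : 0 ≤ k * s) n
      have i1 := log_one_add_div_sub_le h2 ht
      have i2 := log_one_add_div_sub_nonneg h2 ht
      rw [sub_zero, Real.norm_eq_abs, abs_le]
      constructor <;> linarith
    · rw [norm_zero]
      positivity
  have hDlim : ∀ n, Tendsto (fun s => D s n) (𝓝[>] 0) (𝓝 0) := by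
    intro n
    by_cases h : n ∈ A
    swap
    · simp [hD, h]
    have h2 : (2 : ℝ) ≤ n := by exact_mod_cast (hA n h).two_le
    have hcont : ContinuousAt (fun s : ℝ =>
        (Real.log (1 + Real.exp (-(k * s * Real.log n)) / (n - 1)) -
          Real.exp (-(k * s * Real.log n)) / n) -
        (Real.log (1 + 1 / ((n : ℝ) - 1)) - 1 / n)) 0 := by
      have : (1 : ℝ) + Real.exp (-(k * 0 * Real.log n)) / (n - 1) ≠ 0 := by
        have : (0 : ℝ) < n - 1 := by linarith
        positivity
      fun_prop (disch := assumption)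
    have h3 := hcont.tendsto.mono_left (nhdsWithin_le_nhds (s := Ioi 0))
    simp only [mul_zero, zero_mul, neg_zero, Real.exp_zero, sub_self] at h3
    refine h3.congr' ?_
    have hsm : ∀ᶠ s : ℝ in 𝓝[>] 0, s * Real.log n < 1 := by
      have : Tendsto (fun s : ℝ => s * Real.log n) (𝓝[>] 0) (𝓝 (0 * Real.log n)) :=
        (tendsto_nhdsWithin_of_tendsto_nhds tendsto_id).mul_const _
      rw [zero_mul] at this
      exact this.eventually_lt_const one_pos
    filter_upwards [hsm] with s hs
    simp only [hD, if_pos h, if_pos hs.le]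
  have hDtsum : Tendsto (fun s => ∑' n, D s n) (𝓝[>] 0) (𝓝 0) := by
    have := tendsto_tsum_of_dominated_convergence hsum2 hDlim
      (by filter_upwards [self_mem_nhdsWithin] with s hs using hDle s hs)
    rwa [tsum_zero] at this
  have h2 := hDtsum.add h1
  rw [zero_add] at h2
  refine h2.congr' ?_
  filter_upwards [self_mem_nhdsWithin] with s hs
  have hs : 0 < s := hs
  have hks : 0 < k * s := by positivity
  have hfin : ∀ f : ℕ → ℝ, Summable fun n : ℕ => if n ∈ A ∧ s * Real.log n ≤ 1 then f n else 0 :=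
    fun f => summable_of_hasFiniteSupport ((finite_setOf_mul_log_le hs).subset fun n hn => by
      by_contra h
      exact hn (if_neg fun h' => h h'.2))
  have hexp : Summable fun n : ℕ => if n ∈ A then Real.exp (-(k * s * Real.log n)) / n else 0 :=
    (summable_exp_neg_mul_log_div hks).of_nonneg_of_le
      (fun n => by split_ifs <;> positivity)
      (fun n => by
        split_ifs
        · rfl
        · positivity)
  have hterm : ∀ n : ℕ, (if n ∈ A then Real.log n / n else 0) / Real.log n *
      (Real.exp (-(k * (s * Real.log n))) - if s * Real.log n ≤ 1 then 1 else 0) =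
      (if n ∈ A then Real.exp (-(k * s * Real.log n)) / n else 0) -
        if n ∈ A ∧ s * Real.log n ≤ 1 then 1 / (n : ℝ) else 0 := by
    intro n
    by_cases h : n ∈ A
    · have h2 : (1 : ℝ) < n := by exact_mod_cast (hA n h).one_lt
      have : Real.log n ≠ 0 := (Real.log_pos h2).ne'
      simp only [h, if_true, true_and]
      rw [mul_assoc (k : ℝ)]
      split_ifs <;> field_simp
      simp
    · simp [h]
  simp only [hterm]
  have hDs : Summable (D s) := hsum2.of_norm_bounded (hDle s hs)
  rw [← hDs.tsum_add (hexp.sub (hfin _)), logEulerProd, logMertensProd,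
    ← (summable_logEulerProd hA hks).tsum_sub (hfin _)]
  refine tsum_congr fun n => ?_
  simp only [hD]
  by_cases i1 : n ∈ A <;> by_cases i2 : s * Real.log n ≤ 1 <;>
    simp only [i1, i2, if_true, if_false, and_true, and_false] <;> ring

/-- A nonnegative multiplicative function whose Euler factors have summable logarithms is
summable, with sum the exponential of the sum of these logarithms. -/
theorem hasSum_of_hasSum_log_eulerFactor {f L : ℕ → ℝ} {a : ℝ} (hf : ∀ n, 0 ≤ f n)
    (hf0 : f 0 = 0) (hf1 : f 1 = 1) (hmul : ∀ {m n : ℕ}, Nat.Coprime m n → f (m * n) = f m * f n)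
    (hpow : ∀ {p : ℕ}, p.Prime → Summable fun e : ℕ => f (p ^ e))
    (hL0 : ∀ n, 0 ≤ L n) (hL : HasSum L a)
    (hLf : ∀ n, Real.exp (L n) = if n.Prime then ∑' e : ℕ, f (n ^ e) else 1) :
    HasSum f (Real.exp a) := by
  have hsum : Summable f := by
    refine summable_of_sum_range_le (c := Real.exp a) hf fun N => ?_
    have h1 := (EulerProduct.summable_and_hasSum_smoothNumbers_prod_primesBelow_tsum hf1 hmul
      (fun hp => (hpow hp).norm) N).2
    have h2 := hasSum_subtype_iff_indicator.1 h1
    have h3 : ∏ p ∈ N.primesBelow, ∑' n : ℕ, f (p ^ n) = Real.exp (∑ i ∈ Finset.range N, L i) := by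
      rw [Real.exp_sum, Nat.primesBelow, Finset.prod_filter]
      exact Finset.prod_congr rfl fun i _ => by rw [hLf]
    rw [h3] at h2
    calc ∑ i ∈ Finset.range N, f i
        ≤ ∑ i ∈ Finset.range N, (Nat.smoothNumbers N).indicator f i := by
          refine Finset.sum_le_sum fun i hi => ?_
          rcases Nat.eq_zero_or_pos i with rfl | hpos
          · rw [hf0]
            exact indicator_nonneg (fun n _ => hf n) 0
          · rw [indicator_of_mem]
            rw [Nat.mem_smoothNumbers_iff_forall_le]
            exact ⟨hpos.ne', fun p hp _ _ => hp.trans_lt (Finset.mem_range.1 hi)⟩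
      _ ≤ Real.exp (∑ i ∈ Finset.range N, L i) :=
          sum_le_hasSum _ (fun i _ => indicator_nonneg (fun n _ => hf n) i) h2
      _ ≤ Real.exp a := Real.exp_le_exp.2 (sum_le_hasSum _ (fun i _ => hL0 i) hL)
  have h1 := EulerProduct.eulerProduct_hasProd_mulIndicator hf1 hmul hsum.norm hf0
  have h2 : Set.mulIndicator {p : ℕ | Nat.Prime p} (fun p => ∑' e, f (p ^ e)) = Real.exp ∘ L := by
    funext n
    rw [Function.comp_apply, hLf, mulIndicator_apply]
    simp only [mem_ofPred_eq]
  rw [h2] at h1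
  rw [hL.rexp.unique h1]
  exact hsum.hasSum

/-- The summand `1 / φ(n)`, restricted to squarefree `n` with all prime factors in `A`. -/
noncomputable def phiWeight (A : Set ℕ) (n : ℕ) : ℝ :=
  if (∀ p : ℕ, p.Prime → p ∣ n → p ∈ A) ∧ (∀ p : ℕ, p.Prime → ¬ p ^ 2 ∣ n) then
    (1 : ℝ) / (Nat.totient n : ℝ) else 0

theorem phiWeight_nonneg (A : Set ℕ) (n : ℕ) : 0 ≤ phiWeight A n := by
  unfold phiWeight
  split_ifs <;> positivity

theorem phiWeight_zero (A : Set ℕ) : phiWeight A 0 = 0 := by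
  simp [phiWeight]

theorem phiWeight_one (A : Set ℕ) : phiWeight A 1 = 1 := by
  rw [phiWeight, if_pos]
  · simp
  · refine ⟨fun p hp h => absurd h hp.not_dvd_one, fun p hp h => hp.not_dvd_one ?_⟩
    exact (dvd_pow_self p two_ne_zero).trans h

theorem phiWeight_mul (A : Set ℕ) {m n : ℕ} (h : Nat.Coprime m n) :
    phiWeight A (m * n) = phiWeight A m * phiWeight A n := by
  have h1 : ∀ k : ℕ, (∀ p : ℕ, p.Prime → ¬ p ^ 2 ∣ k) ↔ Squarefree k := fun k => by
    simp only [Nat.squarefree_iff_prime_squarefree, sq]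
  have h2 : (∀ p : ℕ, p.Prime → p ∣ m * n → p ∈ A) ↔
      (∀ p : ℕ, p.Prime → p ∣ m → p ∈ A) ∧ (∀ p : ℕ, p.Prime → p ∣ n → p ∈ A) := by
    refine ⟨fun h => ⟨fun p hp hd => h p hp (hd.mul_right n), fun p hp hd => h p hp (hd.mul_left m)⟩,
      fun h p hp hd => ?_⟩
    exact (hp.dvd_mul.1 hd).elim (h.1 p hp) (h.2 p hp)
  simp only [phiWeight, h1, h2, Nat.squarefree_mul h, Nat.totient_mul h]
  split_ifs with i1 i2 i3 i3 i3 i4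
  · push_cast
    rw [one_div_mul_one_div]
  all_goals first | (exfalso; tauto) | simp

theorem phiWeight_prime (A : Set ℕ) {p : ℕ} (hp : p.Prime) :
    phiWeight A p = if p ∈ A then 1 / ((p : ℝ) - 1) else 0 := by
  have h1 : (∀ q : ℕ, q.Prime → ¬ q ^ 2 ∣ p) := fun q hq h =>
    Nat.squarefree_iff_prime_squarefree.1 hp.squarefree q hq (by rwa [← sq])
  have h2 : (∀ q : ℕ, q.Prime → q ∣ p → q ∈ A) ↔ p ∈ A :=
    ⟨fun h => h p hp dvd_rfl, fun h q hq hd => by rwa [(Nat.prime_dvd_prime_iff_eq hq hp).1 hd]⟩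
  simp only [phiWeight, h2, Nat.totient_prime hp, Nat.cast_sub hp.one_le, Nat.cast_one]
  by_cases h : p ∈ A
  · rw [if_pos ⟨h, h1⟩, if_pos h]
  · rw [if_neg (fun h' => h h'.1), if_neg h]

theorem phiWeight_prime_pow (A : Set ℕ) {p e : ℕ} (hp : p.Prime) (he : 2 ≤ e) :
    phiWeight A (p ^ e) = 0 :=
  if_neg fun h => h.2 p hp (pow_dvd_pow p he)

theorem hasSum_phiWeight_mul_exp {A : Set ℕ} (hA : ∀ p ∈ A, Nat.Prime p) {s : ℝ} (hs : 0 < s) :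
    HasSum (fun n : ℕ => phiWeight A n * Real.exp (-(s * Real.log n)))
      (Real.exp (logEulerProd A s)) := by
  have hvanish : ∀ {p : ℕ}, p.Prime → ∀ e ∉ Finset.range 2,
      phiWeight A (p ^ e) * Real.exp (-(s * Real.log ↑(p ^ e))) = 0 := fun {p} hp e he => by
    rw [phiWeight_prime_pow A hp (by simpa [Nat.succ_le_iff] using he), zero_mul]
  refine hasSum_of_hasSum_log_eulerFactor
    (fun n => mul_nonneg (phiWeight_nonneg A n) (Real.exp_pos _).le)
    (by simp [phiWeight_zero]) (by simp [phiWeight_one]) (fun {m n} h => ?_)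
    (fun hp => summable_of_ne_finset_zero (hvanish hp)) (fun n => ?_)
    (summable_logEulerProd hA hs).hasSum (fun n => ?_)
  · rcases Nat.eq_zero_or_pos m with rfl | hm
    · simp [phiWeight_zero]
    rcases Nat.eq_zero_or_pos n with rfl | hn
    · simp [phiWeight_zero]
    rw [phiWeight_mul A h, Nat.cast_mul, Real.log_mul (by positivity) (by positivity), mul_add,
      neg_add, Real.exp_add]
    ring
  · split_ifs with h
    · have h2 : (2 : ℝ) ≤ n := by exact_mod_cast (hA n h).two_le
      refine Real.log_nonneg ?_
      have : 0 < Real.exp (-(s * Real.log n)) / (n - 1) :=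
        div_pos (Real.exp_pos _) (by linarith)
      linarith
    · rfl
  · by_cases hp : n.Prime
    · have h2 : (2 : ℝ) ≤ n := by exact_mod_cast hp.two_le
      rw [if_pos hp, tsum_eq_sum (hvanish hp), Finset.sum_range_succ, Finset.sum_range_one, pow_zero,
        pow_one, phiWeight_one, phiWeight_prime A hp, Nat.cast_one, Real.log_one, mul_zero, neg_zero,
        Real.exp_zero, mul_one]
      split_ifs with h
      · have : 0 < Real.exp (-(s * Real.log n)) / (n - 1) :=
          div_pos (Real.exp_pos _) (by linarith)
        rw [Real.exp_log (by linarith)]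
        ring
      · simp
    · rw [if_neg hp, if_neg fun h => hp (hA n h), Real.exp_zero]

theorem one_div_log_mul_log_le_one_iff {N n : ℕ} (hN : 2 ≤ N) (hn : 0 < n) :
    1 / Real.log N * Real.log n ≤ 1 ↔ n ≤ N := by
  have h1 : (1 : ℝ) < N := by exact_mod_cast hN
  have h2 := Real.log_pos h1
  rw [one_div_mul_eq_div, div_le_one h2, Real.log_le_log_iff (by positivity) (by linarith),
    Nat.cast_le]

theorem harmSum_eq_prod (N : ℕ) (A : Set ℕ) :
    harmSum (fun p => p ≤ N ∧ p ∈ A) =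
      ∏ p ∈ ((Finset.range (N + 1)).filter (· ∈ A)).filter Nat.Prime, (1 - (p : ℝ)⁻¹)⁻¹ := by
  set S := (Finset.range (N + 1)).filter (· ∈ A)
  let f : ℕ →* ℝ := (invMonoidWithZeroHom : ℝ →*₀ ℝ).toMonoidHom.comp
    (Nat.castRingHom ℝ).toMonoidHom
  have hf : ∀ n, f n = (n : ℝ)⁻¹ := fun n => rfl
  have h1 := (EulerProduct.summable_and_hasSum_factoredNumbers_prod_filter_prime_geometric (f := f)
    (fun {p} hp => by
      have h2 : (1 : ℝ) < p := by exact_mod_cast hp.one_lt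
      rw [hf, norm_inv, RCLike.norm_natCast]
      exact inv_lt_one_of_one_lt₀ h2) S).2
  simp only [hf] at h1
  rw [← h1.tsum_eq, harmSum]
  have hS : ∀ p, p ∈ S ↔ p ≤ N ∧ p ∈ A := fun p => by
    simp [S]
  have hiff : ∀ n : ℕ, (0 < n ∧ ∀ p : ℕ, p.Prime → p ∣ n → p ≤ N ∧ p ∈ A) ↔
      n ∈ Nat.factoredNumbers S := fun n => by
    rw [Nat.mem_factoredNumbers']
    simp only [hS]
    refine ⟨fun h => h.2, fun h => ⟨Nat.pos_of_ne_zero ?_, h⟩⟩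
    rintro rfl
    obtain ⟨p, hpN, hp⟩ := Nat.exists_infinite_primes (N + 1)
    have := (h p hp (dvd_zero p)).1
    omega
  rw [← (Equiv.subtypeEquivRight hiff).tsum_eq]
  exact tsum_congr fun n => one_div _

theorem harmSum_eq_exp_logMertensProd {A : Set ℕ} (hA : ∀ p ∈ A, Nat.Prime p) {N : ℕ}
    (hN : 2 ≤ N) :
    harmSum (fun p => p ≤ N ∧ p ∈ A) = Real.exp (logMertensProd A (1 / Real.log N)) := by
  rw [harmSum_eq_prod, logMertensProd, tsum_eq_sum (s := Finset.range (N + 1)), Real.exp_sum,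
    Finset.filter_filter, Finset.prod_filter]
  · refine Finset.prod_congr rfl fun n hn => ?_
    by_cases h : n ∈ A
    · have hp := hA n h
      have h2 : (1 : ℝ) < n := by exact_mod_cast hp.one_lt
      have hle : n ≤ N := by simpa [Nat.lt_succ_iff] using hn
      rw [if_pos ⟨h, hp⟩, if_pos ⟨h, (one_div_log_mul_log_le_one_iff hN hp.pos).2 hle⟩]
      have h3 : (0 : ℝ) < n - 1 := by linarith
      rw [Real.exp_log (by positivity)]
      have : (n : ℝ) ≠ 0 := by positivity
      field_simp
      ring
    · rw [if_neg fun h' => h h'.1, if_neg fun h' => h h'.1, Real.exp_zero]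
  · intro n hn
    refine if_neg fun h => hn ?_
    rw [one_div_log_mul_log_le_one_iff hN (hA n h.1).pos] at h
    simpa [Nat.lt_succ_iff] using h.2

theorem tendsto_tsum_phiWeight_div {A : Set ℕ} (hA : ∀ p ∈ A, Nat.Prime p) {θ : ℝ} (hθ : 0 < θ)
    (hdens : Tendsto (fun N : ℕ => ((A ∩ Set.Icc 1 N).ncard : ℝ) /
      (({p : ℕ | Nat.Prime p} ∩ Set.Icc 1 N).ncard : ℝ)) atTop (𝓝 θ)) :
    Tendsto (fun s : ℝ => ∑' n : ℕ,
        if s * Real.log n ≤ 1 then phiWeight A n / Real.exp (logMertensProd A s) else 0)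
      (𝓝[>] 0) (𝓝 (Real.exp (-(θ * Real.eulerMascheroniConstant)) / Real.Gamma (θ + 1))) := by
  have hlim := tendsto_tsum_exp_indicator_of_tendsto_exp_moments (l := 𝓝[>] (0 : ℝ))
    (W := fun s n => phiWeight A n * Real.exp (-(s * Real.log n)) / Real.exp (logMertensProd A s))
    (u := fun s (n : ℕ) => s * Real.log n) (by
      filter_upwards [self_mem_nhdsWithin] with s hs
      have hs : 0 < s := hs
      refine ⟨(hasSum_phiWeight_mul_exp hA hs).summable.div_const _, fun n => ⟨?_, ?_⟩⟩
      · have := phiWeight_nonneg A n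
        positivity
      · exact mul_nonneg hs.le (Real.log_natCast_nonneg n))
    (C := Real.exp (-(θ * Real.eulerMascheroniConstant))) hθ (fun k => by
      have h1 := (tendsto_logEulerProd_sub_logMertensProd hA hdens
        (Nat.succ_le_succ (Nat.zero_le k))).rexp
      have h2 : Real.exp (-(θ * (Real.eulerMascheroniConstant + Real.log (k + 1 : ℕ)))) =
          Real.exp (-(θ * Real.eulerMascheroniConstant)) * ((k : ℝ) + 1) ^ (-θ) := by
        rw [Real.rpow_def_of_pos (by positivity), ← Real.exp_add]
        push_cast
        ring_nf
      rw [← h2]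
      refine h1.congr' ?_
      filter_upwards [self_mem_nhdsWithin] with s hs
      have hs : 0 < s := hs
      have h3 := (hasSum_phiWeight_mul_exp hA
        (by positivity : 0 < ((k + 1 : ℕ) : ℝ) * s)).div_const (Real.exp (logMertensProd A s))
      rw [Real.exp_sub, ← h3.tsum_eq]
      refine tsum_congr fun n => ?_
      have h4 : Real.exp (-(((k + 1 : ℕ) : ℝ) * s * Real.log n)) =
          Real.exp (-(s * Real.log n)) * Real.exp (-(k * (s * Real.log n))) := by
        rw [← Real.exp_add]
        push_cast
        ring_nf
      rw [h4]
      ring)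
  refine hlim.congr fun s => tsum_congr fun n => ?_
  split_ifs
  · rw [Real.exp_neg]
    field_simp
  · rw [mul_zero]

theorem tsum_phiWeight_eq_sum (A : Set ℕ) {N : ℕ} (hN : 2 ≤ N) (M : ℝ) :
    ∑' n : ℕ, (if 1 / Real.log N * Real.log n ≤ 1 then phiWeight A n / M else 0) =
      (∑ n ∈ Finset.Icc 1 N, phiWeight A n) / M := by
  rw [tsum_eq_sum (s := Finset.Icc 1 N), Finset.sum_div]
  · refine Finset.sum_congr rfl fun n hn => ?_
    rw [Finset.mem_Icc] at hn
    rw [if_pos ((one_div_log_mul_log_le_one_iff hN hn.1).2 hn.2)]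
  · intro n hn
    rcases Nat.eq_zero_or_pos n with rfl | hpos
    · simp [phiWeight_zero]
    · exact if_neg fun h =>
        hn (Finset.mem_Icc.2 ⟨hpos, (one_div_log_mul_log_le_one_iff hN hpos).1 h⟩)

end

/-- **Theorem 3 for `k = 2`.** For a set `A` of primes with natural density `θ ∈ (0,1]` within
the primes, the ratio of the harmonic sum over integers whose prime factors are `≤ N` and lie
in `A` to the sum of `1/φ(n)` over squarefree `n ≤ N` with prime factors in `A` tends to
`e^{γθ} Γ(θ+1)`. -/
theorem generalized_phi_mertens_squarefree
    (A : Set ℕ) (hA : ∀ p ∈ A, Nat.Prime p)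
    (θ : ℝ) (hθ : θ ∈ Set.Ioc (0 : ℝ) 1)
    (hdens : Tendsto
      (fun N : ℕ => ((A ∩ Set.Icc 1 N).ncard : ℝ) / (({p : ℕ | Nat.Prime p} ∩ Set.Icc 1 N).ncard : ℝ))
      atTop (nhds θ)) :
    Tendsto
      (fun N : ℕ =>
        harmSum (fun p => p ≤ N ∧ p ∈ A) /
        ∑ n ∈ Finset.Icc 1 N,
          if (∀ p : ℕ, p.Prime → p ∣ n → p ∈ A) ∧ (∀ p : ℕ, p.Prime → ¬ p ^ 2 ∣ n) then
            (1 : ℝ) / (Nat.totient n : ℝ)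
          else 0)
      atTop
      (nhds (Real.exp (Real.eulerMascheroniConstant * θ) * Real.Gamma (θ + 1))) := by

  have hlog : Tendsto (fun N : ℕ => 1 / Real.log N) atTop (nhdsWithin 0 (Set.Ioi 0)) := by
    simp only [one_div]
    exact tendsto_inv_atTop_nhdsGT_zero.comp
      (Real.tendsto_log_atTop.comp tendsto_natCast_atTop_atTop)
  have h := ((tendsto_tsum_phiWeight_div hA hθ.1 hdens).comp hlog).inv₀
    (div_pos (Real.exp_pos _) (Real.Gamma_pos_of_pos (by linarith [hθ.1]))).ne'
  rw [inv_div, Real.exp_neg, div_inv_eq_mul, mul_comm, mul_comm θ] at h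
  refine h.congr' ?_
  filter_upwards [eventually_ge_atTop 2] with N hN
  rw [Function.comp_apply, tsum_phiWeight_eq_sum A hN, inv_div,
    ← harmSum_eq_exp_logMertensProd hA hN]
  rfl
end

section
/- Let k ≥ 2 and let A be a subset of the prime numbers whose natural density in the primes exists and equals θ ∈ (0,1]. Then, as N → ∞, ∑_{k-free n with 1 ≤ n ≤ N : every prime factor of n lies in A} 1/( n_{(k−1)-free} · φ(n_{(k−1)-power}) ) ∼ ∑_{1 ≤ n ≤ N : every prime factor of n lies in A} 1/n, i.e. the ratio of the two sides tends to 1. -/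
open Filter
open scoped Classical

/-- `n` is `k`-free: no `k`-th power of a prime divides `n`. -/
def KFree (k n : ℕ) : Prop := ∀ p : ℕ, p.Prime → ¬ p ^ k ∣ n

/-- The `m`-free part of `n`: each prime `p` appearing with exponent `e` in `n` contributes
`p ^ (e % m)`.  In particular the `1`-free part of any `n` is `1`. -/
def freePart (m n : ℕ) : ℕ := n.factorization.prod fun p e => p ^ (e % m)

/-- The `m`-power part of `n`: each prime `p` appearing with exponent `e` in `n` contributes
`p ^ (m * (e / m))`, so the result is a perfect `m`-th power, and
`n = freePart m n * powerPart m n`.  In particular the `1`-power part of `n` is `n` itself. -/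
def powerPart (m n : ℕ) : ℕ := n.factorization.prod fun p e => p ^ (m * (e / m))

/-- All prime factors of `n` lie in `A`. -/
def PrimeSupported (A : Set ℕ) (n : ℕ) : Prop := ∀ p : ℕ, p.Prime → p ∣ n → p ∈ A

/-- Every prime factor of `s` divides `n` to the power at least `m`. -/
def DividesPow (m n s : ℕ) : Prop := ∀ p : ℕ, p.Prime → p ∣ s → p ^ m ∣ n

/-- `1 / n` if all prime factors of `n` lie in `A`, and `0` otherwise. -/
noncomputable def harmonicWeight (A : Set ℕ) (n : ℕ) : ℝ :=
  if PrimeSupported A n then (1 : ℝ) / n else 0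

/-- The term `1 / (n * s)`, restricted to the pairs `(n, s)` for which `n` arises from `n * s`
by truncating all exponents at `m`. -/
noncomputable def pairWeight (m : ℕ) (A : Set ℕ) (n s : ℕ) : ℝ :=
  if PrimeSupported A n ∧ KFree (m + 1) n ∧ DividesPow m n s then (1 : ℝ) / (n * s : ℕ) else 0

/-- Truncate all exponents in the prime factorization of `n` at `m`. -/
noncomputable def truncatePow (m n : ℕ) : ℕ :=
  (n.factorization.mapRange (min m) (Nat.min_zero m)).prod fun p e => p ^ e

theorem harmonicWeight_nonneg (A : Set ℕ) (n : ℕ) : 0 ≤ harmonicWeight A n := by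
  unfold harmonicWeight; split_ifs <;> positivity

theorem harmonicWeight_le (A : Set ℕ) (n : ℕ) : harmonicWeight A n ≤ 1 / n := by
  unfold harmonicWeight; split_ifs
  · exact le_rfl
  · positivity

theorem pairWeight_nonneg (m : ℕ) (A : Set ℕ) (n s : ℕ) : 0 ≤ pairWeight m A n s := by
  unfold pairWeight; split_ifs <;> positivity

theorem pairWeight_le (m : ℕ) (A : Set ℕ) (n s : ℕ) :
    pairWeight m A n s ≤ harmonicWeight A n / s := by
  unfold pairWeight harmonicWeight
  split_ifs with h h' h'
  · push_cast; rw [div_div]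
  · exact absurd h.1 h'
  · positivity
  · simp

theorem one_le_sum_harmonicWeight (A : Set ℕ) {N : ℕ} (hN : 1 ≤ N) :
    1 ≤ ∑ n ∈ Finset.Icc 1 N, harmonicWeight A n := by
  have h1 : harmonicWeight A 1 = 1 := by
    unfold harmonicWeight
    rw [if_pos]
    · simp
    · intro p hp h
      exact absurd (Nat.dvd_one.mp h) hp.one_lt.ne'
  rw [← h1]
  exact Finset.single_le_sum (fun n _ => harmonicWeight_nonneg A n) (by simp [hN])

/-! ### Truncation of exponents -/

theorem factorization_truncatePow (m n p : ℕ) :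
    (truncatePow m n).factorization p = min m (n.factorization p) := by
  unfold truncatePow
  rw [Nat.prod_pow_factorization_eq_self]
  · rfl
  · intro q hq
    exact Nat.prime_of_mem_primeFactors
      (Finsupp.support_mapRange (f := min m) (hf := Nat.min_zero m) hq)

theorem truncatePow_ne_zero (m n : ℕ) : truncatePow m n ≠ 0 := by
  unfold truncatePow
  refine Finset.prod_ne_zero_iff.mpr fun q hq => pow_ne_zero _ ?_
  exact (Nat.prime_of_mem_primeFactors
      (Finsupp.support_mapRange (f := min m) (hf := Nat.min_zero m) hq)).ne_zero

theorem truncatePow_dvd {m n : ℕ} (hn : n ≠ 0) : truncatePow m n ∣ n := by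
  rw [← Nat.factorization_le_iff_dvd (truncatePow_ne_zero m n) hn]
  intro p
  rw [factorization_truncatePow]
  exact min_le_right _ _

theorem kFree_truncatePow (m n : ℕ) : KFree (m + 1) (truncatePow m n) := by
  intro p hp h
  rw [hp.pow_dvd_iff_le_factorization (truncatePow_ne_zero m n), factorization_truncatePow] at h
  omega

theorem dividesPow_truncatePow {m n s : ℕ} (hn : n ≠ 0) (h : truncatePow m n * s = n) :
    DividesPow m (truncatePow m n) s := by
  intro p hp hs
  have hs0 : s ≠ 0 := by rintro rfl; exact hn (by rw [← h, mul_zero])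
  have h1 := congrArg (fun x => x.factorization p) h
  simp only [Nat.factorization_mul (truncatePow_ne_zero m n) hs0, Finsupp.add_apply] at h1
  have h2 := hp.factorization_pos_of_dvd hs0 hs
  rw [hp.pow_dvd_iff_le_factorization (truncatePow_ne_zero m n)]
  rw [factorization_truncatePow] at h1 ⊢
  omega

theorem truncatePow_mul {m n s : ℕ} (hn : n ≠ 0) (hs : s ≠ 0) (hfree : KFree (m + 1) n)
    (hdiv : DividesPow m n s) : truncatePow m (n * s) = n := by
  refine Nat.eq_of_factorization_eq (truncatePow_ne_zero _ _) hn fun p => ?_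
  rw [factorization_truncatePow, Nat.factorization_mul hn hs, Finsupp.add_apply]
  by_cases hp : p.Prime
  · have h1 := hfree p hp
    rw [hp.pow_dvd_iff_le_factorization hn] at h1
    by_cases h : p ∣ s
    · have h2 := hdiv p hp h
      rw [hp.pow_dvd_iff_le_factorization hn] at h2
      omega
    · rw [Nat.factorization_eq_zero_of_not_dvd h]
      omega
  · simp [Nat.factorization_eq_zero_of_not_prime _ hp]

/-- Each positive integer is uniquely `n * s`, where `n` is its truncation. -/
theorem sum_harmonicWeight_eq {m : ℕ} (hm : 1 ≤ m) (A : Set ℕ) (N : ℕ) :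
    ∑ n ∈ Finset.Icc 1 N, harmonicWeight A n =
      ∑ s ∈ Finset.Icc 1 N, ∑ n ∈ Finset.Icc 1 N,
        if n * s ≤ N then pairWeight m A n s else 0 := by
  unfold harmonicWeight pairWeight
  simp only [← ite_and]
  rw [← Finset.sum_product', ← Finset.sum_filter, ← Finset.sum_filter]
  refine Finset.sum_nbij' (fun n => (n / truncatePow m n, truncatePow m n))
    (fun x => x.2 * x.1) ?_ ?_ ?_ ?_ ?_
  · intro n hn
    simp only [Finset.mem_filter, Finset.mem_Icc, Finset.mem_product] at hn ⊢
    obtain ⟨⟨h1, hN⟩, hA⟩ := hn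
    have hn0 : n ≠ 0 := by omega
    have hd := truncatePow_dvd (m := m) hn0
    have hmul := Nat.mul_div_cancel' hd
    have hle := Nat.le_of_dvd (by omega) hd
    refine ⟨⟨⟨Nat.div_pos hle (Nat.pos_of_ne_zero (truncatePow_ne_zero m n)),
      (Nat.div_le_self _ _).trans hN⟩, Nat.pos_of_ne_zero (truncatePow_ne_zero m n),
      hle.trans hN⟩, by rw [hmul]; exact hN, fun p hp h => hA p hp (h.trans hd),
      kFree_truncatePow m n, dividesPow_truncatePow hn0 hmul⟩
  · rintro ⟨s, n⟩ h
    simp only [Finset.mem_filter, Finset.mem_Icc, Finset.mem_product] at h ⊢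
    obtain ⟨⟨⟨hs, -⟩, hn, -⟩, hN, hA, -, hdiv⟩ := h
    refine ⟨⟨Nat.mul_pos hn hs, hN⟩, fun p hp h => ?_⟩
    rcases (hp.dvd_mul).mp h with h | h
    · exact hA p hp h
    · exact hA p hp ((dvd_pow_self p (by omega)).trans (hdiv p hp h))
  · intro n hn
    simp only [Finset.mem_filter, Finset.mem_Icc] at hn
    exact Nat.mul_div_cancel' (truncatePow_dvd (by omega))
  · rintro ⟨s, n⟩ h
    simp only [Finset.mem_filter, Finset.mem_Icc, Finset.mem_product] at h ⊢
    obtain ⟨⟨⟨hs, -⟩, hn, -⟩, hN, hA, hfree, hdiv⟩ := h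
    rw [truncatePow_mul (by omega) (by omega) hfree hdiv, Nat.mul_div_cancel_left _ (by omega)]
  · intro n hn
    simp only [Finset.mem_filter, Finset.mem_Icc] at hn
    simp only [Nat.mul_div_cancel' (truncatePow_dvd (m := m) (n := n) (by omega))]

/-! ### The totient weight as a sum over a fibre of truncation -/

theorem freePart_mul_powerPart (m : ℕ) {n : ℕ} (hn : n ≠ 0) :
    freePart m n * powerPart m n = n := by
  unfold freePart powerPart
  rw [← Finsupp.prod_mul]
  conv_rhs => rw [← Nat.prod_factorization_pow_eq_self hn]
  refine Finsupp.prod_congr fun p _ => ?_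
  rw [← pow_add, Nat.mod_add_div]

theorem primeFactors_powerPart {m n : ℕ} (hm : 1 ≤ m) (hn : n ≠ 0) :
    (powerPart m n).primeFactors = n.primeFactors.filter fun p => p ^ m ∣ n := by
  have h0 : powerPart m n ≠ 0 :=
    right_ne_zero_of_mul ((freePart_mul_powerPart m hn).symm ▸ hn)
  ext q
  simp only [Nat.mem_primeFactors, Finset.mem_filter]
  constructor
  · rintro ⟨hq, hd, -⟩
    unfold powerPart Finsupp.prod at hd
    obtain ⟨p, hp, hd⟩ := (hq.prime.dvd_finsetProd_iff _).mp hd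
    have hpp : p.Prime := Nat.prime_of_mem_primeFactors hp
    have hqp : q = p := (Nat.prime_dvd_prime_iff_eq hq hpp).mp (hq.dvd_of_dvd_pow hd)
    subst hqp
    refine ⟨⟨hq, Nat.dvd_of_mem_primeFactors hp, hn⟩, ?_⟩
    rw [hq.pow_dvd_iff_le_factorization hn]
    by_contra! hlt
    beta_reduce at hd
    rw [Nat.div_eq_of_lt hlt, mul_zero, pow_zero] at hd
    exact hq.one_lt.ne' (Nat.dvd_one.mp hd)
  · rintro ⟨⟨hq, hqn, -⟩, hd⟩
    refine ⟨hq, ?_, h0⟩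
    rw [hq.pow_dvd_iff_le_factorization hn] at hd
    have hmem : q ∈ n.factorization.support := by
      rw [Nat.support_factorization]; exact Nat.mem_primeFactors.mpr ⟨hq, hqn, hn⟩
    have hpos : 0 < n.factorization q / m := Nat.div_pos hd hm
    refine dvd_trans ?_ (Finset.dvd_prod_of_mem (fun p => p ^ (m * (n.factorization p / m))) hmem)
    exact dvd_pow_self q (by positivity)

theorem hasSum_pairWeight {m n : ℕ} (hm : 1 ≤ m) (A : Set ℕ) (hn : n ≠ 0) :
    HasSum (pairWeight m A n)
      (if PrimeSupported A n ∧ KFree (m + 1) n then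
        (1 : ℝ) / ((freePart m n * Nat.totient (powerPart m n) : ℕ) : ℝ) else 0) := by
  split_ifs with h
  swap
  · convert hasSum_zero using 1
    ext s
    unfold pairWeight
    rw [if_neg]
    exact fun h' => h ⟨h'.1, h'.2.1⟩
  set P := n.primeFactors.filter fun p => p ^ m ∣ n with hP
  let f : ℕ →* ℝ :=
    { toFun := fun s => (s : ℝ)⁻¹
      map_one' := by simp
      map_mul' := fun a b => by push_cast; rw [mul_inv] }
  have hf : ∀ {p : ℕ}, p.Prime → ‖f p‖ < 1 := fun {p} hp => by
    change ‖(p : ℝ)⁻¹‖ < 1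
    rw [norm_inv, Real.norm_natCast]
    exact inv_lt_one_of_one_lt₀ (by exact_mod_cast hp.one_lt)
  have hs := (EulerProduct.summable_and_hasSum_factoredNumbers_prod_filter_prime_geometric hf P).2
  have hPp : P.filter Nat.Prime = P :=
    Finset.filter_true_of_mem fun p hp =>
      Nat.prime_of_mem_primeFactors (Finset.mem_of_mem_filter p hp)
  rw [hPp] at hs
  have hs' := (hasSum_subtype_iff_indicator (f := f) (s := Nat.factoredNumbers P)).mp hs
  have hfun : pairWeight m A n =
      fun s => (n : ℝ)⁻¹ * (Nat.factoredNumbers P : Set ℕ).indicator f s := by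
    ext s
    have hiff : s ∈ Nat.factoredNumbers P ↔ DividesPow m n s := by
      rw [Nat.mem_factoredNumbers']
      refine forall₃_congr fun p hp _ => ?_
      rw [hP, Finset.mem_filter, Nat.mem_primeFactors]
      exact ⟨fun h => h.2, fun h => ⟨⟨hp, (dvd_pow_self p (by omega)).trans h, hn⟩, h⟩⟩
    unfold pairWeight
    by_cases hd : DividesPow m n s
    · rw [if_pos ⟨h.1, h.2, hd⟩, Set.indicator_of_mem (hiff.mpr hd)]
      change _ = (n : ℝ)⁻¹ * (s : ℝ)⁻¹
      push_cast
      rw [one_div, mul_inv]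
    · rw [if_neg (fun h' => hd h'.2.2), Set.indicator_of_notMem (fun h' => hd (hiff.mp h')),
        mul_zero]
  have hval : (1 : ℝ) / ((freePart m n * Nat.totient (powerPart m n) : ℕ) : ℝ) =
      (n : ℝ)⁻¹ * ∏ p ∈ P, (1 - f p)⁻¹ := by
    have htot := Nat.totient_eq_mul_prod_factors (powerPart m n)
    rw [primeFactors_powerPart hm hn, ← hP] at htot
    have hcast : ((powerPart m n).totient : ℝ) = powerPart m n * ∏ p ∈ P, (1 - (p : ℝ)⁻¹) := by
      have := congrArg (fun x : ℚ => (x : ℝ)) htot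
      simpa using this
    have hmul : (freePart m n : ℝ) * powerPart m n = n := by
      exact_mod_cast freePart_mul_powerPart m hn
    push_cast
    rw [hcast, ← mul_assoc, hmul, one_div, mul_inv, Finset.prod_inv_distrib]
    rfl
  rw [hfun, hval]
  exact hs'.mul_left _

/-! ### Slow variation of the harmonic sum -/

theorem tendsto_tail_div_sum_harmonicWeight (A : Set ℕ) (s : ℕ) :
    Tendsto (fun N : ℕ => (∑ n ∈ Finset.Icc 1 N, if N < n * s then harmonicWeight A n else 0) /
      ∑ n ∈ Finset.Icc 1 N, harmonicWeight A n) atTop (nhds 0) := by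
  have hnum : ∀ N : ℕ, 0 ≤ ∑ n ∈ Finset.Icc 1 N, if N < n * s then harmonicWeight A n else 0 :=
    fun N => Finset.sum_nonneg fun n _ => by
      split_ifs
      exacts [harmonicWeight_nonneg A n, le_rfl]
  have hmono : Monotone fun N : ℕ => ∑ n ∈ Finset.Icc 1 N, harmonicWeight A n := fun a b hab =>
    Finset.sum_le_sum_of_subset_of_nonneg (Finset.Icc_subset_Icc_right hab)
      fun n _ _ => harmonicWeight_nonneg A n
  rcases tendsto_atTop_of_monotone hmono with h | ⟨l, hl⟩
  · refine squeeze_zero (fun N => div_nonneg (hnum N)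
      (Finset.sum_nonneg fun n _ => harmonicWeight_nonneg A n)) (fun N => ?_)
      (h.const_div_atTop (s : ℝ))
    refine div_le_div_of_nonneg_right ?_ (Finset.sum_nonneg fun n _ => harmonicWeight_nonneg A n)
    rcases N.eq_zero_or_pos with rfl | hN
    · simp
    have hN' : (0 : ℝ) < N := by exact_mod_cast hN
    calc _ ≤ ∑ n ∈ Finset.Icc 1 N, (s : ℝ) / N := by
          refine Finset.sum_le_sum fun n hn => ?_
          split_ifs with hlt
          · refine (harmonicWeight_le A n).trans ?_
            have hn0 : (0 : ℝ) < n := by exact_mod_cast (Finset.mem_Icc.mp hn).1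
            rw [div_le_div_iff₀ hn0 hN', one_mul, mul_comm]
            exact_mod_cast hlt.le
          · positivity
      _ = s := by
          rw [Finset.sum_const, Nat.card_Icc, nsmul_eq_mul, Nat.add_sub_cancel]
          field_simp
  · have htail : Tendsto
        (fun N : ℕ => ∑ n ∈ Finset.Icc 1 N, if N < n * s then harmonicWeight A n else 0)
        atTop (nhds 0) := by
      rcases s.eq_zero_or_pos with rfl | hs
      · simp
      have hdiv : Tendsto (fun N : ℕ => N / s) atTop atTop :=
        Nat.tendsto_div_const_atTop hs.ne'
      have hsub := hl.sub (hl.comp hdiv)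
      rw [sub_self] at hsub
      refine hsub.congr fun N => ?_
      have hsplit : ∑ n ∈ Finset.Icc 1 (N / s), harmonicWeight A n =
          ∑ n ∈ Finset.Icc 1 N, if N < n * s then 0 else harmonicWeight A n := by
        simp only [← ite_not (N < _)]
        rw [← Finset.sum_filter]
        refine Finset.sum_congr ?_ fun _ _ => rfl
        ext n
        simp only [Finset.mem_filter, Finset.mem_Icc, not_lt, ← Nat.le_div_iff_mul_le hs]
        have := Nat.div_le_self N s
        omega
      simp only [Function.comp_apply]
      rw [hsplit, ← Finset.sum_sub_distrib]
      refine Finset.sum_congr rfl fun n _ => ?_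
      split_ifs <;> simp
    refine squeeze_zero' (Eventually.of_forall fun N => div_nonneg (hnum N)
      (Finset.sum_nonneg fun n _ => harmonicWeight_nonneg A n)) ?_ htail
    filter_upwards [eventually_ge_atTop 1] with N hN
    exact div_le_self (hnum N) (one_le_sum_harmonicWeight A hN)

/-! ### A uniform summable bound -/

theorem sum_harmonicWeight_dvd_le (A : Set ℕ) (N : ℕ) {r : ℕ} (hr : 0 < r) :
    ∑ n ∈ Finset.Icc 1 N, (if r ∣ n then harmonicWeight A n else 0) ≤
      (∑ n ∈ Finset.Icc 1 N, harmonicWeight A n) / r := by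
  rw [← Finset.sum_filter]
  calc _ ≤ ∑ n ∈ (Finset.Icc 1 N).image (r * ·), harmonicWeight A n := by
        refine Finset.sum_le_sum_of_subset_of_nonneg ?_ fun n _ _ => harmonicWeight_nonneg A n
        intro n hn
        simp only [Finset.mem_filter, Finset.mem_Icc] at hn
        obtain ⟨⟨h1, hN⟩, u, rfl⟩ := hn
        refine Finset.mem_image.mpr ⟨u, Finset.mem_Icc.mpr ⟨?_, ?_⟩, rfl⟩
        · exact Nat.pos_of_mul_pos_left h1
        · exact (Nat.le_mul_of_pos_left u hr).trans hN
    _ = ∑ u ∈ Finset.Icc 1 N, harmonicWeight A (r * u) :=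
        Finset.sum_image fun a _ b _ h => Nat.eq_of_mul_eq_mul_left hr h
    _ ≤ _ := by
        rw [Finset.sum_div]
        refine Finset.sum_le_sum fun u _ => ?_
        unfold harmonicWeight
        split_ifs with h h' h'
        · push_cast; rw [div_div, mul_comm]
        · exact absurd (fun p hp hd => h p hp (hd.mul_left r)) h'
        · positivity
        · simp

theorem summable_one_div_mul_prod_primeFactors :
    Summable fun s : ℕ => (1 : ℝ) / ((s : ℝ) * ((∏ p ∈ s.primeFactors, p : ℕ) : ℝ)) := by
  choose a b hab ha using Nat.sq_mul_squarefree
  have hsq : Summable fun n : ℕ => (1 : ℝ) / (n : ℝ) ^ 2 := Real.summable_one_div_nat_pow.mpr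
    one_lt_two
  have hprod := hsq.mul_of_nonneg hsq (fun n => by positivity) (fun n => by positivity)
  have hinj : Function.Injective fun s => (a s, b s) := by
    intro s t hst
    simp only [Prod.mk.injEq] at hst
    rw [← hab s, ← hab t, hst.1, hst.2]
  refine Summable.of_nonneg_of_le (fun s => by positivity) (fun s => ?_)
    (hprod.comp_injective hinj)
  rcases s.eq_zero_or_pos with rfl | hs
  · simp only [Function.comp_apply, Nat.cast_zero, zero_mul, div_zero]
    positivity
  have hle : a s ≤ ∏ p ∈ s.primeFactors, p := by
    rw [← Nat.prod_primeFactors_of_squarefree (ha s)]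
    refine Finset.prod_le_prod_of_subset_of_one_le'
      (Nat.primeFactors_mono (Dvd.intro_left _ (hab s)) hs.ne') fun p hp _ => ?_
    exact (Nat.prime_of_mem_primeFactors hp).one_lt.le
  have ha0 : 0 < a s := Nat.pos_of_ne_zero (ha s).ne_zero
  have hb0 : 0 < b s := Nat.pos_of_ne_zero fun h => hs.ne' (by rw [← hab s, h]; simp)
  simp only [Function.comp_apply]
  rw [div_mul_div_comm, one_mul]
  refine one_div_le_one_div_of_le (by positivity) ?_
  have hs' : (s : ℝ) = (b s : ℝ) ^ 2 * a s := by exact_mod_cast (hab s).symm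
  have hle' : (a s : ℝ) ≤ ((∏ p ∈ s.primeFactors, p : ℕ) : ℝ) := by exact_mod_cast hle
  calc (a s : ℝ) ^ 2 * (b s : ℝ) ^ 2 = s * a s := by rw [hs']; ring
    _ ≤ _ := by gcongr

theorem sum_pairWeight_div_le {m : ℕ} (hm : 1 ≤ m) (A : Set ℕ) (N s : ℕ) :
    (∑ n ∈ Finset.Icc 1 N, if N < n * s then pairWeight m A n s else 0) /
      (∑ n ∈ Finset.Icc 1 N, harmonicWeight A n) ≤
      1 / ((s : ℝ) * ((∏ p ∈ s.primeFactors, p : ℕ) : ℝ)) := by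
  have hr : 0 < ∏ p ∈ s.primeFactors, p :=
    Finset.prod_pos fun p hp => (Nat.prime_of_mem_primeFactors hp).pos
  refine div_le_of_le_mul₀ (Finset.sum_nonneg fun n _ => harmonicWeight_nonneg A n)
    (by positivity) ?_
  calc _ ≤ ∑ n ∈ Finset.Icc 1 N,
        (if (∏ p ∈ s.primeFactors, p) ∣ n then harmonicWeight A n else 0) / s := by
        refine Finset.sum_le_sum fun n _ => ?_
        by_cases hd : DividesPow m n s
        · have hdvd : (∏ p ∈ s.primeFactors, p) ∣ n :=
            Finset.prod_primes_dvd n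
              (fun p hp => (Nat.prime_of_mem_primeFactors hp).prime)
              (fun p hp => (dvd_pow_self p (by omega)).trans
                (hd p (Nat.prime_of_mem_primeFactors hp) (Nat.dvd_of_mem_primeFactors hp)))
          rw [if_pos hdvd]
          split_ifs
          · exact pairWeight_le m A n s
          · exact div_nonneg (harmonicWeight_nonneg A n) (by positivity)
        · have h0 : pairWeight m A n s = 0 := if_neg fun h => hd h.2.2
          rw [h0, ite_self]
          refine div_nonneg ?_ (by positivity)
          split_ifs
          exacts [harmonicWeight_nonneg A n, le_rfl]
    _ ≤ ((∑ n ∈ Finset.Icc 1 N, harmonicWeight A n) / (∏ p ∈ s.primeFactors, p : ℕ)) / s := by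
        rw [← Finset.sum_div]
        exact div_le_div_of_nonneg_right (sum_harmonicWeight_dvd_le A N hr) (by positivity)
    _ = _ := by rw [div_div, mul_comm (s : ℝ), one_div, div_eq_mul_inv, mul_comm]

theorem tendsto_tsum_pairWeight_div {m : ℕ} (hm : 1 ≤ m) (A : Set ℕ) :
    Tendsto (fun N : ℕ => ∑' s : ℕ,
      (∑ n ∈ Finset.Icc 1 N, if N < n * s then pairWeight m A n s else 0) /
        (∑ n ∈ Finset.Icc 1 N, harmonicWeight A n)) atTop (nhds 0) := by
  have hnonneg : ∀ N s : ℕ,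
      0 ≤ (∑ n ∈ Finset.Icc 1 N, if N < n * s then pairWeight m A n s else 0) /
        (∑ n ∈ Finset.Icc 1 N, harmonicWeight A n) := fun N s => by
    refine div_nonneg (Finset.sum_nonneg fun n _ => ?_)
      (Finset.sum_nonneg fun n _ => harmonicWeight_nonneg A n)
    split_ifs
    exacts [pairWeight_nonneg m A n s, le_rfl]
  suffices h : Tendsto (fun N : ℕ => ∑' s : ℕ,
      (∑ n ∈ Finset.Icc 1 N, if N < n * s then pairWeight m A n s else 0) /
        (∑ n ∈ Finset.Icc 1 N, harmonicWeight A n)) atTop (nhds (∑' _ : ℕ, (0 : ℝ))) by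
    rwa [tsum_zero] at h
  refine tendsto_tsum_of_dominated_convergence summable_one_div_mul_prod_primeFactors
    (fun s => ?_) (Eventually.of_forall fun N s => ?_)
  · refine squeeze_zero (fun N => hnonneg N s) (fun N => ?_)
      (tendsto_tail_div_sum_harmonicWeight A s)
    refine div_le_div_of_nonneg_right (Finset.sum_le_sum fun n _ => ?_)
      (Finset.sum_nonneg fun n _ => harmonicWeight_nonneg A n)
    split_ifs with h
    · refine (pairWeight_le m A n s).trans (div_le_self (harmonicWeight_nonneg A n) ?_)
      exact_mod_cast Nat.pos_of_ne_zero fun h0 => by simp [h0] at h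
    · exact le_rfl
  · rw [Real.norm_of_nonneg (hnonneg N s)]
    exact sum_pairWeight_div_le hm A N s

theorem sum_totient_div_sum_harmonicWeight {m : ℕ} (hm : 1 ≤ m) (A : Set ℕ) {N : ℕ}
    (hN : 1 ≤ N) :
    (∑ n ∈ Finset.Icc 1 N, if PrimeSupported A n ∧ KFree (m + 1) n then
        (1 : ℝ) / ((freePart m n * Nat.totient (powerPart m n) : ℕ) : ℝ) else 0) /
      (∑ n ∈ Finset.Icc 1 N, harmonicWeight A n) =
    1 + ∑' s : ℕ, (∑ n ∈ Finset.Icc 1 N, if N < n * s then pairWeight m A n s else 0) /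
        (∑ n ∈ Finset.Icc 1 N, harmonicWeight A n) := by
  have hpos := one_le_sum_harmonicWeight A hN
  have htotal := hasSum_sum fun n (hn : n ∈ Finset.Icc 1 N) =>
    hasSum_pairWeight hm A (n := n) (by have := (Finset.mem_Icc.mp hn).1; omega)
  have hsmall : HasSum (fun s => ∑ n ∈ Finset.Icc 1 N,
      if n * s ≤ N then pairWeight m A n s else 0) (∑ n ∈ Finset.Icc 1 N, harmonicWeight A n) := by
    rw [sum_harmonicWeight_eq hm A N]
    refine hasSum_sum_of_ne_finset_zero fun s hs => Finset.sum_eq_zero fun n hn => ?_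
    rcases s.eq_zero_or_pos with rfl | hs0
    · simp [pairWeight]
    · refine if_neg fun h => hs (Finset.mem_Icc.mpr ⟨hs0, ?_⟩)
      exact (Nat.le_mul_of_pos_left s (Finset.mem_Icc.mp hn).1).trans h
  have hlarge := htotal.sub hsmall
  have hfun : (fun s => ∑ n ∈ Finset.Icc 1 N, pairWeight m A n s -
      ∑ n ∈ Finset.Icc 1 N, if n * s ≤ N then pairWeight m A n s else 0) =
      fun s => ∑ n ∈ Finset.Icc 1 N, if N < n * s then pairWeight m A n s else 0 := by
    ext s
    rw [← Finset.sum_sub_distrib]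
    refine Finset.sum_congr rfl fun n _ => ?_
    rcases lt_or_ge N (n * s) with h | h
    · rw [if_pos h, if_neg h.not_ge, sub_zero]
    · rw [if_neg h.not_gt, if_pos h, sub_self]
  rw [hfun] at hlarge
  rw [tsum_div_const, hlarge.tsum_eq, sub_div, div_self (by positivity)]
  ring

/-- **Corollary 2.** For `k ≥ 2` and a set `A` of primes with natural density `θ ∈ (0,1]` within
the primes, the sum over `k`-free `n ≤ N` with prime factors in `A` of
`1 / (n_{(k-1)-free} · φ(n_{(k-1)-power}))` is asymptotic, as `N → ∞`, to the sum of `1/n`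
over `n ≤ N` with prime factors in `A`. -/
theorem totient_harmonic_asymp
    (k : ℕ) (hk : 2 ≤ k)
    (A : Set ℕ) (hA : ∀ p ∈ A, Nat.Prime p)
    (θ : ℝ) (hθ : θ ∈ Set.Ioc (0 : ℝ) 1)
    (hdens : Tendsto
      (fun N : ℕ => ((A ∩ Set.Icc 1 N).ncard : ℝ) / (({p : ℕ | Nat.Prime p} ∩ Set.Icc 1 N).ncard : ℝ))
      atTop (nhds θ)) :
    Tendsto
      (fun N : ℕ =>
        (∑ n ∈ Finset.Icc 1 N,
          if (∀ p : ℕ, p.Prime → p ∣ n → p ∈ A) ∧ KFree k n then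
            (1 : ℝ) / ((freePart (k - 1) n * Nat.totient (powerPart (k - 1) n) : ℕ) : ℝ)
          else 0) /
        ∑ n ∈ Finset.Icc 1 N,
          if ∀ p : ℕ, p.Prime → p ∣ n → p ∈ A then (1 : ℝ) / (n : ℝ) else 0)
      atTop (nhds 1) := by
  obtain ⟨m, rfl⟩ : ∃ m, k = m + 1 := ⟨k - 1, by omega⟩
  have hm : 1 ≤ m := by omega
  have h := (tendsto_tsum_pairWeight_div hm A).const_add 1
  rw [add_zero] at h
  refine h.congr' ?_
  filter_upwards [eventually_ge_atTop 1] with N hN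
  exact (sum_totient_div_sum_harmonicWeight hm A hN).symm
end

section
/- Let A be an infinite subset of the prime numbers whose natural density in the primes exists and equals θ ∈ (0,1], and let p_{1;A} < p_{2;A} < ⋯ be the enumeration of A in increasing order. Then p_{j;A} ∼ (j · log j)/θ as j → ∞, i.e. θ · p_{j;A} / (j · log j) tends to 1. -/
open Filter

section

open MeasureTheory Topology

theorem LSeries_vonMangoldt_eq_add {s : ℂ} (hs : 1 < s.re) :
    LSeries (fun n ↦ (ArithmeticFunction.vonMangoldt n : ℂ)) s =
      ArithmeticFunction.vonMangoldt.LFunctionResidueClassAux (0 : ZMod 1) s + 1 / (s - 1) := by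
  have h := ArithmeticFunction.vonMangoldt.eqOn_LFunctionResidueClassAux (q := 1) (a := 0)
    (isUnit_of_subsingleton 0) (show s ∈ {s : ℂ | 1 < s.re} from hs)
  simp only [Nat.totient_one, Nat.cast_one, inv_one] at h
  rw [h, sub_add_cancel]
  congr! 3 with n
  simp [ArithmeticFunction.vonMangoldt.residueClass, Set.indicator, Subsingleton.elim _ (0 : ZMod 1)]

theorem LSeries_vonMangoldt_eq_mul_integral {s : ℂ} (hs : 1 < s.re) :
    LSeries (fun n ↦ (ArithmeticFunction.vonMangoldt n : ℂ)) s =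
      s * ∫ t in Set.Ioi (1 : ℝ), (Chebyshev.psi t : ℂ) * (t : ℂ) ^ (-(s + 1)) := by
  have hpsi (n : ℕ) : ∑ k ∈ Finset.Icc 1 n, ArithmeticFunction.vonMangoldt k = Chebyshev.psi n := by
    simp [Chebyshev.psi, ← Finset.Icc_add_one_left_eq_Ioc]
  rw [LSeries_eq_mul_integral_of_nonneg _ zero_le_one hs _
    fun _ ↦ ArithmeticFunction.vonMangoldt_nonneg]
  · congr! 4 with t
    rw [Chebyshev.psi_eq_psi_coe_floor, ← hpsi]
    push_cast
    rfl
  · simp_rw [hpsi, Real.rpow_one]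
    refine Asymptotics.IsBigO.of_bound (Real.log 4 + 4) (Eventually.of_forall fun n ↦ ?_)
    rw [Real.norm_of_nonneg (Chebyshev.psi_nonneg _), Real.norm_of_nonneg (by positivity)]
    exact Chebyshev.psi_le_const_mul_self (by positivity)

/-- The normalised Chebyshev function `ψ(eᵘ) e⁻ᵘ`. -/
noncomputable def psiExp (u : ℝ) : ℝ := Chebyshev.psi (Real.exp u) * Real.exp (-u)

theorem psiExp_nonneg (u : ℝ) : 0 ≤ psiExp u :=
  mul_nonneg (Chebyshev.psi_nonneg _) (Real.exp_pos _).le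

theorem psiExp_le (u : ℝ) : psiExp u ≤ Real.log 4 + 4 := by
  have h := Chebyshev.psi_le_const_mul_self (Real.exp_pos u).le
  calc psiExp u ≤ (Real.log 4 + 4) * Real.exp u * Real.exp (-u) := by
        unfold psiExp; gcongr
    _ = Real.log 4 + 4 := by rw [mul_assoc, ← Real.exp_add]; simp

theorem psiExp_of_nonpos {u : ℝ} (hu : u ≤ 0) : psiExp u = 0 := by
  rw [psiExp, Chebyshev.psi_eq_zero_of_le_one (Real.exp_le_one_iff.2 hu), zero_mul]

theorem measurable_psiExp : Measurable psiExp :=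
  (Chebyshev.psi_mono.measurable.comp Real.measurable_exp).mul
    (Real.measurable_exp.comp measurable_neg)

theorem psiExp_mul_exp_le {u v : ℝ} (h : u ≤ v) : psiExp u * Real.exp (-(v - u)) ≤ psiExp v := by
  rw [psiExp, mul_assoc, ← Real.exp_add, psiExp]
  have := Chebyshev.psi_mono (Real.exp_le_exp.2 h)
  rw [show -u + -(v - u) = -v by ring]
  gcongr

theorem integral_psi_mul_cpow_eq (s : ℂ) :
    ∫ t in Set.Ioi (1 : ℝ), (Chebyshev.psi t : ℂ) * (t : ℂ) ^ (-(s + 1)) =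
      ∫ u in Set.Ioi (0 : ℝ), (psiExp u : ℂ) * Complex.exp (-(s - 1) * u) := by
  have himg : Real.exp '' Set.Ioi 0 = Set.Ioi 1 := by
    rw [← Real.exp_zero]; exact Real.image_exp_Ioi 0
  rw [← himg, integral_image_eq_integral_abs_deriv_smul measurableSet_Ioi
    (fun x _ ↦ (Real.hasDerivAt_exp x).hasDerivWithinAt) Real.exp_injective.injOn]
  refine setIntegral_congr_fun measurableSet_Ioi fun u _ ↦ ?_
  simp only [abs_of_pos (Real.exp_pos u), Complex.real_smul, psiExp]
  rw [Complex.cpow_def_of_ne_zero (by simp), ← Complex.ofReal_log (Real.exp_pos u).le,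
    Real.log_exp]
  push_cast
  rw [mul_left_comm, mul_assoc, ← Complex.exp_add, ← Complex.exp_add]
  congr 2
  ring

theorem integrableOn_bounded_mul_exp {f : ℝ → ℝ} (hf : Measurable f) {M : ℝ}
    (hM : ∀ u, |f u| ≤ M) {c : ℂ} (hc : 0 < c.re) :
    IntegrableOn (fun u : ℝ ↦ (f u : ℂ) * Complex.exp (-c * u)) (Set.Ioi 0) := by
  have hexp : IntegrableOn (fun u : ℝ ↦ Complex.exp (-c * u)) (Set.Ioi 0) :=
    integrableOn_exp_mul_complex_Ioi (by simpa using hc) 0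
  refine hexp.bdd_mul (c := M) (by fun_prop) (Eventually.of_forall fun u ↦ ?_)
  simpa using hM u

theorem integral_psiExp_sub_one {s : ℂ} (hs : 1 < s.re) :
    ∫ u in Set.Ioi (0 : ℝ), ((psiExp u - 1 : ℝ) : ℂ) * Complex.exp (-(s - 1) * u) =
      (ArithmeticFunction.vonMangoldt.LFunctionResidueClassAux (0 : ZMod 1) s - 1) / s := by
  have hre : 0 < (s - 1).re := by simpa using hs
  have hs0 : s ≠ 0 := by rintro rfl; simp at hs; linarith
  have hs1 : s - 1 ≠ 0 := by intro h; simp [h] at hre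
  have h1 := integrableOn_bounded_mul_exp measurable_psiExp
    (fun u ↦ (abs_of_nonneg (psiExp_nonneg u)).trans_le (psiExp_le u)) hre
  have h2 := integrableOn_bounded_mul_exp (measurable_const (a := (1 : ℝ)))
    (fun u ↦ (abs_one (α := ℝ)).le) hre
  have h3 : ∫ u in Set.Ioi (0 : ℝ), ((1 : ℝ) : ℂ) * Complex.exp (-(s - 1) * u) = 1 / (s - 1) := by
    have := integral_exp_mul_complex_Ioi (a := -(s - 1)) (by simpa using hs) 0
    simp only [Complex.ofReal_one, one_mul]
    rw [this]
    simp only [Complex.ofReal_zero, mul_zero, Complex.exp_zero]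
    rw [div_neg, neg_div, neg_neg]
  simp only [Complex.ofReal_sub, sub_mul]
  rw [integral_sub h1 h2, h3, ← integral_psi_mul_cpow_eq]
  have := LSeries_vonMangoldt_eq_mul_integral hs
  rw [LSeries_vonMangoldt_eq_add hs] at this
  rw [eq_div_of_mul_eq hs0 ((mul_comm _ _).trans this.symm)]
  field_simp
  ring

theorem integral_mul_laplace_eq {f : ℝ → ℝ} (hf : Measurable f) {M : ℝ} (hM : ∀ u, |f u| ≤ M)
    {G : ℂ → ℂ}
    (hG : ∀ s : ℂ, 1 < s.re →
      ∫ u in Set.Ioi (0 : ℝ), (f u : ℂ) * Complex.exp (-(s - 1) * u) = G s)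
    {φ : ℝ → ℂ} (hφ : Integrable φ) (y : ℝ) {ε : ℝ} (hε : 0 < ε) :
    ∫ t : ℝ, φ t * Complex.exp (t * y * Complex.I) * G (1 + ε + t * Complex.I) =
      ∫ u in Set.Ioi (0 : ℝ), (f u : ℂ) * Complex.exp (-ε * u) *
        ∫ t : ℝ, φ t * Complex.exp (t * (y - u : ℝ) * Complex.I) := by
  have hexp : IntegrableOn (fun u : ℝ ↦ Complex.exp (-(ε : ℂ) * u)) (Set.Ioi 0) :=
    integrableOn_exp_mul_complex_Ioi (by simpa using hε) 0
  have hfe : IntegrableOn (fun u : ℝ ↦ (f u : ℂ) * Complex.exp (-(ε : ℂ) * u)) (Set.Ioi 0) :=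
    hexp.bdd_mul (c := M) (by fun_prop) (Eventually.of_forall fun u ↦ by simpa using hM u)
  have hprod : Integrable (Function.uncurry fun (t u : ℝ) ↦
      Complex.exp (t * (y - u : ℝ) * Complex.I) *
        (φ t * ((f u : ℂ) * Complex.exp (-(ε : ℂ) * u))))
      (volume.prod (volume.restrict (Set.Ioi 0))) := by
    refine (hφ.mul_prod hfe).bdd_mul (c := 1) (by fun_prop) (Eventually.of_forall fun p ↦ ?_)
    rw [← Complex.ofReal_mul, Complex.norm_exp_ofReal_mul_I]
  calc _ = ∫ t : ℝ, ∫ u in Set.Ioi (0 : ℝ), Complex.exp (t * (y - u : ℝ) * Complex.I) *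
        (φ t * ((f u : ℂ) * Complex.exp (-(ε : ℂ) * u))) := by
        congr! 2 with t
        rw [← hG _ (by simpa using hε), ← integral_const_mul]
        refine setIntegral_congr_fun measurableSet_Ioi fun u _ ↦ ?_
        have h : Complex.exp (t * y * Complex.I) *
            Complex.exp (-(1 + ε + t * Complex.I - 1) * u) =
            Complex.exp (t * (y - u : ℝ) * Complex.I) * Complex.exp (-(ε : ℂ) * u) := by
          rw [← Complex.exp_add, ← Complex.exp_add]
          push_cast
          ring_nf
        linear_combination φ t * f u * h
    _ = ∫ u in Set.Ioi (0 : ℝ), ∫ t : ℝ, Complex.exp (t * (y - u : ℝ) * Complex.I) *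
        (φ t * ((f u : ℂ) * Complex.exp (-(ε : ℂ) * u))) := integral_integral_swap hprod
    _ = _ := by
        congr! 2 with u
        rw [← integral_const_mul]
        congr! 2 with t
        ring

theorem integral_mul_laplace_eq_boundary {f : ℝ → ℝ} (hf : Measurable f) {M : ℝ}
    (hM : ∀ u, |f u| ≤ M) {G : ℂ → ℂ} (hGc : ContinuousOn G {s | 1 ≤ s.re})
    (hG : ∀ s : ℂ, 1 < s.re →
      ∫ u in Set.Ioi (0 : ℝ), (f u : ℂ) * Complex.exp (-(s - 1) * u) = G s)
    {φ : ℝ → ℂ} (hφ : Continuous φ) (hφc : HasCompactSupport φ)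
    (hK : Integrable fun v : ℝ ↦ ∫ t : ℝ, φ t * Complex.exp (t * v * Complex.I)) (y : ℝ) :
    ∫ t : ℝ, φ t * Complex.exp (t * y * Complex.I) * G (1 + t * Complex.I) =
      ∫ u in Set.Ioi (0 : ℝ), (f u : ℂ) *
        ∫ t : ℝ, φ t * Complex.exp (t * (y - u : ℝ) * Complex.I) := by
  have hφi : Integrable φ := hφ.integrable_of_hasCompactSupport hφc
  have hpos : ∀ᶠ ε : ℝ in 𝓝[>] 0, 0 < ε := self_mem_nhdsWithin
  have hlt : ∀ᶠ ε : ℝ in 𝓝[>] 0, ε ≤ 1 :=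
    nhdsWithin_le_nhds (eventually_le_nhds zero_lt_one)
  have hL : Tendsto (fun ε : ℝ ↦ ∫ t : ℝ, φ t * Complex.exp (t * y * Complex.I) *
      G (1 + ε + t * Complex.I)) (𝓝[>] 0)
      (𝓝 (∫ t : ℝ, φ t * Complex.exp (t * y * Complex.I) * G (1 + t * Complex.I))) := by
    have hc : ContinuousOn (fun p : ℝ × ℝ ↦ G (1 + p.1 + p.2 * Complex.I))
        (Set.Ici 0 ×ˢ Set.univ) := by
      refine hGc.comp (by fun_prop) fun p hp ↦ ?_
      simpa using hp.1
    obtain ⟨C, hC⟩ := ((isCompact_Icc (a := (0 : ℝ)) (b := 1)).prod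
      hφc.isCompact).exists_bound_of_continuousOn
      (hc.mono (Set.prod_mono Set.Icc_subset_Ici_self (Set.subset_univ _)))
    refine tendsto_integral_filter_of_dominated_convergence (fun t ↦ ‖φ t‖ * C) ?_ ?_
      (hφi.norm.mul_const C) (Eventually.of_forall fun t ↦ ?_)
    · filter_upwards [hpos] with ε hε
      have : Continuous fun t : ℝ ↦ G (1 + ε + t * Complex.I) :=
        continuousOn_univ.1 (hc.comp (f := fun t : ℝ ↦ (ε, t)) (by fun_prop)
          fun t _ ↦ ⟨hε.le, trivial⟩)
      exact ((hφ.mul (by fun_prop)).mul this).aestronglyMeasurable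
    · filter_upwards [hpos, hlt] with ε hε hε1
      refine Eventually.of_forall fun t ↦ ?_
      rw [norm_mul, norm_mul, ← Complex.ofReal_mul, Complex.norm_exp_ofReal_mul_I, mul_one]
      by_cases ht : t ∈ tsupport φ
      · gcongr
        exact hC (ε, t) ⟨⟨hε.le, hε1⟩, ht⟩
      · simp [image_eq_zero_of_notMem_tsupport ht]
    · refine Tendsto.const_mul _ ?_
      have h0 := (hc (0, t) ⟨le_refl (0 : ℝ), trivial⟩).tendsto
      simp only [Complex.ofReal_zero, add_zero] at h0
      refine h0.comp (tendsto_nhdsWithin_iff.2 ⟨?_, ?_⟩ :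
        Tendsto (fun ε : ℝ ↦ (ε, t)) (𝓝[>] 0) _)
      · exact (Continuous.tendsto' (by fun_prop) _ _ rfl).mono_left nhdsWithin_le_nhds
      · filter_upwards [hpos] with ε hε using ⟨hε.le, trivial⟩
  have hR : Tendsto (fun ε : ℝ ↦ ∫ u in Set.Ioi (0 : ℝ), (f u : ℂ) * Complex.exp (-ε * u) *
        ∫ t : ℝ, φ t * Complex.exp (t * (y - u : ℝ) * Complex.I)) (𝓝[>] 0)
      (𝓝 (∫ u in Set.Ioi (0 : ℝ), (f u : ℂ) *
        ∫ t : ℝ, φ t * Complex.exp (t * (y - u : ℝ) * Complex.I))) := by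
    have hK' := hK.comp_sub_left y
    refine tendsto_integral_filter_of_dominated_convergence
      (fun u ↦ M * ‖∫ t : ℝ, φ t * Complex.exp (t * (y - u : ℝ) * Complex.I)‖) ?_ ?_
      (hK'.norm.const_mul M).integrableOn (Eventually.of_forall fun u ↦ ?_)
    · exact Eventually.of_forall fun ε ↦ AEStronglyMeasurable.mul (by fun_prop)
        hK'.aestronglyMeasurable.restrict
    · filter_upwards [hpos] with ε hε
      filter_upwards [ae_restrict_mem measurableSet_Ioi] with u hu
      rw [norm_mul, norm_mul]
      gcongr
      have h1 : ‖(f u : ℂ)‖ ≤ M := by simpa using hM u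
      have h2 : ‖Complex.exp (-ε * u)‖ ≤ 1 := by
        rw [Complex.norm_exp]
        simpa using mul_nonneg hε.le (le_of_lt hu)
      nlinarith [norm_nonneg (f u : ℂ), norm_nonneg (Complex.exp (-ε * u))]
    · refine Tendsto.mul_const _ ?_
      refine (Continuous.tendsto' ?_ _ _ ?_).mono_left nhdsWithin_le_nhds
      · fun_prop
      · simp
  refine tendsto_nhds_unique hL (hR.congr' ?_)
  filter_upwards [hpos] with ε hε
  exact (integral_mul_laplace_eq hf hM hG hφi y hε).symm

theorem tendsto_integral_mul_kernel {f : ℝ → ℝ} (hf : Measurable f) {M : ℝ}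
    (hM : ∀ u, |f u| ≤ M) {G : ℂ → ℂ} (hGc : ContinuousOn G {s | 1 ≤ s.re})
    (hG : ∀ s : ℂ, 1 < s.re →
      ∫ u in Set.Ioi (0 : ℝ), (f u : ℂ) * Complex.exp (-(s - 1) * u) = G s)
    {φ : ℝ → ℂ} (hφ : Continuous φ) (hφc : HasCompactSupport φ)
    (hK : Integrable fun v : ℝ ↦ ∫ t : ℝ, φ t * Complex.exp (t * v * Complex.I)) :
    Tendsto (fun y : ℝ ↦ ∫ u in Set.Ioi (0 : ℝ), (f u : ℂ) *
      ∫ t : ℝ, φ t * Complex.exp (t * (y - u : ℝ) * Complex.I)) atTop (𝓝 0) := by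
  have hw : Tendsto (fun y : ℝ ↦ -(y / (2 * Real.pi))) atTop (cocompact ℝ) :=
    (tendsto_neg_atTop_atBot.comp
      (tendsto_id.atTop_div_const (by positivity))).mono_right atBot_le_cocompact
  refine ((Real.tendsto_integral_exp_smul_cocompact
    fun t : ℝ ↦ φ t * G (1 + t * Complex.I)).comp hw).congr fun y ↦ ?_
  rw [← integral_mul_laplace_eq_boundary hf hM hGc hG hφ hφc hK y]
  simp only [Function.comp_apply]
  congr! 2 with t
  rw [Circle.smul_def, Real.fourierChar_apply, smul_eq_mul,
    show 2 * Real.pi * -(t * -(y / (2 * Real.pi))) = t * y by field_simp; try ring]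
  push_cast
  ring
/-- The tent function supported on `[-1, 1]`. -/
noncomputable def tent (t : ℝ) : ℝ := max 0 (1 - |t|)

theorem continuous_tent : Continuous tent := by unfold tent; fun_prop

theorem hasCompactSupport_tent : HasCompactSupport tent := by
  refine HasCompactSupport.intro (isCompact_Icc (a := -1) (b := 1)) fun t ht ↦ ?_
  rw [tent, max_eq_left]
  by_contra! h
  exact ht (Set.mem_Icc.2 (abs_le.1 (by linarith)))

/-- The Fejér kernel, up to normalisation. -/
noncomputable def fejer (v : ℝ) : ℝ := 2 * (1 - Real.cos v) / v ^ 2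

theorem fejer_nonneg (v : ℝ) : 0 ≤ fejer v := by
  have := Real.cos_le_one v
  unfold fejer
  have : 0 ≤ 1 - Real.cos v := by linarith
  positivity

theorem measurable_fejer : Measurable fejer := by unfold fejer; fun_prop

theorem integrable_fejer : Integrable fejer := by
  refine (integrable_inv_one_add_sq.const_mul 5).mono' measurable_fejer.aestronglyMeasurable
    (Eventually.of_forall fun v ↦ ?_)
  rw [Real.norm_of_nonneg (fejer_nonneg v), ← div_eq_mul_inv, le_div_iff₀ (by positivity), fejer]
  rcases eq_or_ne v 0 with rfl | hv
  · simp
  have h1 := Real.one_sub_sq_div_two_le_cos (x := v)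
  have h2 := Real.neg_one_le_cos v
  rw [div_mul_eq_mul_div, div_le_iff₀ (by positivity)]
  nlinarith [sq_nonneg v]

theorem integral_fejer_pos : 0 < ∫ v, fejer v := by
  rw [integral_pos_iff_support_of_nonneg fejer_nonneg integrable_fejer]
  refine lt_of_lt_of_le ?_ (measure_mono (s := Set.Ioo 0 1) ?_)
  · simp
  · intro v hv
    have h : Real.cos v < 1 := by
      rw [← Real.cos_zero]
      exact Real.cos_lt_cos_of_nonneg_of_le_pi le_rfl (by linarith [hv.2, Real.pi_gt_three]) hv.1
    have : 0 < 1 - Real.cos v := by linarith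
    have := hv.1
    exact (show 0 < fejer v by unfold fejer; positivity).ne'

theorem integral_tent_mul_exp {v : ℝ} (hv : v ≠ 0) :
    ∫ t : ℝ, (tent t : ℂ) * Complex.exp (t * v * Complex.I) = fejer v := by
  set c : ℂ := v * Complex.I with hc
  have hc0 : c ≠ 0 := by simp [hc, hv]
  have hcont : Continuous fun t : ℝ ↦ (tent t : ℂ) * Complex.exp (t * v * Complex.I) := by
    have := continuous_tent
    fun_prop
  rw [← intervalIntegral.integral_eq_integral_of_support_subset (a := -1) (b := 1),
    ← intervalIntegral.integral_add_adjacent_intervals (b := 0)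
      (hcont.intervalIntegrable _ _) (hcont.intervalIntegrable _ _)]
  · have hexp (x : ℝ) : HasDerivAt (fun t : ℝ ↦ Complex.exp (t * c)) (Complex.exp (x * c) * c) x := by
      simpa using ((hasDerivAt_id (x : ℂ)).mul_const c).cexp.comp_ofReal
    have hid (x : ℝ) : HasDerivAt (fun t : ℝ ↦ (t : ℂ)) 1 x := (hasDerivAt_id (x : ℂ)).comp_ofReal
    have h1 : ∫ t in (-1 : ℝ)..0, (tent t : ℂ) * Complex.exp (t * v * Complex.I) =
        1 / c - 1 / c ^ 2 + Complex.exp (-c) / c ^ 2 := by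
      rw [intervalIntegral.integral_congr (g := fun t : ℝ ↦ (1 + t : ℂ) * Complex.exp (t * c)),
        intervalIntegral.integral_eq_sub_of_hasDerivAt
          (f := fun t : ℝ ↦ (1 + t : ℂ) * Complex.exp (t * c) / c - Complex.exp (t * c) / c ^ 2)]
      · simp
      · intro x _
        convert! ((((hid x).const_add 1).mul (hexp x)).div_const c).sub
          ((hexp x).div_const (c ^ 2)) using 1
        field_simp
        ring
      · exact Continuous.intervalIntegrable (by fun_prop) _ _
      · intro t ht
        rw [Set.uIcc_of_le (by norm_num)] at ht
        simp only [tent]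
        rw [abs_of_nonpos ht.2, max_eq_right (by linarith [ht.1])]
        push_cast
        rw [hc]
        ring_nf
    have h2 : ∫ t in (0 : ℝ)..1, (tent t : ℂ) * Complex.exp (t * v * Complex.I) =
        Complex.exp c / c ^ 2 - 1 / c - 1 / c ^ 2 := by
      rw [intervalIntegral.integral_congr (g := fun t : ℝ ↦ (1 - t : ℂ) * Complex.exp (t * c)),
        intervalIntegral.integral_eq_sub_of_hasDerivAt
          (f := fun t : ℝ ↦ (1 - t : ℂ) * Complex.exp (t * c) / c + Complex.exp (t * c) / c ^ 2)]
      · simp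
        ring
      · intro x _
        convert! ((((hid x).const_sub 1).mul (hexp x)).div_const c).add
          ((hexp x).div_const (c ^ 2)) using 1
        field_simp
        ring
      · exact Continuous.intervalIntegrable (by fun_prop) _ _
      · intro t ht
        rw [Set.uIcc_of_le (by norm_num)] at ht
        simp only [tent]
        rw [abs_of_nonneg ht.1, max_eq_right (by linarith [ht.2])]
        push_cast
        rw [hc]
        ring_nf
    have hcos : Complex.exp c + Complex.exp (-c) = 2 * Complex.cos v := by
      rw [Complex.cos, hc, neg_mul]
      ring
    have hcsq : c ^ 2 = -(v : ℂ) ^ 2 := by rw [hc, mul_pow, Complex.I_sq]; ring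
    rw [h1, h2, fejer]
    push_cast
    calc _ = ((Complex.exp c + Complex.exp (-c)) - 2) / c ^ 2 := by ring
      _ = _ := by rw [hcos, hcsq, div_neg, ← neg_div]; ring
  · intro t ht
    have h : tent t ≠ 0 := by
      rintro h
      simp [h] at ht
    have : |t| < 1 := by
      by_contra! h'
      exact h (by rw [tent, max_eq_left (by linarith)])
    exact ⟨(abs_lt.1 this).1, (abs_lt.1 this).2.le⟩

theorem integral_tent_div_mul_exp {r : ℝ} (hr : 0 < r) {v : ℝ} (hv : v ≠ 0) :
    ∫ t : ℝ, (tent (t / r) : ℂ) * Complex.exp (t * v * Complex.I) = (r * fejer (r * v) : ℝ) := by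
  have h := MeasureTheory.Measure.integral_comp_div
    (fun s : ℝ ↦ (tent s : ℂ) * Complex.exp (s * (r * v : ℝ) * Complex.I)) r
  rw [integral_tent_mul_exp (by positivity), abs_of_pos hr] at h
  rw [Complex.ofReal_mul, ← Complex.real_smul, ← h]
  congr! 5 with t
  have : (r : ℂ) ≠ 0 := Complex.ofReal_ne_zero.2 hr.ne'
  push_cast
  field_simp
theorem tendsto_integral_psiExp_sub_one_mul_fejer {r : ℝ} (hr : 0 < r) :
    Tendsto (fun y : ℝ ↦ ∫ u in Set.Ioi (0 : ℝ), (psiExp u - 1) * (r * fejer (r * (y - u))))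
      atTop (𝓝 0) := by
  have hφ : Continuous fun t : ℝ ↦ (tent (t / r) : ℂ) := by
    have := continuous_tent
    fun_prop
  have hφc : HasCompactSupport fun t : ℝ ↦ (tent (t / r) : ℂ) := by
    have := (hasCompactSupport_tent.comp_homeomorph (Homeomorph.mulRight₀ r⁻¹ (by positivity))).comp_left
      (g := ((↑) : ℝ → ℂ)) Complex.ofReal_zero
    simpa [Function.comp_def, div_eq_mul_inv] using this
  have hae : (fun v : ℝ ↦ ∫ t : ℝ, (tent (t / r) : ℂ) * Complex.exp (t * v * Complex.I)) =ᵐ[volume]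
      fun v ↦ ((r * fejer (r * v) : ℝ) : ℂ) := by
    filter_upwards [compl_mem_ae_iff.2 (measure_singleton (0 : ℝ))] with v hv
    exact integral_tent_div_mul_exp hr hv
  have hK : Integrable fun v : ℝ ↦
      ∫ t : ℝ, (tent (t / r) : ℂ) * Complex.exp (t * v * Complex.I) :=
    (integrable_congr hae).2 (((integrable_fejer.comp_mul_left' hr.ne').const_mul r).ofReal)
  have hb (u : ℝ) : |psiExp u - 1| ≤ Real.log 4 + 4 := by
    have h1 := psiExp_nonneg u
    have h2 := psiExp_le u
    have h3 : 0 < Real.log 4 := Real.log_pos (by norm_num)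
    exact abs_le.2 ⟨by linarith, by linarith⟩
  have hGc : ContinuousOn (fun s : ℂ ↦
      (ArithmeticFunction.vonMangoldt.LFunctionResidueClassAux (0 : ZMod 1) s - 1) / s)
      {s | 1 ≤ s.re} := by
    refine ((ArithmeticFunction.vonMangoldt.continuousOn_LFunctionResidueClassAux _).sub
      continuousOn_const).div continuousOn_id fun s hs h ↦ ?_
    rw [show s = 0 from h] at hs
    simp at hs
    linarith
  have key := tendsto_integral_mul_kernel (measurable_psiExp.sub_const 1) hb hGc
    (fun s hs ↦ integral_psiExp_sub_one hs) hφ hφc hK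
  rw [← Complex.ofReal_zero] at key
  have h := (Complex.continuous_re.tendsto _).comp key
  rw [Complex.ofReal_re] at h
  refine h.congr fun y ↦ ?_
  have hae' : ∀ᵐ u : ℝ ∂(volume.restrict (Set.Ioi 0)),
      ∫ t : ℝ, (tent (t / r) : ℂ) * Complex.exp (t * (y - u : ℝ) * Complex.I) =
        ((r * fejer (r * (y - u)) : ℝ) : ℂ) := by
    refine ae_restrict_of_ae ?_
    filter_upwards [compl_mem_ae_iff.2 (measure_singleton y)] with u hu
    exact integral_tent_div_mul_exp hr (sub_ne_zero.2 (Ne.symm hu))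
  have h2 : ∫ u in Set.Ioi (0 : ℝ), ((psiExp u - 1 : ℝ) : ℂ) *
      ∫ t : ℝ, (tent (t / r) : ℂ) * Complex.exp (t * (y - u : ℝ) * Complex.I) =
      ((∫ u in Set.Ioi (0 : ℝ), (psiExp u - 1) * (r * fejer (r * (y - u))) : ℝ) : ℂ) := by
    rw [← integral_complex_ofReal]
    refine integral_congr_ae ?_
    filter_upwards [hae'] with u hu
    rw [hu, ← Complex.ofReal_mul]
  simp only [Function.comp_apply]
  rw [h2, Complex.ofReal_re]

theorem integrable_psiExp_mul_fejer (y r : ℝ) :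
    Integrable fun w ↦ psiExp (y - w / r) * fejer w := by
  refine integrable_fejer.bdd_mul (c := Real.log 4 + 4) ?_ (Eventually.of_forall fun w ↦ ?_)
  · exact (measurable_psiExp.comp (by fun_prop)).aestronglyMeasurable
  · rw [Real.norm_of_nonneg (psiExp_nonneg _)]
    exact psiExp_le _

/-- The convolution of `psiExp` with rescaled Fejér kernels tends to the kernel mass. -/
theorem tendsto_integral_psiExp_mul_fejer {r : ℝ} (hr : 0 < r) :
    Tendsto (fun y : ℝ ↦ ∫ w, psiExp (y - w / r) * fejer w) atTop (𝓝 (∫ v, fejer v)) := by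
  let J : ℝ → ℝ := (Set.Ioi 0).indicator 1
  have hJm : Measurable J := measurable_one.indicator measurableSet_Ioi
  have hJ1 (u : ℝ) : ‖J u‖ ≤ 1 := by
    simp only [J, Set.indicator]
    split_ifs <;> simp
  have hJi (y : ℝ) : Integrable fun w ↦ J (y - w / r) * fejer w :=
    integrable_fejer.bdd_mul (c := 1) (hJm.comp (by fun_prop)).aestronglyMeasurable
      (Eventually.of_forall fun w ↦ hJ1 _)
  have h1 : Tendsto (fun y : ℝ ↦ ∫ w, J (y - w / r) * fejer w) atTop (𝓝 (∫ v, fejer v)) := by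
    refine tendsto_integral_filter_of_dominated_convergence fejer
      (Eventually.of_forall fun y ↦ (hJi y).aestronglyMeasurable)
      (Eventually.of_forall fun y ↦ Eventually.of_forall fun w ↦ ?_) integrable_fejer
      (Eventually.of_forall fun w ↦ ?_)
    · rw [norm_mul, Real.norm_of_nonneg (fejer_nonneg w)]
      exact mul_le_of_le_one_left (fejer_nonneg w) (hJ1 _)
    · refine tendsto_const_nhds.congr' ?_
      filter_upwards [eventually_gt_atTop (w / r)] with y hy
      simp [J, hy]
  have h2 := (tendsto_integral_psiExp_sub_one_mul_fejer hr).add h1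
  rw [zero_add] at h2
  refine h2.congr fun y ↦ ?_
  have h3 : ∫ u in Set.Ioi (0 : ℝ), (psiExp u - 1) * (r * fejer (r * (y - u))) =
      ∫ u : ℝ, r * ((psiExp (y - (r * (y - u)) / r) - J (y - (r * (y - u)) / r)) *
        fejer (r * (y - u))) := by
    rw [← integral_indicator measurableSet_Ioi]
    congr! 2 with u
    rw [mul_div_cancel_left₀ _ hr.ne', sub_sub_cancel]
    by_cases hu : u ∈ Set.Ioi 0
    · simp only [Set.indicator_of_mem hu, J, Pi.one_apply]
      ring
    · simp [Set.indicator_of_notMem hu, J, psiExp_of_nonpos (not_lt.1 hu)]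
  rw [h3, integral_sub_left_eq_self
    (fun v ↦ r * ((psiExp (y - (r * v) / r) - J (y - (r * v) / r)) * fejer (r * v))) volume y,
    integral_const_mul, Measure.integral_comp_mul_left
    (fun w ↦ (psiExp (y - w / r) - J (y - w / r)) * fejer w), abs_of_pos (inv_pos.2 hr),
    smul_eq_mul, mul_inv_cancel_left₀ hr.ne', ← integral_add _ (hJi y)]
  · congr! 2 with w
    ring
  · simpa only [sub_mul] using! (integrable_psiExp_mul_fejer y r).sub (hJi y)

theorem exists_integral_fejer_Icc_gt {η : ℝ} (hη : 0 < η) :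
    ∃ R : ℝ, 0 < R ∧ (∫ v, fejer v) - η < ∫ v in Set.Icc (-R) R, fejer v := by
  have h : Tendsto (fun R : ℝ ↦ ∫ v in Set.Icc (-R) R, fejer v) atTop (𝓝 (∫ v, fejer v)) :=
    (aecover_Icc tendsto_neg_atTop_atBot tendsto_id).integral_tendsto_of_countably_generated
      integrable_fejer
  obtain ⟨R, h1, h2⟩ := ((eventually_gt_atTop 0).and
    (h.eventually_const_lt (sub_lt_self _ hη))).exists
  exact ⟨R, h1, h2⟩

theorem eventually_psiExp_bounds {η : ℝ} (hη : 0 < η) (hη' : η < ∫ v, fejer v) :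
    ∀ᶠ y in atTop,
      psiExp y ≤ Real.exp (2 * η) * ((∫ v, fejer v) + η) / ((∫ v, fejer v) - η) ∧
      Real.exp (-(2 * η)) * ((∫ v, fejer v) - η - (Real.log 4 + 4) * η) / (∫ v, fejer v) ≤
        psiExp y := by
  obtain ⟨R, hR, hRη⟩ := exists_integral_fejer_Icc_gt hη
  set I := ∫ v, fejer v with hI
  set A := ∫ v in Set.Icc (-R) R, fejer v with hA
  have hr : 0 < R / η := by positivity
  have hI0 : 0 < I := integral_fejer_pos
  have hdiv {w : ℝ} (hw : w ∈ Set.Icc (-R) R) : -η ≤ w / (R / η) ∧ w / (R / η) ≤ η := by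
    rw [le_div_iff₀ hr, div_le_iff₀ hr, neg_mul, mul_div_cancel₀ _ hη.ne']
    exact hw
  have hT := tendsto_integral_psiExp_mul_fejer hr
  have hup := (tendsto_atTop_add_const_right _ η tendsto_id).eventually
    (hT.eventually_lt_const (show I < I + η by linarith))
  have hlo := (tendsto_atTop_add_const_right _ (-η) tendsto_id).eventually
    (hT.eventually_const_lt (show I - η < I by linarith))
  filter_upwards [hup, hlo] with y h1 h2
  simp only [id] at h1 h2
  have hpos := psiExp_nonneg y
  constructor
  · have h3 : psiExp y * Real.exp (-(2 * η)) * A ≤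
        ∫ w, psiExp (y + η - w / (R / η)) * fejer w := by
      rw [hA, ← integral_const_mul]
      refine (setIntegral_mono_on (integrable_fejer.const_mul _).integrableOn
        (integrable_psiExp_mul_fejer _ _).integrableOn measurableSet_Icc fun w hw ↦ ?_).trans
        (setIntegral_le_integral (integrable_psiExp_mul_fejer _ _)
          (Eventually.of_forall fun w ↦ mul_nonneg (psiExp_nonneg _) (fejer_nonneg w)))
      obtain ⟨hw1, hw2⟩ := hdiv hw
      refine mul_le_mul_of_nonneg_right ?_ (fejer_nonneg w)
      refine le_trans ?_ (psiExp_mul_exp_le (u := y) (by linarith))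
      gcongr
      linarith
    rw [le_div_iff₀ (by linarith)]
    have h4 : psiExp y * Real.exp (-(2 * η)) * (I - η) ≤ I + η := by
      refine le_trans ?_ (h3.trans h1.le)
      gcongr
    calc psiExp y * (I - η)
        = Real.exp (2 * η) * (psiExp y * Real.exp (-(2 * η)) * (I - η)) := by
          rw [Real.exp_neg]
          field_simp
      _ ≤ _ := by gcongr
  · have h3 : ∫ w, psiExp (y + -η - w / (R / η)) * fejer w ≤
        psiExp y * Real.exp (2 * η) * A + (Real.log 4 + 4) * (I - A) := by
      rw [← integral_add_compl (measurableSet_Icc (a := -R) (b := R))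
        (integrable_psiExp_mul_fejer _ _)]
      have hIA : I - A = ∫ v in (Set.Icc (-R) R)ᶜ, fejer v := by
        rw [hI, hA, ← integral_add_compl (measurableSet_Icc (a := -R) (b := R)) integrable_fejer]
        ring
      rw [hIA, hA, ← integral_const_mul, ← integral_const_mul]
      refine add_le_add
        (setIntegral_mono_on (integrable_psiExp_mul_fejer _ _).integrableOn
          (integrable_fejer.const_mul _).integrableOn measurableSet_Icc fun w hw ↦ ?_)
        (setIntegral_mono (integrable_psiExp_mul_fejer _ _).integrableOn
          (integrable_fejer.const_mul _).integrableOn fun w ↦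
            mul_le_mul_of_nonneg_right (psiExp_le _) (fejer_nonneg w))
      obtain ⟨hw1, hw2⟩ := hdiv hw
      refine mul_le_mul_of_nonneg_right ?_ (fejer_nonneg w)
      have h := psiExp_mul_exp_le (u := y + -η - w / (R / η)) (v := y) (by linarith)
      calc psiExp (y + -η - w / (R / η))
          = psiExp (y + -η - w / (R / η)) * Real.exp (-(y - (y + -η - w / (R / η)))) *
            Real.exp (y - (y + -η - w / (R / η))) := by
            rw [mul_assoc, ← Real.exp_add]
            simp
        _ ≤ psiExp y * Real.exp (2 * η) := by
            gcongr
            linarith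
    have hAI : A ≤ I := setIntegral_le_integral integrable_fejer
      (Eventually.of_forall fejer_nonneg)
    have hlog : 0 < Real.log 4 := Real.log_pos (by norm_num)
    rw [div_le_iff₀ hI0]
    have h4 : I - η - (Real.log 4 + 4) * η ≤ psiExp y * Real.exp (2 * η) * I := by
      have h5 : psiExp y * Real.exp (2 * η) * A ≤ psiExp y * Real.exp (2 * η) * I := by gcongr
      have h6 : (Real.log 4 + 4) * (I - A) ≤ (Real.log 4 + 4) * η := by
        gcongr
        linarith
      linarith
    calc _ ≤ Real.exp (-(2 * η)) * (psiExp y * Real.exp (2 * η) * I) := by gcongr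
      _ = psiExp y * I := by
        rw [Real.exp_neg]
        field_simp

theorem tendsto_psiExp : Tendsto psiExp atTop (𝓝 1) := by
  have hI0 : 0 < ∫ v, fejer v := integral_fejer_pos
  have hU : Tendsto (fun η : ℝ ↦
      Real.exp (2 * η) * ((∫ v, fejer v) + η) / ((∫ v, fejer v) - η)) (𝓝[>] 0) (𝓝 1) := by
    have : ContinuousAt (fun η : ℝ ↦
        Real.exp (2 * η) * ((∫ v, fejer v) + η) / ((∫ v, fejer v) - η)) 0 :=
      ContinuousAt.div (by fun_prop) (by fun_prop) (by simpa using hI0.ne')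
    simpa [ContinuousAt, hI0.ne'] using this.mono_left (nhdsWithin_le_nhds (s := Set.Ioi 0))
  have hL : Tendsto (fun η : ℝ ↦ Real.exp (-(2 * η)) *
      ((∫ v, fejer v) - η - (Real.log 4 + 4) * η) / (∫ v, fejer v)) (𝓝[>] 0) (𝓝 1) := by
    have : ContinuousAt (fun η : ℝ ↦ Real.exp (-(2 * η)) *
      ((∫ v, fejer v) - η - (Real.log 4 + 4) * η) / (∫ v, fejer v)) 0 := by fun_prop
    simpa [ContinuousAt, hI0.ne'] using this.mono_left (nhdsWithin_le_nhds (s := Set.Ioi 0))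
  have hev : ∀ᶠ η : ℝ in 𝓝[>] 0, 0 < η ∧ η < ∫ v, fejer v :=
    (eventually_mem_nhdsWithin (s := Set.Ioi (0 : ℝ))).and
      (nhdsWithin_le_nhds (eventually_lt_nhds hI0))
  refine tendsto_order.2 ⟨fun a ha ↦ ?_, fun a ha ↦ ?_⟩
  · obtain ⟨η, ⟨h1, h2⟩, h3⟩ := (hev.and (hL.eventually_const_lt ha)).exists
    filter_upwards [eventually_psiExp_bounds h1 h2] with y hy using h3.trans_le hy.2
  · obtain ⟨η, ⟨h1, h2⟩, h3⟩ := (hev.and (hU.eventually_lt_const ha)).exists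
    filter_upwards [eventually_psiExp_bounds h1 h2] with y hy using hy.1.trans_lt h3

theorem tendsto_psi_div : Tendsto (fun x : ℝ ↦ Chebyshev.psi x / x) atTop (𝓝 1) := by
  refine (tendsto_psiExp.comp Real.tendsto_log_atTop).congr' ?_
  filter_upwards [eventually_gt_atTop 0] with x hx
  simp only [Function.comp_apply, psiExp]
  rw [Real.exp_neg, Real.exp_log hx, div_eq_mul_inv]

theorem tendsto_theta_div : Tendsto (fun x : ℝ ↦ Chebyshev.theta x / x) atTop (𝓝 1) := by
  have h : Tendsto (fun x : ℝ ↦ (Chebyshev.psi x - Chebyshev.theta x) / x) atTop (𝓝 0) := by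
    refine (Chebyshev.isBigO_psi_sub_theta_sqrt.trans_isLittleO ?_).tendsto_div_nhds_zero
    refine (Asymptotics.isLittleO_iff_tendsto' ?_).2 ?_
    · filter_upwards [eventually_gt_atTop 0] with x hx h using absurd h hx.ne'
    · refine (tendsto_inv_atTop_zero.comp Real.tendsto_sqrt_atTop).congr fun x ↦ ?_
      rw [Real.sqrt_div_self, Function.comp_apply]
  have h2 := tendsto_psi_div.sub h
  rw [sub_zero] at h2
  exact h2.congr fun x ↦ by ring

/-- The **prime number theorem**. -/
theorem tendsto_primeCounting_mul_log_div :
    Tendsto (fun n : ℕ ↦ (Nat.primeCounting n : ℝ) * Real.log n / n) atTop (𝓝 1) := by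
  have h := Chebyshev.integral_theta_div_log_sq_isLittleO.tendsto_div_nhds_zero
  have h2 := tendsto_theta_div.add h
  rw [add_zero] at h2
  refine (h2.comp tendsto_natCast_atTop_atTop).congr' ?_
  filter_upwards [eventually_ge_atTop 2] with n hn
  have hn2 : (2 : ℝ) ≤ n := by exact_mod_cast hn
  have hlog : 0 < Real.log n := Real.log_pos (by linarith)
  have h3 := Chebyshev.primeCounting_eq_theta_div_log_add_integral hn2
  rw [Nat.floor_natCast] at h3
  simp only [Function.comp_apply]
  rw [h3]
  field_simp

end

theorem ncard_primes_inter_Icc (N : ℕ) :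
    ({p : ℕ | Nat.Prime p} ∩ Set.Icc 1 N).ncard = Nat.primeCounting N := by
  rw [← Nat.primesLE_card_eq_primeCounting, ← Set.ncard_coe_finset]
  congr 1
  ext q
  simp only [Set.mem_inter_iff, Set.mem_ofPred_eq, Set.mem_Icc, Finset.mem_coe, Nat.mem_primesLE]
  exact ⟨fun h ↦ ⟨h.2.2, h.1⟩, fun h ↦ ⟨h.2, h.2.one_le, h.1⟩⟩

theorem ncard_inter_Icc_of_enumeration {A : Set ℕ} (hA : ∀ q ∈ A, 1 ≤ q) {p : ℕ → ℕ}
    (hmono : StrictMonoOn p {j : ℕ | 1 ≤ j}) (hmem : ∀ j : ℕ, 1 ≤ j → p j ∈ A)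
    (hsurj : ∀ q ∈ A, ∃ j : ℕ, 1 ≤ j ∧ p j = q) {j : ℕ} (hj : 1 ≤ j) :
    (A ∩ Set.Icc 1 (p j)).ncard = j := by
  have himg : A ∩ Set.Icc 1 (p j) = p '' Set.Icc 1 j := by
    ext q
    constructor
    · rintro ⟨hq, -, hqj⟩
      obtain ⟨i, hi, rfl⟩ := hsurj q hq
      exact ⟨i, ⟨hi, (hmono.le_iff_le hi hj).1 hqj⟩, rfl⟩
    · rintro ⟨i, ⟨hi, hij⟩, rfl⟩
      exact ⟨hmem i hi, hA _ (hmem i hi), (hmono.le_iff_le hi hj).2 hij⟩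
  rw [himg, (hmono.injOn.mono fun i hi ↦ hi.1).ncard_image, ← Finset.coe_Icc,
    Set.ncard_coe_finset, Nat.card_Icc]
  lia

open Topology in
theorem tendsto_div_mul_log_of_tendsto_mul_log_div {p : ℕ → ℝ} (hp : Tendsto p atTop atTop)
    {θ : ℝ} (hθ : 0 < θ)
    (h : Tendsto (fun j : ℕ ↦ (j : ℝ) * Real.log (p j) / p j) atTop (𝓝 θ)) :
    Tendsto (fun j : ℕ ↦ θ * p j / ((j : ℝ) * Real.log j)) atTop (𝓝 1) := by
  have hlogp : Tendsto (fun j ↦ Real.log (p j)) atTop atTop := Real.tendsto_log_atTop.comp hp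
  have hloglog : Tendsto (fun j ↦ Real.log (Real.log (p j)) / Real.log (p j)) atTop (𝓝 0) :=
    Real.isLittleO_log_id_atTop.tendsto_div_nhds_zero.comp hlogp
  have hlog : Tendsto (fun j : ℕ ↦ Real.log j / Real.log (p j)) atTop (𝓝 1) := by
    have h1 := (((h.log hθ.ne').div_atTop hlogp).sub hloglog).add_const 1
    rw [sub_zero, zero_add] at h1
    refine h1.congr' ?_
    filter_upwards [eventually_gt_atTop 0, hp.eventually_gt_atTop 0,
      hlogp.eventually_gt_atTop 0] with j hj hpj hlj
    have hj' : (0 : ℝ) < j := by exact_mod_cast hj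
    rw [Real.log_div (by positivity) hpj.ne', Real.log_mul hj'.ne' hlj.ne']
    field_simp
    ring
  have h2 := (tendsto_const_nhds (x := θ)).div (h.mul hlog) (by simpa using hθ.ne')
  rw [mul_one, div_self hθ.ne'] at h2
  refine h2.congr' ?_
  filter_upwards [hp.eventually_gt_atTop 0, hlogp.eventually_gt_atTop 0] with j hpj hlj
  simp only [Pi.div_apply]
  field_simp

/-- If `A` is an infinite set of primes with natural density `θ ∈ (0,1]` within the primes,
and `p 1 < p 2 < ⋯` enumerates `A` in increasing order, then `p j ∼ (j log j)/θ`
as `j → ∞`. -/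
theorem nth_prime_in_A_asymp
    (A : Set ℕ) (hA : ∀ p ∈ A, Nat.Prime p) (hAinf : A.Infinite)
    (θ : ℝ) (hθ : θ ∈ Set.Ioc (0 : ℝ) 1)
    (hdens : Tendsto
      (fun N : ℕ => ((A ∩ Set.Icc 1 N).ncard : ℝ) / (({p : ℕ | Nat.Prime p} ∩ Set.Icc 1 N).ncard : ℝ))
      atTop (nhds θ))
    (p : ℕ → ℕ)
    (hmono : StrictMonoOn p {j : ℕ | 1 ≤ j})
    (hmem : ∀ j : ℕ, 1 ≤ j → p j ∈ A)
    (hsurj : ∀ q ∈ A, ∃ j : ℕ, 1 ≤ j ∧ p j = q) :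
    Tendsto (fun j : ℕ => θ * (p j : ℝ) / ((j : ℝ) * Real.log j)) atTop (nhds 1) := by
  have hA1 : ∀ q ∈ A, 1 ≤ q := fun q hq ↦ (hA q hq).one_le
  have hcard {j : ℕ} (hj : 1 ≤ j) := ncard_inter_Icc_of_enumeration hA1 hmono hmem hsurj hj
  have hp : Tendsto p atTop atTop := by
    refine tendsto_atTop_mono' _ ?_ tendsto_id
    filter_upwards [eventually_ge_atTop 1] with j hj
    calc j = (A ∩ Set.Icc 1 (p j)).ncard := (hcard hj).symm
      _ ≤ (Set.Icc 1 (p j)).ncard := Set.ncard_le_ncard Set.inter_subset_right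
      _ = p j := by rw [← Finset.coe_Icc, Set.ncard_coe_finset, Nat.card_Icc, Nat.add_sub_cancel]
  refine tendsto_div_mul_log_of_tendsto_mul_log_div
    (tendsto_natCast_atTop_atTop.comp hp) hθ.1 ?_
  have h := (hdens.mul tendsto_primeCounting_mul_log_div).comp hp
  rw [mul_one] at h
  refine h.congr' ?_
  filter_upwards [eventually_ge_atTop 1] with j hj
  have hpos : 0 < Nat.primeCounting (p j) := by
    rw [← ncard_primes_inter_Icc, Set.ncard_pos]
    exact ⟨p j, hA _ (hmem j hj), hA1 _ (hmem j hj), le_rfl⟩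
  have hpos' : (Nat.primeCounting (p j) : ℝ) ≠ 0 := by exact_mod_cast hpos.ne'
  simp only [Function.comp_apply]
  rw [hcard hj, ncard_primes_inter_Icc]
  field_simp
end

section
/- Let A be an infinite subset of the prime numbers whose natural density in the primes exists and equals θ ∈ (0,1], and let p_{1;A} < p_{2;A} < ⋯ be the enumeration of A in increasing order. Then ∑_{j=1}^{N} (log p_{j;A})/(p_{j;A} − 1) ∼ θ · log N as N → ∞, and likewise ∑_{j=1}^{N} (log p_{j;A})/p_{j;A} ∼ θ · log N as N → ∞. -/
open Filter

open Finset Topology in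
/-- Summation by parts: nonnegative partial sums stay nonnegative after weighting by a
nonnegative antitone function. -/
theorem sum_range_mul_nonneg_of_antitone {f d : ℕ → ℝ} (hf : Antitone f) (hf0 : ∀ n, 0 ≤ f n)
    (hd : ∀ n, 0 ≤ ∑ k ∈ range (n + 1), d k) (n : ℕ) :
    0 ≤ ∑ k ∈ range (n + 1), d k * f k := by
  suffices h : f n * ∑ k ∈ range (n + 1), d k ≤ ∑ k ∈ range (n + 1), d k * f k from
    (mul_nonneg (hf0 n) (hd n)).trans h
  induction n with
  | zero => simp [mul_comm]
  | succ n ih =>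
    rw [sum_range_succ, sum_range_succ (fun k ↦ d k * f k), mul_add]
    have := mul_le_mul_of_nonneg_right (hf n.le_succ) (hd n)
    linarith

open Finset in
/-- If the partial sums of `a` are at least `-ε` times those of `b ≥ 0` eventually, the same holds
up to a constant for the sums weighted by a nonnegative antitone function. -/
theorem exists_le_sum_range_mul_of_antitone {f a b : ℕ → ℝ} (hf : Antitone f)
    (hf0 : ∀ n, 0 ≤ f n)
    (h : ∀ᶠ n in atTop, 0 ≤ ∑ k ∈ range (n + 1), (a k + b k)) :
    ∃ C, ∀ n, 0 ≤ ∑ k ∈ range (n + 1), a k * f k + ∑ k ∈ range (n + 1), b k * f k + C := by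
  obtain ⟨m, hm⟩ := eventually_atTop.1 h
  set K := ∑ i ∈ range m, |∑ k ∈ range (i + 1), (a k + b k)| with hK
  have hK0 : 0 ≤ K := sum_nonneg fun _ _ ↦ abs_nonneg _
  have key := sum_range_mul_nonneg_of_antitone (d := fun k ↦ a k + b k + if k = 0 then K else 0)
    hf hf0 (fun n ↦ by
      rw [sum_add_distrib, sum_ite_eq' (range (n + 1)) 0 (fun _ ↦ K), if_pos (by simp)]
      rcases le_or_gt m n with hn | hn
      · linarith [hm n hn]
      · have := single_le_sum (f := fun i ↦ |∑ k ∈ range (i + 1), (a k + b k)|)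
          (fun _ _ ↦ abs_nonneg _) (mem_range.2 hn)
        have h2 := neg_abs_le (∑ k ∈ range (n + 1), (a k + b k))
        linarith)
  refine ⟨K * f 0, fun n ↦ (key n).trans_eq ?_⟩
  simp only [add_mul, sum_add_distrib, ite_mul, zero_mul]
  rw [sum_ite_eq' (range (n + 1)) 0 (fun k ↦ K * f k), if_pos (by simp)]

open Finset Topology in
/-- Asymptotic proportionality of partial sums is inherited by the sums weighted by a nonnegative
antitone function, provided the latter diverge. -/
theorem tendsto_sum_mul_div_sum_mul_of_antitone {f a b : ℕ → ℝ} {θ : ℝ} (hf : Antitone f)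
    (hf0 : ∀ n, 0 ≤ f n) (hb : ∀ᶠ n in atTop, 0 < ∑ k ∈ range (n + 1), b k)
    (hab : Tendsto (fun n ↦ (∑ k ∈ range (n + 1), a k) / ∑ k ∈ range (n + 1), b k) atTop (𝓝 θ))
    (hbf : Tendsto (fun n ↦ ∑ k ∈ range (n + 1), b k * f k) atTop atTop) :
    Tendsto (fun n ↦ (∑ k ∈ range (n + 1), a k * f k) / ∑ k ∈ range (n + 1), b k * f k)
      atTop (𝓝 θ) := by
  rw [Metric.tendsto_nhds]
  intro ε hε
  have hε2 : 0 < ε / 2 := by positivity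
  have hd : ∀ᶠ n in atTop, |(∑ k ∈ range (n + 1), a k) - θ * ∑ k ∈ range (n + 1), b k|
      ≤ ε / 2 * ∑ k ∈ range (n + 1), b k := by
    filter_upwards [hb, Metric.tendsto_nhds.1 hab _ hε2] with n hn h
    rw [Real.dist_eq, div_sub' hn.ne', abs_div, abs_of_pos hn, div_lt_iff₀ hn] at h
    rw [mul_comm θ]
    exact h.le
  obtain ⟨C₁, h₁⟩ := exists_le_sum_range_mul_of_antitone
    (a := a) (b := fun k ↦ (ε / 2 - θ) * b k) hf hf0 (by
      filter_upwards [hd] with n hn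
      rw [sum_add_distrib, ← mul_sum]
      linarith [(abs_le.1 hn).1])
  obtain ⟨C₂, h₂⟩ := exists_le_sum_range_mul_of_antitone
    (a := fun k ↦ - a k) (b := fun k ↦ (ε / 2 + θ) * b k) hf hf0 (by
      filter_upwards [hd] with n hn
      rw [sum_add_distrib, ← mul_sum, sum_neg_distrib]
      linarith [(abs_le.1 hn).2])
  filter_upwards [hbf.eventually_gt_atTop ((|C₁| + |C₂|) / (ε / 2)),
    hbf.eventually_gt_atTop 0] with n hn hn0
  rw [div_lt_iff₀ hε2] at hn
  specialize h₁ n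
  specialize h₂ n
  simp only [mul_assoc, ← mul_sum, neg_mul, sum_neg_distrib] at h₁ h₂
  rw [Real.dist_eq, div_sub' hn0.ne', abs_div, abs_of_pos hn0, div_lt_iff₀ hn0, abs_lt]
  constructor <;> linarith [le_abs_self C₁, le_abs_self C₂, abs_nonneg C₁, abs_nonneg C₂]

theorem log_div_sub_one_sub_log_div_self_le {k : ℕ} (hk : 2 ≤ k) :
    Real.log k / ((k : ℝ) - 1) - Real.log k / k ≤ 4 * (1 / (k : ℝ) ^ (3 / 2 : ℝ)) := by
  have hk' : (2 : ℝ) ≤ k := by exact_mod_cast hk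
  have hlog := Real.log_le_rpow_div (x := k) (by positivity) (ε := 1 / 2) (by norm_num)
  have hpos : 0 < (k : ℝ) ^ (3 / 2 : ℝ) := by positivity
  have hmul : (k : ℝ) ^ (1 / 2 : ℝ) * (k : ℝ) ^ (3 / 2 : ℝ) = k ^ 2 := by
    rw [← Real.rpow_add (by positivity), ← Real.rpow_natCast]
    norm_num
  rw [div_sub_div _ _ (by linarith) (by linarith), mul_one_div,
    div_le_div_iff₀ (by nlinarith) hpos]
  have : Real.log k * (k : ℝ) ^ (3 / 2 : ℝ) ≤ 2 * k ^ 2 := by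
    rw [← hmul]
    nlinarith
  nlinarith

theorem log_div_self_le_log_div_sub_one {k : ℕ} (hk : 2 ≤ k) :
    Real.log k / (k : ℝ) ≤ Real.log k / ((k : ℝ) - 1) := by
  have hk' : (2 : ℝ) ≤ k := by exact_mod_cast hk
  have := Real.log_nonneg (by linarith : (1 : ℝ) ≤ k)
  gcongr <;> linarith

theorem summable_log_div_sub_one_sub_log_div_self :
    Summable fun k : ℕ ↦ Real.log k / ((k : ℝ) - 1) - Real.log k / k := by
  refine Summable.of_norm_bounded_eventually_nat
    ((Real.summable_one_div_nat_rpow.2 (by norm_num : (1 : ℝ) < 3 / 2)).mul_left 4) ?_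
  filter_upwards [eventually_ge_atTop 2] with k hk
  rw [Real.norm_of_nonneg (sub_nonneg.2 (log_div_self_le_log_div_sub_one hk))]
  exact log_div_sub_one_sub_log_div_self_le hk

open Finset in
theorem log_factorial_eq_sum_primesLE (n : ℕ) :
    Real.log (n.factorial) = ∑ p ∈ n.primesLE, (n.factorial.factorization p : ℝ) * Real.log p := by
  rw [Real.log_nat_eq_sum_factorization]
  refine Finsupp.sum_of_support_subset _ (fun p hp ↦ ?_) _ (by simp)
  rw [Nat.support_factorization, Nat.mem_primeFactors] at hp
  exact Nat.mem_primesLE.2 ⟨(hp.1.dvd_factorial).1 hp.2.1, hp.1⟩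

theorem le_log_factorial (n : ℕ) : n * Real.log n - n ≤ Real.log n.factorial := by
  rcases n.eq_zero_or_pos with rfl | hn
  · simp
  have h := Real.pow_div_factorial_le_exp (x := n) (by positivity) n
  have hf : (0 : ℝ) < n.factorial := by positivity
  have := Real.log_le_log (by positivity) h
  rw [Real.log_exp, Real.log_div (by positivity) hf.ne', Real.log_pow] at this
  linarith

theorem log_factorial_le (n : ℕ) : Real.log n.factorial ≤ n * Real.log n := by
  rw [← Real.log_pow]
  exact Real.log_le_log (by positivity) (by exact_mod_cast n.factorial_le_pow)

theorem div_le_factorization_factorial {n p : ℕ} (hp : p.Prime) :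
    n / p ≤ n.factorial.factorization p := by
  rw [← hp.pow_dvd_iff_le_factorization n.factorial_ne_zero]
  exact (hp.pow_dvd_factorial_iff (Nat.lt_succ_self _)).2 (by
    rcases Nat.eq_zero_or_pos (n / p) with h | h
    · simp [h]
    · have hb : 1 ≤ Nat.log p n := Nat.log_pos hp.one_lt ((Nat.div_pos_iff.1 h).2)
      calc n / p = n / p ^ 1 := by simp
        _ ≤ _ := Finset.single_le_sum (f := fun i ↦ n / p ^ i) (fun _ _ ↦ Nat.zero_le _)
          (Finset.mem_Ico.2 ⟨le_rfl, by omega⟩))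

/-- Mertens' first theorem, upper bound. -/
theorem sum_primesLE_log_div_self_le {n : ℕ} (hn : n ≠ 0) :
    ∑ p ∈ n.primesLE, Real.log p / p ≤ Real.log n + Real.log 4 := by
  have hn0 : (0 : ℝ) < n := by positivity
  have h : ∑ p ∈ n.primesLE, ((n : ℝ) / p - 1) * Real.log p ≤ Real.log n.factorial := by
    rw [log_factorial_eq_sum_primesLE]
    refine Finset.sum_le_sum fun p hp ↦ ?_
    have hpp := Nat.prime_of_mem_primesLE hp
    have hle : (n : ℝ) / p - 1 ≤ n.factorial.factorization p := by
      have h1 : ((n / p : ℕ) : ℝ) ≤ n.factorial.factorization p := by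
        exact_mod_cast div_le_factorization_factorial hpp
      have h2 := Nat.lt_floor_add_one ((n : ℝ) / p)
      rw [Nat.floor_div_eq_div] at h2
      linarith
    exact mul_le_mul_of_nonneg_right hle (Real.log_natCast_nonneg p)
  have hθ := Chebyshev.theta_le_log4_mul_x hn0.le
  rw [Chebyshev.theta_eq_sum_primesLE_log] at hθ
  have h3 : ∑ p ∈ n.primesLE, ((n : ℝ) / p - 1) * Real.log p =
      n * ∑ p ∈ n.primesLE, Real.log p / p - ∑ p ∈ n.primesLE, Real.log p := by
    rw [Finset.mul_sum, ← Finset.sum_sub_distrib]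
    exact Finset.sum_congr rfl fun _ _ ↦ by ring
  have h4 := log_factorial_le n
  refine le_of_mul_le_mul_left ?_ hn0
  linarith

/-- Mertens' first theorem, lower bound. -/
theorem log_sub_le_sum_primesLE_log_div_self {n : ℕ} (hn : n ≠ 0) :
    Real.log n - 1 - ∑' k : ℕ, |Real.log k / ((k : ℝ) - 1) - Real.log k / k| ≤
      ∑ p ∈ n.primesLE, Real.log p / p := by
  have hn0 : (0 : ℝ) < n := by positivity
  have h : Real.log n.factorial ≤ n * ∑ p ∈ n.primesLE, Real.log p / ((p : ℝ) - 1) := by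
    rw [log_factorial_eq_sum_primesLE, Finset.mul_sum]
    refine Finset.sum_le_sum fun p hp ↦ ?_
    have hpp := Nat.prime_of_mem_primesLE hp
    have h1 : (n.factorial.factorization p : ℝ) ≤ n / ((p : ℝ) - 1) := by
      have := (Nat.cast_le (α := ℝ)).2 (Nat.factorization_factorial_le_div_pred hpp n)
      refine this.trans (Nat.cast_div_le.trans_eq ?_)
      rw [Nat.cast_sub hpp.one_le, Nat.cast_one]
    calc _ ≤ (n / ((p : ℝ) - 1)) * Real.log p := by
          gcongr
      _ = _ := by ring
  have h2 : ∑ p ∈ n.primesLE, (Real.log p / ((p : ℝ) - 1) - Real.log p / p) ≤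
      ∑' k : ℕ, |Real.log k / ((k : ℝ) - 1) - Real.log k / k| :=
    (Finset.sum_le_sum fun _ _ ↦ le_abs_self _).trans
      (summable_log_div_sub_one_sub_log_div_self.abs.sum_le_tsum _ fun _ _ ↦ abs_nonneg _)
  rw [Finset.sum_sub_distrib] at h2
  have h3 := le_log_factorial n
  have h4 : Real.log n - 1 ≤ ∑ p ∈ n.primesLE, Real.log p / ((p : ℝ) - 1) := by
    refine le_of_mul_le_mul_left ?_ hn0
    linarith
  linarith

theorem tendsto_log_natCast_atTop : Tendsto (fun n : ℕ ↦ Real.log n) atTop atTop :=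
  Real.tendsto_log_atTop.comp tendsto_natCast_atTop_atTop

open Finset Topology in
/-- Weights with summable difference give the same asymptotics relative to `log n`. -/
theorem tendsto_sum_indicator_div_log_of_summable_sub {F G : ℕ → ℝ} (S : Set ℕ) {c : ℝ}
    (hFG : Summable fun k ↦ G k - F k)
    (hF : Tendsto (fun n : ℕ ↦ (∑ k ∈ range (n + 1), S.indicator F k) / Real.log n)
      atTop (𝓝 c)) :
    Tendsto (fun n : ℕ ↦ (∑ k ∈ range (n + 1), S.indicator G k) / Real.log n) atTop (𝓝 c) := by
  have h := ((hFG.indicator S).hasSum.tendsto_sum_nat.comp (tendsto_add_atTop_nat 1)).div_atTop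
    tendsto_log_natCast_atTop
  have h2 := hF.add h
  rw [add_zero] at h2
  refine h2.congr fun n ↦ ?_
  rw [Function.comp_apply, ← add_div, ← sum_add_distrib]
  congr 1
  refine sum_congr rfl fun k _ ↦ ?_
  by_cases hk : k ∈ S <;> simp [hk]

open Finset in
theorem sum_range_indicator_prime (F : ℕ → ℝ) (n : ℕ) :
    ∑ k ∈ range (n + 1), {p : ℕ | p.Prime}.indicator F k = ∑ p ∈ n.primesLE, F p := by
  rw [Nat.primesLE_eq_filter_range, sum_filter]
  exact sum_congr rfl fun k _ ↦ by simp [Set.indicator_apply]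

open Finset Topology in
theorem tendsto_sum_primes_log_div_self_div_log :
    Tendsto (fun n : ℕ ↦ (∑ k ∈ range (n + 1),
      {p : ℕ | p.Prime}.indicator (fun k ↦ Real.log k / k) k) / Real.log n) atTop (𝓝 1) := by
  set C := ∑' k : ℕ, |Real.log k / ((k : ℝ) - 1) - Real.log k / k|
  have hl : Tendsto (fun n : ℕ ↦ 1 - (1 + C) / Real.log n) atTop (𝓝 1) := by
    simpa using (tendsto_const_nhds (x := (1 : ℝ))).sub
      ((tendsto_const_nhds (x := 1 + C)).div_atTop tendsto_log_natCast_atTop)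
  have hu : Tendsto (fun n : ℕ ↦ 1 + Real.log 4 / Real.log n) atTop (𝓝 1) := by
    simpa using (tendsto_const_nhds (x := (1 : ℝ))).add
      ((tendsto_const_nhds (x := Real.log 4)).div_atTop tendsto_log_natCast_atTop)
  refine tendsto_of_tendsto_of_tendsto_of_le_of_le' hl hu ?_ ?_
  · filter_upwards [eventually_ne_atTop 0, tendsto_log_natCast_atTop.eventually_gt_atTop 0]
      with n hn hlog
    rw [sum_range_indicator_prime, le_div_iff₀ hlog, sub_mul, div_mul_cancel₀ _ hlog.ne']
    linarith [log_sub_le_sum_primesLE_log_div_self hn]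
  · filter_upwards [eventually_ne_atTop 0, tendsto_log_natCast_atTop.eventually_gt_atTop 0]
      with n hn hlog
    rw [sum_range_indicator_prime, div_le_iff₀ hlog, add_mul, div_mul_cancel₀ _ hlog.ne']
    linarith [sum_primesLE_log_div_self_le hn]

/-- `log k / k`, modified at `k < 3` so as to be antitone. -/
noncomputable def antitoneLogDivSelf (k : ℕ) : ℝ :=
  Real.log (max k 3 : ℕ) / (max k 3 : ℕ)

theorem antitone_antitoneLogDivSelf : Antitone antitoneLogDivSelf := by
  intro m n hmn
  have h3 : ∀ k : ℕ, Real.exp 1 ≤ ((max k 3 : ℕ) : ℝ) := fun k ↦ by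
    have : (3 : ℝ) ≤ ((max k 3 : ℕ) : ℝ) := by exact_mod_cast le_max_right k 3
    linarith [Real.exp_one_lt_d9]
  exact Real.log_div_self_antitoneOn (h3 m) (h3 n)
    (by exact_mod_cast max_le_max_right 3 hmn)

theorem antitoneLogDivSelf_nonneg (k : ℕ) : 0 ≤ antitoneLogDivSelf k :=
  div_nonneg (Real.log_natCast_nonneg _) (Nat.cast_nonneg _)

theorem summable_antitoneLogDivSelf_sub_log_div_self :
    Summable fun k : ℕ ↦ antitoneLogDivSelf k - Real.log k / k := by
  refine summable_of_ne_finset_zero (s := Finset.range 3) fun k hk ↦ ?_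
  have : 3 ≤ k := by simpa using hk
  rw [antitoneLogDivSelf, max_eq_left this, sub_self]

open Finset in
theorem ncard_inter_Icc_eq_sum_indicator {S : Set ℕ} (hS : 0 ∉ S) (N : ℕ) :
    ((S ∩ Set.Icc 1 N).ncard : ℝ) = ∑ k ∈ range (N + 1), S.indicator (fun _ ↦ 1) k := by
  classical
  have : S ∩ Set.Icc 1 N = ((range (N + 1)).filter (· ∈ S) : Finset ℕ) := by
    ext k
    simp only [Set.mem_inter_iff, Set.mem_Icc, coe_filter, mem_range, Set.mem_ofPred_eq]
    constructor
    · rintro ⟨h, -, h2⟩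
      exact ⟨by omega, h⟩
    · rintro ⟨h2, h⟩
      exact ⟨h, Nat.one_le_iff_ne_zero.2 fun h0 ↦ hS (h0 ▸ h), by omega⟩
  rw [this, Set.ncard_coe_finset, card_filter, Nat.cast_sum]
  exact sum_congr rfl fun k _ ↦ by by_cases hk : k ∈ S <;> simp [hk]

open Finset Topology in
/-- For a set of primes of relative density `θ`, the sum of `log q / q` over its elements
`q ≤ n` is asymptotically `θ log n`. -/
theorem tendsto_sum_indicator_log_div_self_div_log {A : Set ℕ} {θ : ℝ} (hA : 0 ∉ A)
    (hdens : Tendsto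
      (fun N : ℕ ↦ ((A ∩ Set.Icc 1 N).ncard : ℝ) / (({p : ℕ | p.Prime} ∩ Set.Icc 1 N).ncard : ℝ))
      atTop (𝓝 θ)) :
    Tendsto (fun n : ℕ ↦ (∑ k ∈ range (n + 1), A.indicator (fun k ↦ Real.log k / k) k) /
      Real.log n) atTop (𝓝 θ) := by
  have hg := tendsto_sum_indicator_div_log_of_summable_sub {p : ℕ | p.Prime}
    summable_antitoneLogDivSelf_sub_log_div_self tendsto_sum_primes_log_div_self_div_log
  have hind (S : Set ℕ) (k : ℕ) : S.indicator antitoneLogDivSelf k =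
      S.indicator (fun _ ↦ 1) k * antitoneLogDivSelf k := by
    by_cases hk : k ∈ S <;> simp [hk]
  have hdiv : Tendsto (fun n : ℕ ↦ ∑ k ∈ range (n + 1),
      {p : ℕ | p.Prime}.indicator antitoneLogDivSelf k) atTop atTop := by
    refine (hg.pos_mul_atTop one_pos tendsto_log_natCast_atTop).congr' ?_
    filter_upwards [tendsto_log_natCast_atTop.eventually_gt_atTop 0] with n hn
    exact div_mul_cancel₀ _ hn.ne'
  have hratio := tendsto_sum_mul_div_sum_mul_of_antitone (θ := θ)
    (a := A.indicator fun _ ↦ 1) (b := {p : ℕ | p.Prime}.indicator fun _ ↦ 1)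
    antitone_antitoneLogDivSelf antitoneLogDivSelf_nonneg
    (by
      filter_upwards [eventually_ge_atTop 2] with n hn
      rw [sum_range_indicator_prime]
      have : n.primesLE.Nonempty := ⟨2, Nat.mem_primesLE.2 ⟨hn, Nat.prime_two⟩⟩
      simpa only [sum_const, nsmul_eq_mul, mul_one, Nat.cast_pos] using this.card_pos)
    (hdens.congr fun n ↦ by
      rw [ncard_inter_Icc_eq_sum_indicator hA,
        ncard_inter_Icc_eq_sum_indicator (S := {p | p.Prime}) (by simp [Nat.not_prime_zero])])
    (by simpa only [← hind] using hdiv)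
  simp only [← hind] at hratio
  have h := hratio.mul hg
  rw [mul_one] at h
  refine tendsto_sum_indicator_div_log_of_summable_sub (F := antitoneLogDivSelf) A
    (summable_antitoneLogDivSelf_sub_log_div_self.neg.congr fun k ↦ by ring) (h.congr' ?_)
  filter_upwards [hdiv.eventually_gt_atTop 0] with n hn
  rw [div_mul_div_cancel₀ hn.ne']

open Topology in
theorem tendsto_log_primeCounting_div_log :
    Tendsto (fun n : ℕ ↦ Real.log n.primeCounting / Real.log n) atTop (𝓝 1) := by
  have hloglog : Tendsto (fun n : ℕ ↦ Real.log (Real.log n) / Real.log n) atTop (𝓝 0) :=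
    Real.isLittleO_log_id_atTop.tendsto_div_nhds_zero.comp tendsto_log_natCast_atTop
  have hl : Tendsto (fun n : ℕ ↦ 1 - Real.log 2 / Real.log n -
      Real.log (Real.log n) / Real.log n) atTop (𝓝 1) := by
    simpa using ((tendsto_const_nhds (x := (1 : ℝ))).sub
      ((tendsto_const_nhds (x := Real.log 2)).div_atTop tendsto_log_natCast_atTop)).sub hloglog
  have hlin : ∀ᶠ n : ℕ in atTop, Real.log ((n : ℝ) + 1) ≤ 1 / 20 * ((n : ℝ) + 1) := by
    have := (Real.isLittleO_log_id_atTop.bound (by norm_num : (0 : ℝ) < 1 / 20))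
    filter_upwards [(tendsto_natCast_atTop_atTop.atTop_add
      (tendsto_const_nhds (x := (1 : ℝ)))).eventually this] with n hn
    have h1 : (0 : ℝ) ≤ (n : ℝ) + 1 := by positivity
    rw [id, Real.norm_of_nonneg h1] at hn
    exact (le_abs_self _).trans hn
  refine tendsto_of_tendsto_of_tendsto_of_le_of_le' hl tendsto_const_nhds ?_ ?_
  · filter_upwards [hlin, eventually_ge_atTop 2,
      tendsto_log_natCast_atTop.eventually_gt_atTop 0] with n hn h2 hlog
    have hn2 : (2 : ℝ) ≤ n := by exact_mod_cast h2
    have hpi := Chebyshev.pi_ge n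
    have hle : (n : ℝ) / 2 / Real.log n ≤ n.primeCounting := by
      refine le_trans ?_ hpi
      gcongr
      nlinarith [Real.log_two_gt_d9]
    have := Real.log_le_log (by positivity) hle
    rw [Real.log_div (by positivity) hlog.ne', Real.log_div (by positivity) two_ne_zero] at this
    rw [le_div_iff₀ hlog, sub_mul, sub_mul, div_mul_cancel₀ _ hlog.ne',
      div_mul_cancel₀ _ hlog.ne']
    linarith
  · filter_upwards [eventually_ge_atTop 2,
      tendsto_log_natCast_atTop.eventually_gt_atTop 0] with n h2 hlog
    rw [div_le_one hlog]
    refine Real.log_le_log ?_ ?_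
    · have : n.primeCounting ≠ 0 := fun h ↦ by
        have := Nat.primeCounting_eq_zero_iff.1 h
        omega
      exact_mod_cast Nat.pos_of_ne_zero this
    · rw [← Nat.primesLE_card_eq_primeCounting, Nat.primesLE_eq_filter_Icc_one]
      exact_mod_cast (Finset.card_filter_le _ _).trans_eq (by simp)

open Finset in
theorem sum_Icc_comp_eq_sum_range_indicator {A : Set ℕ} {p : ℕ → ℕ}
    (hmono : StrictMonoOn p {j : ℕ | 1 ≤ j}) (hmem : ∀ j : ℕ, 1 ≤ j → p j ∈ A)
    (hsurj : ∀ q ∈ A, ∃ j : ℕ, 1 ≤ j ∧ p j = q) (F : ℕ → ℝ) {N : ℕ} (hN : 1 ≤ N) :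
    ∑ j ∈ Icc 1 N, F (p j) = ∑ k ∈ range (p N + 1), A.indicator F k := by
  classical
  have himage : (range (p N + 1)).filter (· ∈ A) = (Icc 1 N).image p := by
    ext k
    simp only [mem_filter, mem_range, mem_image, mem_Icc]
    constructor
    · rintro ⟨hk, hkA⟩
      obtain ⟨j, hj, rfl⟩ := hsurj k hkA
      exact ⟨j, ⟨hj, (hmono.le_iff_le hj hN).1 (by omega)⟩, rfl⟩
    · rintro ⟨j, ⟨hj, hjN⟩, rfl⟩
      exact ⟨Nat.lt_succ_of_le ((hmono.le_iff_le hj hN).2 hjN), hmem j hj⟩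
  have hinj : Set.InjOn p (Icc 1 N : Finset ℕ) := fun i hi j hj h ↦
    hmono.injOn (mem_Icc.1 hi).1 (mem_Icc.1 hj).1 h
  rw [← sum_image (f := F) hinj, ← himage, sum_filter]
  exact sum_congr rfl fun k _ ↦ by by_cases hk : k ∈ A <;> simp [hk]

open Topology in
/-- The `N`-th element of a set of primes of positive relative density is `N ^ (1 + o(1))`. -/
theorem tendsto_log_div_log_enumeration {A : Set ℕ} {θ : ℝ} (hA : 0 ∉ A) (hθ : 0 < θ)
    (hdens : Tendsto
      (fun N : ℕ ↦ ((A ∩ Set.Icc 1 N).ncard : ℝ) / (({p : ℕ | p.Prime} ∩ Set.Icc 1 N).ncard : ℝ))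
      atTop (𝓝 θ)) {p : ℕ → ℕ} (hp : Tendsto p atTop atTop)
    (hmono : StrictMonoOn p {j : ℕ | 1 ≤ j}) (hmem : ∀ j : ℕ, 1 ≤ j → p j ∈ A)
    (hsurj : ∀ q ∈ A, ∃ j : ℕ, 1 ≤ j ∧ p j = q) :
    Tendsto (fun N : ℕ ↦ Real.log N / Real.log (p N)) atTop (𝓝 1) := by
  have hquot : Tendsto (fun N : ℕ ↦ (N : ℝ) / (p N).primeCounting) atTop (𝓝 θ) := by
    refine (hdens.comp hp).congr' ?_
    filter_upwards [eventually_ge_atTop 1] with N hN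
    rw [Function.comp_apply, ncard_inter_Icc_eq_sum_indicator hA,
      ncard_inter_Icc_eq_sum_indicator (S := {p | p.Prime}) (by simp [Nat.not_prime_zero]),
      ← sum_Icc_comp_eq_sum_range_indicator hmono hmem hsurj (fun _ ↦ 1) hN,
      sum_range_indicator_prime]
    simp [Nat.primesLE_card_eq_primeCounting]
  have h := ((hquot.log hθ.ne').div_atTop (tendsto_log_natCast_atTop.comp hp)).add
    (tendsto_log_primeCounting_div_log.comp hp)
  rw [zero_add] at h
  refine h.congr' ?_
  filter_upwards [eventually_ge_atTop 1, hp.eventually_ge_atTop 2] with N hN hpN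
  have : (p N).primeCounting ≠ 0 := fun h ↦ by
    have := Nat.primeCounting_eq_zero_iff.1 h
    omega
  simp only [Function.comp_apply]
  rw [Real.log_div (by positivity) (by exact_mod_cast this), ← add_div, sub_add_cancel]

/-- If `A` is an infinite set of primes with natural density `θ ∈ (0,1]` within the primes,
enumerated in increasing order as `p 1 < p 2 < ⋯`, then
`∑_{j=1}^N (log p j)/(p j - 1) ∼ θ log N` and `∑_{j=1}^N (log p j)/(p j) ∼ θ log N`
as `N → ∞`. -/
theorem log_prime_sums_asymp
    (A : Set ℕ) (hA : ∀ p ∈ A, Nat.Prime p) (hAinf : A.Infinite)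
    (θ : ℝ) (hθ : θ ∈ Set.Ioc (0 : ℝ) 1)
    (hdens : Tendsto
      (fun N : ℕ => ((A ∩ Set.Icc 1 N).ncard : ℝ) / (({p : ℕ | Nat.Prime p} ∩ Set.Icc 1 N).ncard : ℝ))
      atTop (nhds θ))
    (p : ℕ → ℕ)
    (hmono : StrictMonoOn p {j : ℕ | 1 ≤ j})
    (hmem : ∀ j : ℕ, 1 ≤ j → p j ∈ A)
    (hsurj : ∀ q ∈ A, ∃ j : ℕ, 1 ≤ j ∧ p j = q) :
    Tendsto
      (fun N : ℕ =>
        (∑ j ∈ Finset.Icc 1 N, Real.log (p j) / ((p j : ℝ) - 1)) / (θ * Real.log N))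
      atTop (nhds 1)
    ∧ Tendsto
      (fun N : ℕ =>
        (∑ j ∈ Finset.Icc 1 N, Real.log (p j) / (p j : ℝ)) / (θ * Real.log N))
      atTop (nhds 1) := by
  have hA0 : 0 ∉ A := fun h ↦ Nat.not_prime_zero (hA 0 h)
  have hp : Tendsto p atTop atTop := by
    refine (tendsto_add_atTop_iff_nat 1).1 (StrictMono.tendsto_atTop fun i j hij ↦ ?_)
    exact hmono (Nat.le_add_left 1 i) (Nat.le_add_left 1 j) (by omega)
  have hlog := tendsto_log_div_log_enumeration hA0 hθ.1 hdens hp hmono hmem hsurj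
  have transfer (F : ℕ → ℝ) (hF : Tendsto (fun n : ℕ ↦
      (∑ k ∈ Finset.range (n + 1), A.indicator F k) / Real.log n) atTop (nhds θ)) :
      Tendsto (fun N : ℕ ↦ (∑ j ∈ Finset.Icc 1 N, F (p j)) / (θ * Real.log N))
        atTop (nhds 1) := by
    have h := (hF.comp hp).div (hlog.const_mul θ) (by simpa using hθ.1.ne')
    rw [mul_one, div_self hθ.1.ne'] at h
    refine h.congr' ?_
    filter_upwards [eventually_ge_atTop 1,
      (tendsto_log_natCast_atTop.comp hp).eventually_gt_atTop 0] with N hN hlogp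
    simp only [Function.comp_apply] at hlogp
    rw [sum_Icc_comp_eq_sum_range_indicator hmono hmem hsurj F hN, Pi.div_apply,
      Function.comp_apply, ← mul_div_assoc, div_div_div_cancel_right₀ hlogp.ne']
  have hself := tendsto_sum_indicator_log_div_self_div_log hA0 hdens
  exact ⟨transfer (fun k ↦ Real.log k / ((k : ℝ) - 1))
    (tendsto_sum_indicator_div_log_of_summable_sub A
      summable_log_div_sub_one_sub_log_div_self hself),
    transfer (fun k ↦ Real.log k / (k : ℝ)) hself⟩
end
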